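/- Let Ω ⊆ ℝ³ be open and α > −1, and assume (QPD). There exist constants c₁, c₂ > 0, depending only on α and c₀, such that: if R > 0 and u ∈ H̊¹(Ω;ℝ³) satisfies Lu = 0 on Ω∩B_{2R}, then for every ρ ∈ (0,R), sup_{x ∈ Ω∩B_ρ} |u(x)|² + ∫_{Ω∩B_ρ} |Du(x)|² |x|^{−1} dx ≤ c₁ · M_{2R}(u) · exp( −c₂ ∫_ρ^R cap(B̄_r ∖ Ω) r^{−2} dr ). -/

import Mathlib

/-!
The proof is an Agmon-type exponential weight argument. Fix `ρ < R`, put `ρₖ = 2ᵏ ρ` and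
`aₖ = cap(B̄_{2ρₖ} ∖ Ω) / ρₖ` for the scales with `4 ρₖ ≤ R`, and let `η` be a radial cutoff which
equals `1` on `B_ρ`, is supported in `B_{2R}`, and in between carries the factor
`exp(-δ ∑ aₖ h(|x|²/ρₖ²))`, where `h` is a smooth step. Thus `η` has picked up the full factor
`exp(-δ ∑ aₖ)` by the time it is cut off at scale `R` (`exists_agmon`).

The inequality (QPD) is applied to `η v`, where `v` is a test field close to `u`. Splitting
`L(ηv) = ηLv + [L, η]v`, the commutator is bounded by a small multiple of the gradient term on the
left plus `|v|²` times derivatives of `η` (`exists_comm_bound`). These derivatives consist of a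
term at scale `R`, which carries `exp(-2δ ∑ aₖ)` and produces the right-hand side of the theorem,
and of a term of size `δ η² ∑ aₖ ρₖ⁻³ 1_{|x| < 4ρₖ}`. The capacitary Poincaré inequality
`exists_cap_poincare` on the balls `B_{4ρₖ}`, summed over `k`, is the Hardy inequality
`exists_hardy`, and shows that for small `δ` the last term is absorbed on the left
(`exists_energy`).

There remains `∫ η² Lv · Φ(·-y)v`. If `y ∉ ∂Ω`, the approximations `v` may be taken equal to `u`
near `y` (`exists_approx`), so that the singularity of `Φ` is not seen; an integration by parts and
`Lu = 0` on `Ω ∩ B_{2R}` then show that this term tends to `0` as `v → u` in `H¹` (`errE_bound`).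
The choice `y = x₀` bounds `|u(x₀)|²`, and points `y → 0` off `∂Ω` give the weighted gradient
integral (`exists_two_bounds`). Finally `∑ aₖ` dominates the Wiener integral up to an additive
constant (`exists_dyadic_sum`).
-/

open MeasureTheory Metric Real Filter

noncomputable section

/-- `ℝ³` as Euclidean space. -/
abbrev E3 : Type := EuclideanSpace ℝ (Fin 3)

/-- Partial derivative `∂ᵢ f` on `ℝ³`. -/
def pd (i : Fin 3) (f : E3 → ℝ) (x : E3) : ℝ :=
  fderiv ℝ f x (EuclideanSpace.single i 1)

/-- Laplacian on `ℝ³`. -/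
def lap (f : E3 → ℝ) (x : E3) : ℝ := ∑ i, pd i (pd i f) x

/-- Divergence of a vector field on `ℝ³`. -/
def divg (u : E3 → Fin 3 → ℝ) (x : E3) : ℝ := ∑ k, pd k (fun y => u y k) x

/-- The 3D Lamé operator `(Lu)ᵢ = -Δuᵢ - α ∂ᵢ (div u)`. -/
def lame (α : ℝ) (u : E3 → Fin 3 → ℝ) (x : E3) (i : Fin 3) : ℝ :=
  - lap (fun y => u y i) x - α * pd i (divg u) x

/-- The constant `c_α = (α+2)/(8π(α+1))`. -/
def cA (α : ℝ) : ℝ := (α + 2) / (8 * Real.pi * (α + 1))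

/-- The fundamental matrix `Φ` of the 3D Lamé system:
`Φ_ij(x) = c_α |x|⁻¹ (δ_ij + (α/(α+2)) xᵢxⱼ/|x|²)`. -/
def Phi (α : ℝ) (x : E3) (i j : Fin 3) : ℝ :=
  cA α * ‖x‖⁻¹ * ((if i = j then (1 : ℝ) else 0) + (α / (α + 2)) * (x i * x j) / ‖x‖ ^ 2)

/-- `u ∈ C₀^∞(U; ℝ³)`: smooth, compactly supported, with support inside `U`. -/
def IsTestOn (U : Set E3) (u : E3 → Fin 3 → ℝ) : Prop :=
  ContDiff ℝ (⊤ : ℕ∞) u ∧ HasCompactSupport u ∧ tsupport u ⊆ U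

/-- `∫_{ℝ³} (Lu)·(Φ(·-y) u) dx`. -/
def lameEnergy (α : ℝ) (u : E3 → Fin 3 → ℝ) (y : E3) : ℝ :=
  ∫ x : E3, ∑ i, ∑ j, lame α u x i * Phi α (x - y) i j * u x j

/-- (QPD): quantitative weighted positive definiteness of the Lamé system with weight `Φ`,
with constant `c₀`. -/
def QPDhyp (α c₀ : ℝ) : Prop :=
  ∀ u : E3 → Fin 3 → ℝ, IsTestOn Set.univ u → ∀ y : E3,
    (1 / 2) * (∑ i, (u y i) ^ 2) +
      c₀ * ∫ x : E3, (∑ i, ∑ k, (pd k (fun z => u z i) x) ^ 2) * ‖x - y‖⁻¹ ≤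
    lameEnergy α u y

/-- `u ∈ H̊¹(Ω; ℝ³)`: `u` is smooth on `Ω`, `∫_Ω (|u|² + |Du|²) < ∞`, and `u` is
approximated in this norm by test fields supported in `Ω`. -/
def MemH10 (Ω : Set E3) (u : E3 → Fin 3 → ℝ) : Prop :=
  ContDiffOn ℝ (⊤ : ℕ∞) u Ω ∧
  IntegrableOn (fun x => (∑ i, (u x i) ^ 2) +
    ∑ i, ∑ k, (pd k (fun z => u z i) x) ^ 2) Ω volume ∧
  ∃ un : ℕ → E3 → Fin 3 → ℝ, (∀ n, IsTestOn Ω (un n)) ∧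
    Tendsto (fun n => ∫ x in Ω, ((∑ i, (u x i - un n x i) ^ 2) +
      ∑ i, ∑ k, (pd k (fun z => u z i - un n z i) x) ^ 2)) atTop (nhds 0)

/-- `m_ρ(u) = ρ⁻³ ∫_{Ω ∩ S_ρ} |u|² dx`, where `S_ρ = {ρ < |x| < 2ρ}`. -/
def mRho (Ω : Set E3) (ρ : ℝ) (u : E3 → Fin 3 → ℝ) : ℝ :=
  (ρ ^ 3)⁻¹ * ∫ x in Ω ∩ {x : E3 | ρ < ‖x‖ ∧ ‖x‖ < 2 * ρ}, ∑ i, (u x i) ^ 2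

/-- `M_ρ(u) = ρ⁻³ ∫_{Ω ∩ B_ρ} |u|² dx`. -/
def MRho (Ω : Set E3) (ρ : ℝ) (u : E3 → Fin 3 → ℝ) : ℝ :=
  (ρ ^ 3)⁻¹ * ∫ x in Ω ∩ ball (0 : E3) ρ, ∑ i, (u x i) ^ 2

/-- The classical harmonic capacity of a set `K ⊆ ℝ³`:
`cap K = inf { ∫ |Df|² : f ∈ C₀^∞(ℝ³), f = 1 on a neighborhood of K }`. -/
def capa (K : Set E3) : ℝ :=
  sInf {t : ℝ | ∃ f : E3 → ℝ, ContDiff ℝ (⊤ : ℕ∞) f ∧ HasCompactSupport f ∧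
    (∃ U : Set E3, IsOpen U ∧ K ⊆ U ∧ ∀ x ∈ U, f x = 1) ∧
    t = ∫ x : E3, ∑ i, (pd i f x) ^ 2}

open scoped ContDiff Topology

/-! ### Calculus of partial derivatives -/

lemma pd_congr {i : Fin 3} {f g : E3 → ℝ} {x : E3} (h : f =ᶠ[𝓝 x] g) : pd i f x = pd i g x := by
  simp only [pd, h.fderiv_eq]

lemma pd_mul {i : Fin 3} {f g : E3 → ℝ} {x : E3} (hf : DifferentiableAt ℝ f x)
    (hg : DifferentiableAt ℝ g x) :
    pd i (fun y => f y * g y) x = f x * pd i g x + pd i f x * g x := by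
  simp only [pd, fderiv_fun_mul hf hg]
  simp [mul_comm]

lemma pd_add {i : Fin 3} {f g : E3 → ℝ} {x : E3} (hf : DifferentiableAt ℝ f x)
    (hg : DifferentiableAt ℝ g x) :
    pd i (fun y => f y + g y) x = pd i f x + pd i g x := by
  simp only [pd, fderiv_fun_add hf hg]
  simp

lemma pd_sub {i : Fin 3} {f g : E3 → ℝ} {x : E3} (hf : DifferentiableAt ℝ f x)
    (hg : DifferentiableAt ℝ g x) :
    pd i (fun y => f y - g y) x = pd i f x - pd i g x := by
  simp only [pd, fderiv_fun_sub hf hg]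
  simp

lemma pd_sum {ι : Type*} {s : Finset ι} {i : Fin 3} {f : ι → E3 → ℝ} {x : E3}
    (hf : ∀ j ∈ s, DifferentiableAt ℝ (f j) x) :
    pd i (fun y => ∑ j ∈ s, f j y) x = ∑ j ∈ s, pd i (f j) x := by
  simp only [pd, fderiv_fun_sum hf]
  simp

lemma contDiff_pd {i : Fin 3} {f : E3 → ℝ} (hf : ContDiff ℝ ∞ f) : ContDiff ℝ ∞ (pd i f) :=
  (hf.fderiv_right (m := ∞) (by norm_num)).clm_apply contDiff_const

lemma contDiffOn_pd {i : Fin 3} {f : E3 → ℝ} {Ω : Set E3} (hΩ : IsOpen Ω)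
    (hf : ContDiffOn ℝ ∞ f Ω) : ContDiffOn ℝ ∞ (pd i f) Ω :=
  (hf.fderiv_of_isOpen (m := ∞) hΩ (by norm_num)).clm_apply contDiffOn_const

lemma tsupport_pd_subset {i : Fin 3} {f : E3 → ℝ} : tsupport (pd i f) ⊆ tsupport f := by
  refine closure_minimal ?_ (isClosed_tsupport f)
  intro x hx
  have : fderiv ℝ f x ≠ 0 := by
    intro h
    apply hx
    simp [pd, h]
  exact support_fderiv_subset ℝ this

lemma hasCompactSupport_pd {i : Fin 3} {f : E3 → ℝ} (hf : HasCompactSupport f) :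
    HasCompactSupport (pd i f) :=
  HasCompactSupport.intro hf (fun _ hx => image_eq_zero_of_notMem_tsupport
    (fun h => hx (tsupport_pd_subset h)))

lemma pd_eq_zero_of_notMem {i : Fin 3} {f : E3 → ℝ} {x : E3} (h : x ∉ tsupport f) :
    pd i f x = 0 :=
  image_eq_zero_of_notMem_tsupport (fun h' => h (tsupport_pd_subset h'))

lemma comp_contDiff {v : E3 → Fin 3 → ℝ} (hv : ContDiff ℝ ∞ v) (i : Fin 3) :
    ContDiff ℝ ∞ (fun y => v y i) := contDiff_pi.1 hv i

lemma comp_contDiffOn {v : E3 → Fin 3 → ℝ} {Ω : Set E3} (hv : ContDiffOn ℝ ∞ v Ω) (i : Fin 3) :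
    ContDiffOn ℝ ∞ (fun y => v y i) Ω := contDiffOn_pi.1 hv i

lemma comp_tsupport {v : E3 → Fin 3 → ℝ} (i : Fin 3) :
    tsupport (fun y => v y i) ⊆ tsupport v := by
  refine closure_mono ?_
  intro x hx h
  apply hx
  simp only [h, Pi.zero_apply]

lemma comp_hasCompactSupport {v : E3 → Fin 3 → ℝ} (hv : HasCompactSupport v) (i : Fin 3) :
    HasCompactSupport (fun y => v y i) :=
  HasCompactSupport.intro hv (fun _ hx => image_eq_zero_of_notMem_tsupport
    (f := fun y => v y i) (fun h => hx (comp_tsupport i h)))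

/-- `|v|²` at a point. -/
def nsq (v : E3 → Fin 3 → ℝ) (x : E3) : ℝ := ∑ i, (v x i) ^ 2

/-- `|Dv|²` at a point. -/
def gsq (v : E3 → Fin 3 → ℝ) (x : E3) : ℝ := ∑ i, ∑ k, (pd k (fun z => v z i) x) ^ 2

lemma nsq_nonneg (v : E3 → Fin 3 → ℝ) (x : E3) : 0 ≤ nsq v x := by unfold nsq; positivity

lemma gsq_nonneg (v : E3 → Fin 3 → ℝ) (x : E3) : 0 ≤ gsq v x := by unfold gsq; positivity

lemma continuous_nsq {v : E3 → Fin 3 → ℝ} (hv : ContDiff ℝ ∞ v) : Continuous (nsq v) := by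
  unfold nsq
  exact continuous_finsetSum _ (fun i _ => (comp_contDiff hv i).continuous.pow 2)

lemma continuous_gsq {v : E3 → Fin 3 → ℝ} (hv : ContDiff ℝ ∞ v) : Continuous (gsq v) := by
  unfold gsq
  exact continuous_finsetSum _ (fun i _ => continuous_finsetSum _ (fun k _ =>
    (contDiff_pd (comp_contDiff hv i)).continuous.pow 2))

lemma nsq_eq_zero {v : E3 → Fin 3 → ℝ} {x : E3} (h : x ∉ tsupport v) : nsq v x = 0 := by
  simp [nsq, image_eq_zero_of_notMem_tsupport h]

lemma gsq_eq_zero {v : E3 → Fin 3 → ℝ} {x : E3} (h : x ∉ tsupport v) : gsq v x = 0 := by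
  unfold gsq
  refine Finset.sum_eq_zero (fun i _ => Finset.sum_eq_zero (fun k _ => ?_))
  rw [pd_eq_zero_of_notMem (fun h' => h (comp_tsupport i h'))]; simp

lemma hasCompactSupport_nsq {v : E3 → Fin 3 → ℝ} (hv : HasCompactSupport v) :
    HasCompactSupport (nsq v) := HasCompactSupport.intro hv (fun _ hx => nsq_eq_zero hx)

lemma hasCompactSupport_gsq {v : E3 → Fin 3 → ℝ} (hv : HasCompactSupport v) :
    HasCompactSupport (gsq v) := HasCompactSupport.intro hv (fun _ hx => gsq_eq_zero hx)

/-! ### The Newtonian weight -/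

lemma integrableOn_norm_inv (r : ℝ) : IntegrableOn (fun x : E3 => ‖x‖⁻¹) (ball 0 r) := by
  have := (integrableOn_fun_norm_addHaar (E := E3) (μ := volume) (f := fun t : ℝ => t⁻¹)
    (r := r)).2 ?_
  · exact this
  · have h : IntegrableOn (fun y : ℝ => y) (Set.Ioo 0 r) :=
      (continuous_id.integrableOn_Icc (a := 0) (b := r)).mono_set Set.Ioo_subset_Icc_self
    refine h.congr_fun ?_ measurableSet_Ioo
    intro y hy
    have : y ≠ 0 := hy.1.ne'
    simp [finrank_euclideanSpace]
    field_simp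

lemma integrable_mul_weight {F : E3 → ℝ} (hF : Continuous F) (hc : HasCompactSupport F) (y : E3) :
    Integrable (fun x => F x * ‖x - y‖⁻¹) := by
  have h1 : Integrable (fun x => F (x + y) * ‖x‖⁻¹) := by
    have hF' : Continuous (fun x => F (x + y)) := by fun_prop
    have hc' : HasCompactSupport (fun x => F (x + y)) :=
      hc.comp_homeomorph (Homeomorph.addRight y)
    obtain ⟨r, hr⟩ := hc'.isBounded.subset_ball 0
    obtain ⟨C, hC⟩ := hF'.bounded_above_of_compact_support hc'
    have h2 := (integrableOn_norm_inv r).bdd_mul (c := C)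
      (hF'.aestronglyMeasurable (μ := volume.restrict (ball 0 r)))
      (Eventually.of_forall hC)
    refine (integrableOn_iff_integrable_of_support_subset ?_).1 h2
    intro x hx
    apply hr
    apply subset_tsupport
    intro h
    apply hx
    simp only [h, zero_mul]
  have := h1.comp_sub_right y
  simpa using this

lemma integrable_of_weight_bound {G F : E3 → ℝ} (hG : AEStronglyMeasurable G) (hF : Continuous F)
    (hc : HasCompactSupport F) (y : E3) (h : ∀ x, |G x| ≤ F x * ‖x - y‖⁻¹) : Integrable G :=
  (integrable_mul_weight hF hc y).mono' hG (Eventually.of_forall h)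

/-! ### Poincaré inequality on a ball -/

lemma integrableOn_ball_of_continuous {f : E3 → ℝ} (hf : Continuous f) (r : ℝ) :
    IntegrableOn f (ball (0:E3) r) :=
  (hf.continuousOn.integrableOn_compact (isCompact_closedBall (0:E3) r)).mono_set
    ball_subset_closedBall

lemma fderiv_eq_sum (f : E3 → ℝ) (x h : E3) : fderiv ℝ f x h = ∑ i, h i * pd i f x := by
  have hh : h = ∑ i, h i • EuclideanSpace.single i (1 : ℝ) := by
    have := (EuclideanSpace.basisFun (Fin 3) ℝ).sum_repr h
    simpa using this.symm
  conv_lhs => rw [hh]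
  simp [pd]

lemma fderiv_sq_le (f : E3 → ℝ) (x h : E3) :
    (fderiv ℝ f x h) ^ 2 ≤ ‖h‖ ^ 2 * ∑ i, (pd i f x) ^ 2 := by
  rw [fderiv_eq_sum, EuclideanSpace.norm_sq_eq]
  simpa using Finset.sum_mul_sq_le_sq_mul_sq Finset.univ (fun i => h i) (fun i => pd i f x)

lemma sq_integral_half_le {g : ℝ → ℝ} (hg : Continuous g) :
    (∫ t in (0:ℝ)..(1/2), g t) ^ 2 ≤ (1/2) * ∫ t in (0:ℝ)..(1/2), (g t) ^ 2 := by
  set I := ∫ t in (0:ℝ)..(1/2), g t with hI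
  have h0 : 0 ≤ ∫ t in (0:ℝ)..(1/2), (g t - 2 * I) ^ 2 :=
    intervalIntegral.integral_nonneg (by norm_num) (fun t _ => sq_nonneg _)
  have h1 : ∫ t in (0:ℝ)..(1/2), (g t - 2 * I) ^ 2
      = (∫ t in (0:ℝ)..(1/2), (g t) ^ 2) - 4 * I * I + (1/2) * (4 * I ^ 2) := by
    have : ∀ t, (g t - 2 * I) ^ 2 = (g t) ^ 2 - 4 * I * g t + 4 * I ^ 2 := fun t => by ring
    simp_rw [this]
    rw [intervalIntegral.integral_add, intervalIntegral.integral_sub,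
      intervalIntegral.integral_const_mul, intervalIntegral.integral_const, ← hI]
    · simp
    all_goals exact Continuous.intervalIntegrable (by fun_prop) _ _
  nlinarith

/-- The fundamental theorem of calculus on the half of the segment `[x, z]` next to `x`. There the
coefficient `1 - t` of `x` is at least `1/2`, so that `x` may later serve as integration variable. -/
lemma half_segment_bound {w : E3 → ℝ} (hw : ContDiff ℝ ∞ w) (x z : E3) :
    (w x - w ((1/2 : ℝ) • (x + z))) ^ 2 ≤
      (1/2) * ‖z - x‖ ^ 2 * ∫ t in (0:ℝ)..(1/2), ∑ i, (pd i w ((1 - t) • x + t • z)) ^ 2 := by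
  set g : ℝ → ℝ := fun t => fderiv ℝ w ((1 - t) • x + t • z) (z - x) with hg
  have hcg : Continuous g := by
    have : Continuous (fderiv ℝ w) := hw.continuous_fderiv (by norm_num)
    fun_prop
  have hd : ∀ t, HasDerivAt (fun t : ℝ => w ((1 - t) • x + t • z)) (g t) t := by
    intro t
    have h1 : HasDerivAt (fun t : ℝ => (1 - t) • x + t • z) (z - x) t := by
      have a : HasDerivAt (fun t : ℝ => (1 - t) • x) ((-1 : ℝ) • x) t :=
        ((hasDerivAt_id t).const_sub 1).smul_const x
      have b : HasDerivAt (fun t : ℝ => t • z) ((1 : ℝ) • z) t :=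
        (hasDerivAt_id t).smul_const z
      exact (a.add b).congr_deriv (by module)
    exact (((hw.differentiable (by norm_num)) _).hasFDerivAt).comp_hasDerivAt t h1
  have hftc := intervalIntegral.integral_eq_sub_of_hasDerivAt (a := 0) (b := 1/2)
    (fun t _ => hd t) (hcg.intervalIntegrable _ _)
  have e1 : w x - w ((1/2 : ℝ) • (x + z)) = - ∫ t in (0:ℝ)..(1/2), g t := by
    rw [hftc]
    have : (1 - (1/2:ℝ)) • x + (1/2:ℝ) • z = (1/2 : ℝ) • (x + z) := by module
    rw [this]; simp
  rw [e1, neg_sq]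
  refine (sq_integral_half_le hcg).trans ?_
  rw [mul_assoc, ← intervalIntegral.integral_const_mul (r := ‖z - x‖ ^ 2)]
  refine mul_le_mul_of_nonneg_left ?_ (show (0:ℝ) ≤ 1/2 by norm_num)
  have hcp : ∀ i, Continuous (pd i w) := fun i => (contDiff_pd hw).continuous
  refine intervalIntegral.integral_mono_on (by norm_num) ?_ ?_ (fun t _ => fderiv_sq_le _ _ _)
  · exact Continuous.intervalIntegrable (by fun_prop) _ _
  · exact Continuous.intervalIntegrable (by fun_prop) _ _

/-- The Jacobian `c⁻³` of the affine substitution is at most `8`. -/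
lemma lintegral_comp_affine_le {F : E3 → ENNReal} (hF : Measurable F) (b : E3) {c : ℝ}
    (hc : 1/2 ≤ c) : ∫⁻ x, F (c • x + b) ≤ 8 * ∫⁻ x, F x := by
  have hc0 : c ≠ 0 := by positivity
  have h1 : ∫⁻ x, F (c • x + b) = ∫⁻ x, F (x + b) ∂(Measure.map (c • ·) (volume : Measure E3)) := by
    rw [lintegral_map (by fun_prop) (by fun_prop)]
  rw [h1, Measure.map_addHaar_smul _ hc0, lintegral_smul_measure, lintegral_add_right_eq_self]
  rw [smul_eq_mul]
  refine mul_le_mul_left ?_ _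
  rw [show (8 : ENNReal) = ENNReal.ofReal 8 by norm_num]
  refine ENNReal.ofReal_le_ofReal ?_
  have : Module.finrank ℝ E3 = 3 := by simp
  rw [this, abs_of_pos (by positivity)]
  rw [inv_le_comm₀ (by positivity) (by norm_num)]
  calc (8:ℝ)⁻¹ = (1/2)^3 := by norm_num
    _ ≤ c ^ 3 := by gcongr

/-- Half of the Poincaré inequality: `x` is compared to the midpoint of `x` and `z`. -/
lemma poincare_half {w : E3 → ℝ} (hw : ContDiff ℝ ∞ w) {r : ℝ} (hr : 0 < r) :
    ∫⁻ p, ENNReal.ofReal ((w p.1 - w ((1/2 : ℝ) • (p.1 + p.2))) ^ 2)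
        ∂((volume.restrict (ball (0:E3) r)).prod (volume.restrict (ball (0:E3) r))) ≤
      ENNReal.ofReal (2 * r ^ 2) * (ENNReal.ofReal (1/2) * (volume (ball (0:E3) r) *
        (8 * ∫⁻ x in ball (0:E3) r, ENNReal.ofReal (∑ i, (pd i w x) ^ 2)))) := by
  set ν := volume.restrict (ball (0:E3) r) with hν
  set G : E3 → ENNReal := fun x => ENNReal.ofReal (∑ i, (pd i w x) ^ 2) with hG
  have hcp : ∀ i, Continuous (pd i w) := fun i => (contDiff_pd hw).continuous
  have hGm : Continuous G := ENNReal.continuous_ofReal.comp (by fun_prop)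
  have hpt : ∀ᵐ p ∂(ν.prod ν), ENNReal.ofReal ((w p.1 - w ((1/2 : ℝ) • (p.1 + p.2))) ^ 2) ≤
      ENNReal.ofReal (2 * r ^ 2) * ∫⁻ t in Set.Ioc (0:ℝ) (1/2), G ((1 - t) • p.1 + t • p.2) := by
    rw [hν, Measure.prod_restrict]
    filter_upwards [ae_restrict_mem (measurableSet_ball.prod measurableSet_ball)] with p hp
    have hb : ‖p.2 - p.1‖ ^ 2 ≤ 4 * r ^ 2 := by
      have h1 : ‖p.1‖ < r := by simpa using hp.1
      have h2 : ‖p.2‖ < r := by simpa using hp.2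
      have : ‖p.2 - p.1‖ ≤ 2 * r := (norm_sub_le _ _).trans (by linarith)
      calc _ ≤ (2 * r) ^ 2 := by gcongr
        _ = _ := by ring
    have e : ∫⁻ t in Set.Ioc (0:ℝ) (1/2), G ((1 - t) • p.1 + t • p.2) =
        ENNReal.ofReal (∫ t in (0:ℝ)..(1/2), ∑ i, (pd i w ((1 - t) • p.1 + t • p.2)) ^ 2) := by
      rw [intervalIntegral.integral_of_le (by norm_num), ofReal_integral_eq_lintegral_ofReal]
      · exact (Continuous.integrableOn_Icc (by fun_prop)).mono_set Set.Ioc_subset_Icc_self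
      · exact Eventually.of_forall (fun t => by positivity)
    rw [e, ← ENNReal.ofReal_mul (by positivity)]
    refine ENNReal.ofReal_le_ofReal ((half_segment_bound hw _ _).trans ?_)
    refine mul_le_mul_of_nonneg_right (by linarith) ?_
    exact intervalIntegral.integral_nonneg (by norm_num) (fun t _ => by positivity)
  refine (lintegral_mono_ae hpt).trans ?_
  rw [lintegral_const_mul' _ _ ENNReal.ofReal_ne_top]
  refine mul_le_mul_right ?_ _
  have hjm : Measurable (fun q : (E3 × E3) × ℝ => G ((1 - q.2) • q.1.1 + q.2 • q.1.2)) :=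
    Continuous.measurable (by fun_prop)
  rw [lintegral_lintegral_swap hjm.aemeasurable]
  have hbound : ∀ t ∈ Set.Ioc (0:ℝ) (1/2), ∫⁻ p, G ((1 - t) • p.1 + t • p.2) ∂(ν.prod ν) ≤
      volume (ball (0:E3) r) * (8 * ∫⁻ x in ball (0:E3) r, G x) := by
    intro t ht
    rw [lintegral_prod_symm' _ (Continuous.measurable (by fun_prop))]
    have h1 : ∀ᵐ z ∂ν, ∫⁻ x, G ((1 - t) • x + t • z) ∂ν ≤ 8 * ∫⁻ x in ball (0:E3) r, G x := by
      rw [hν]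
      filter_upwards [ae_restrict_mem measurableSet_ball] with z hz
      have hz' : ‖z‖ < r := by simpa using hz
      calc ∫⁻ x in ball (0:E3) r, G ((1 - t) • x + t • z)
          ≤ ∫⁻ x in ball (0:E3) r, (ball (0:E3) r).indicator G ((1 - t) • x + t • z) := by
            refine setLIntegral_mono' measurableSet_ball (fun x hx => ?_)
            rw [Set.indicator_of_mem]
            exact (convex_ball (0:E3) r) hx hz (by linarith [ht.2]) ht.1.le (by ring)
        _ ≤ ∫⁻ x, (ball (0:E3) r).indicator G ((1 - t) • x + t • z) := setLIntegral_le_lintegral _ _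
        _ ≤ 8 * ∫⁻ x, (ball (0:E3) r).indicator G x :=
            lintegral_comp_affine_le (hGm.measurable.indicator measurableSet_ball) _
              (by linarith [ht.2])
        _ = _ := by rw [lintegral_indicator measurableSet_ball]
    refine (lintegral_mono_ae h1).trans ?_
    rw [lintegral_const, hν, Measure.restrict_apply_univ, mul_comm]
  refine (setLIntegral_mono' measurableSet_Ioc hbound).trans ?_
  rw [lintegral_const, Measure.restrict_apply_univ, Real.volume_Ioc, mul_comm]
  simp [hν]

/-- Poincaré inequality on a ball, in the form of a double integral of differences. -/
lemma poincare_double {w : E3 → ℝ} (hw : ContDiff ℝ ∞ w) {r : ℝ} (hr : 0 < r) :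
    ∫ z in ball (0:E3) r, ∫ x in ball (0:E3) r, (w z - w x) ^ 2 ≤
      160 * r ^ 5 * ∫ x in ball (0:E3) r, ∑ i, (pd i w x) ^ 2 := by
  set ν := volume.restrict (ball (0:E3) r) with hν
  have hcp : ∀ i, Continuous (pd i w) := fun i => (contDiff_pd hw).continuous
  have hcw : Continuous w := hw.continuous
  have hball : IntegrableOn (fun x => ∑ i, (pd i w x) ^ 2) (ball (0:E3) r) :=
    integrableOn_ball_of_continuous (by fun_prop) r
  have hint : Integrable (fun p : E3 × E3 => (w p.1 - w p.2) ^ 2) (ν.prod ν) := by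
    rw [hν, Measure.prod_restrict]
    exact (ContinuousOn.integrableOn_compact
      ((isCompact_closedBall (0:E3) r).prod (isCompact_closedBall (0:E3) r))
      (Continuous.continuousOn (by fun_prop))).mono_set
      (Set.prod_mono ball_subset_closedBall ball_subset_closedBall)
  rw [← integral_prod (f := fun p : E3 × E3 => (w p.1 - w p.2) ^ 2) hint]
  have hnn : 0 ≤ ∫ x in ball (0:E3) r, ∑ i, (pd i w x) ^ 2 :=
    integral_nonneg (fun x => by positivity)
  rw [← ENNReal.ofReal_le_ofReal_iff (by positivity),
    ofReal_integral_eq_lintegral_ofReal hint (Eventually.of_forall (fun p => sq_nonneg _))]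
  have hsplit : ∀ p : E3 × E3, ENNReal.ofReal ((w p.1 - w p.2) ^ 2) ≤
      2 * ENNReal.ofReal ((w p.1 - w ((1/2 : ℝ) • (p.1 + p.2))) ^ 2) +
      2 * ENNReal.ofReal ((w p.2 - w ((1/2 : ℝ) • (p.2 + p.1))) ^ 2) := by
    intro p
    have h2 : ∀ a : ENNReal, 2 * a = ENNReal.ofReal 2 * a := fun a => by norm_num
    rw [h2, h2, ← ENNReal.ofReal_mul (by norm_num),
      ← ENNReal.ofReal_mul (by norm_num), ← ENNReal.ofReal_add (by positivity) (by positivity),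
      add_comm p.2 p.1]
    refine ENNReal.ofReal_le_ofReal ?_
    nlinarith [sq_nonneg (w p.1 - w ((1/2 : ℝ) • (p.1 + p.2)) +
      (w p.2 - w ((1/2 : ℝ) • (p.1 + p.2))))]
  have hm : Measurable (fun p : E3 × E3 =>
      ENNReal.ofReal ((w p.1 - w ((1/2 : ℝ) • (p.1 + p.2))) ^ 2)) :=
    Measurable.ennreal_ofReal (Continuous.measurable (by fun_prop))
  have hm2 : Measurable (fun p : E3 × E3 =>
      ENNReal.ofReal ((w p.2 - w ((1/2 : ℝ) • (p.2 + p.1))) ^ 2)) :=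
    Measurable.ennreal_ofReal (Continuous.measurable (by fun_prop))
  have hsw : ∫⁻ p, ENNReal.ofReal ((w p.2 - w ((1/2 : ℝ) • (p.2 + p.1))) ^ 2) ∂(ν.prod ν) =
      ∫⁻ p, ENNReal.ofReal ((w p.1 - w ((1/2 : ℝ) • (p.1 + p.2))) ^ 2) ∂(ν.prod ν) := by
    rw [← lintegral_prod_swap]
    rfl
  refine (lintegral_mono hsplit).trans ?_
  rw [lintegral_add_left (by fun_prop), lintegral_const_mul _ hm, lintegral_const_mul _ hm2, hsw]
  have hP := poincare_half hw hr
  have hvol : volume (ball (0:E3) r) ≤ ENNReal.ofReal (5 * r ^ 3) := by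
    rw [EuclideanSpace.volume_ball_fin_three, ← ENNReal.ofReal_pow hr.le,
      ← ENNReal.ofReal_mul (by positivity)]
    refine ENNReal.ofReal_le_ofReal ?_
    have := Real.pi_lt_d2
    nlinarith [pow_pos hr 3]
  rw [← ofReal_integral_eq_lintegral_ofReal hball (Eventually.of_forall (fun x => by positivity))]
    at hP
  have hP2 := hP.trans (b := _) (c := ENNReal.ofReal (2 * r ^ 2) * (ENNReal.ofReal (1/2) *
    (ENNReal.ofReal (5 * r ^ 3) * (8 * ENNReal.ofReal
      (∫ x in ball (0:E3) r, ∑ i, (pd i w x) ^ 2))))) (by gcongr)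
  rw [show (8 : ENNReal) = ENNReal.ofReal 8 by norm_num, ← ENNReal.ofReal_mul (by norm_num),
    ← ENNReal.ofReal_mul (by positivity), ← ENNReal.ofReal_mul (by positivity),
    ← ENNReal.ofReal_mul (by positivity)] at hP2
  calc _ ≤ 2 * _ + 2 * _ := add_le_add (mul_le_mul_right hP2 2) (mul_le_mul_right hP2 2)
    _ = _ := by
      rw [← two_mul, ← mul_assoc, show (2 * 2 : ENNReal) = ENNReal.ofReal 4 by norm_num,
        ← ENNReal.ofReal_mul (by norm_num)]
      congr 1
      ring

/-! ### Smooth steps and radial functions -/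

/-- A smooth step rising from `0` to `1` on `(a, b)`, with bounded first and second derivatives. -/
lemma exists_step {a b : ℝ} (hab : a < b) : ∃ h : ℝ → ℝ, ∃ K : ℝ, 0 < K ∧ ContDiff ℝ ∞ h ∧
    (∀ t, 0 ≤ h t) ∧ (∀ t, h t ≤ 1) ∧ (∀ t ≤ a, h t = 0) ∧ (∀ t, b ≤ t → h t = 1) ∧
    (∀ t, |deriv h t| ≤ K) ∧ (∀ t, |deriv (deriv h) t| ≤ K) ∧
    (∀ t, t ∉ Set.Ioo a b → deriv h t = 0) ∧ (∀ t, t ∉ Set.Ioo a b → deriv (deriv h) t = 0) := by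
  -- the transition takes place on the middle third, so `h` is constant near `a` and `b`
  set L := (b - a) / 3 with hL
  have hLp : 0 < L := by rw [hL]; linarith
  set h : ℝ → ℝ := fun t => smoothTransition ((t - (a + L)) / L) with hh
  have hs : ContDiff ℝ ∞ h := by
    have : ContDiff ℝ ∞ smoothTransition := smoothTransition.contDiff (n := ⊤)
    exact this.comp (by fun_prop)
  have h0 : ∀ t ≤ a + L, h t = 0 := fun t ht =>
    smoothTransition.zero_of_nonpos (div_nonpos_of_nonpos_of_nonneg (by linarith) hLp.le)
  have h1 : ∀ t, b - L ≤ t → h t = 1 := fun t ht => by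
    apply smoothTransition.one_of_one_le
    rw [le_div_iff₀ hLp]; linarith
  have hd1 : ∀ t, t ∉ Set.Ioo a b → deriv h t = 0 ∧ deriv (deriv h) t = 0 := by
    intro t ht
    have : h =ᶠ[𝓝 t] (fun _ => (0:ℝ)) ∨ h =ᶠ[𝓝 t] (fun _ => (1:ℝ)) := by
      by_cases hta : t ≤ a
      · left
        filter_upwards [Iio_mem_nhds (show t < a + L by linarith)] with s hs'
        exact h0 s (le_of_lt hs')
      · right
        have htb : b ≤ t := by
          by_contra hb
          exact ht ⟨not_le.1 hta, not_le.1 hb⟩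
        filter_upwards [Ioi_mem_nhds (show b - L < t by linarith)] with s hs'
        exact h1 s (le_of_lt hs')
    rcases this with e | e
    · exact ⟨by simp [e.deriv_eq], by simp [e.deriv.deriv_eq]⟩
    · exact ⟨by simp [e.deriv_eq], by simp [e.deriv.deriv_eq]⟩
  have hc1 : Continuous (deriv h) := hs.continuous_deriv (by norm_num)
  have hs' : ContDiff ℝ ∞ (deriv h) := (contDiff_infty_iff_deriv.1 hs).2
  have hc2 : Continuous (deriv (deriv h)) := hs'.continuous_deriv (by norm_num)
  obtain ⟨K1, hK1⟩ := (isCompact_Icc (a := a) (b := b)).exists_bound_of_continuousOn hc1.continuousOn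
  obtain ⟨K2, hK2⟩ := (isCompact_Icc (a := a) (b := b)).exists_bound_of_continuousOn hc2.continuousOn
  refine ⟨h, |K1| + |K2| + 1, by positivity, hs, fun t => smoothTransition.nonneg _,
    fun t => smoothTransition.le_one _, fun t ht => h0 t (by linarith),
    fun t ht => h1 t (by linarith), ?_, ?_, fun t ht => (hd1 t ht).1, fun t ht => (hd1 t ht).2⟩
  · intro t
    by_cases ht : t ∈ Set.Ioo a b
    · have := hK1 t (Set.Ioo_subset_Icc_self ht)
      rw [Real.norm_eq_abs] at this
      linarith [le_abs_self K1, abs_nonneg K2]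
    · rw [(hd1 t ht).1]; simp; positivity
  · intro t
    by_cases ht : t ∈ Set.Ioo a b
    · have := hK2 t (Set.Ioo_subset_Icc_self ht)
      rw [Real.norm_eq_abs] at this
      linarith [le_abs_self K2, abs_nonneg K1]
    · rw [(hd1 t ht).2]; simp; positivity

lemma pd_radial {H : ℝ → ℝ} (hH : Differentiable ℝ H) (i : Fin 3) (x : E3) :
    pd i (fun x : E3 => H (‖x‖ ^ 2)) x = 2 * x i * deriv H (‖x‖ ^ 2) := by
  have h1 := (hasStrictFDerivAt_norm_sq x).hasFDerivAt
  have h2 := (hH (‖x‖ ^ 2)).hasDerivAt.comp_hasFDerivAt x h1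
  have h3 : fderiv ℝ (fun x : E3 => H (‖x‖ ^ 2)) x = _ := h2.fderiv
  simp only [pd, h3]
  simp [EuclideanSpace.inner_single_right]
  ring

lemma pd_coord (i j : Fin 3) (x : E3) :
    pd j (fun x : E3 => x i) x = if i = j then 1 else 0 := by
  have : fderiv ℝ (fun x : E3 => x i) x = EuclideanSpace.proj (𝕜 := ℝ) i :=
    (EuclideanSpace.proj (𝕜 := ℝ) i).fderiv
  simp [pd, this]

lemma pd_pd_radial {H : ℝ → ℝ} (hH : ContDiff ℝ ∞ H) (i j : Fin 3) (x : E3) :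
    pd j (pd i (fun x : E3 => H (‖x‖ ^ 2))) x =
      (if i = j then 2 * deriv H (‖x‖ ^ 2) else 0)
        + 4 * x i * x j * deriv (deriv H) (‖x‖ ^ 2) := by
  have hH' : ContDiff ℝ ∞ (deriv H) := (contDiff_infty_iff_deriv.1 hH).2
  have hd : Differentiable ℝ (deriv H) := hH'.differentiable (by norm_num)
  have e : pd i (fun x : E3 => H (‖x‖ ^ 2)) = fun x : E3 => 2 * x i * deriv H (‖x‖ ^ 2) := by
    funext z; exact pd_radial (hH.differentiable (by norm_num)) i z
  have hp : DifferentiableAt ℝ (fun x : E3 => x i) x :=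
    (EuclideanSpace.proj (𝕜 := ℝ) i).differentiableAt
  have hn : DifferentiableAt ℝ (fun x : E3 => ‖x‖ ^ 2) x :=
    (hasStrictFDerivAt_norm_sq x).hasFDerivAt.differentiableAt
  have hh : DifferentiableAt ℝ (fun x : E3 => deriv H (‖x‖ ^ 2)) x := (hd _).comp x hn
  rw [e, pd_mul (hp.const_mul 2) hh, pd_radial hd, pd_mul (differentiableAt_const _) hp, pd_coord]
  have : pd j (fun _ : E3 => (2:ℝ)) x = 0 := by simp [pd]
  rw [this]
  split_ifs <;> ring

lemma contDiff_radial {H : ℝ → ℝ} (hH : ContDiff ℝ ∞ H) :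
    ContDiff ℝ ∞ (fun x : E3 => H (‖x‖ ^ 2)) := hH.comp (contDiff_norm_sq ℝ)

lemma norm_sq_eq (x : E3) : ‖x‖ ^ 2 = ∑ i, (x i) ^ 2 := by
  simp [EuclideanSpace.norm_sq_eq]

/-- Cutoffs at scale `s`, with gradient of size `1 / s`. -/
lemma exists_cutoff : ∃ K : ℝ, 0 < K ∧ ∀ s : ℝ, 0 < s → ∃ χ : E3 → ℝ, ContDiff ℝ ∞ χ ∧
    HasCompactSupport χ ∧ (∀ x, 0 ≤ χ x) ∧ (∀ x, χ x ≤ 1) ∧ (∀ x, ‖x‖ ^ 2 < 2 * s ^ 2 → χ x = 1) ∧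
    tsupport χ ⊆ ball 0 (2 * s) ∧ ∀ x, ∑ i, (pd i χ x) ^ 2 ≤ K / s ^ 2 := by
  obtain ⟨h, K, hK, hs, h0, h1, ha, hb, hd, -, hd0, -⟩ := exists_step (show (2:ℝ) < 3 by norm_num)
  refine ⟨12 * K ^ 2, by positivity, fun s hsp => ?_⟩
  set H : ℝ → ℝ := fun t => 1 - h (t / s ^ 2) with hH
  have hHs : ContDiff ℝ ∞ H := by fun_prop
  have hHd : ∀ t, deriv H t = - (deriv h (t / s ^ 2) / s ^ 2) := by
    intro t
    have h1 : HasDerivAt (fun t : ℝ => t / s ^ 2) (1 / s ^ 2) t := (hasDerivAt_id t).div_const _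
    have h2 := ((hs.differentiable (by norm_num) (t / s ^ 2)).hasDerivAt.comp t h1).const_sub 1
    have : deriv H t = _ := h2.deriv
    rw [this]; ring
  have hts : tsupport (fun x : E3 => H (‖x‖ ^ 2)) ⊆ {x : E3 | ‖x‖ ^ 2 ≤ 3 * s ^ 2} := by
    refine closure_minimal ?_ (isClosed_le (by fun_prop) (by fun_prop))
    intro x hx
    by_contra hc
    apply hx
    have : 3 ≤ ‖x‖ ^ 2 / s ^ 2 := by
      rw [le_div_iff₀ (by positivity)]
      exact (not_le.1 hc).le
    simp [hH, hb _ this]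
  have hts2 : tsupport (fun x : E3 => H (‖x‖ ^ 2)) ⊆ ball 0 (2 * s) := by
    intro x hx
    have : ‖x‖ ^ 2 ≤ 3 * s ^ 2 := hts hx
    rw [mem_ball_zero_iff]
    by_contra hc
    have : (2 * s) ^ 2 ≤ ‖x‖ ^ 2 := by gcongr; exact not_lt.1 hc
    nlinarith [pow_pos hsp 2]
  refine ⟨fun x => H (‖x‖ ^ 2), contDiff_radial hHs, ?_, ?_, ?_, ?_, hts2, ?_⟩
  · exact (isCompact_closedBall (0:E3) (2 * s)).of_isClosed_subset (isClosed_tsupport _)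
      (hts2.trans ball_subset_closedBall)
  · intro x; simp [hH, h1]
  · intro x; simp [hH, h0]
  · intro x hx
    have : ‖x‖ ^ 2 / s ^ 2 ≤ 2 := by
      rw [div_le_iff₀ (by positivity)]; exact hx.le
    simp [hH, ha _ this]
  · intro x
    simp_rw [pd_radial (hHs.differentiable (by norm_num)), mul_pow]
    rw [← Finset.sum_mul, ← Finset.mul_sum, ← norm_sq_eq, hHd, neg_sq, div_pow]
    by_cases ht : ‖x‖ ^ 2 / s ^ 2 ∈ Set.Ioo (2:ℝ) 3
    · have hx : ‖x‖ ^ 2 ≤ 3 * s ^ 2 := by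
        have := ht.2
        rw [div_lt_iff₀ (by positivity)] at this
        exact this.le
      have hk : (deriv h (‖x‖ ^ 2 / s ^ 2)) ^ 2 ≤ K ^ 2 := by
        rw [← sq_abs]
        exact pow_le_pow_left₀ (abs_nonneg _) (hd _) 2
      calc 2 ^ 2 * ‖x‖ ^ 2 * (deriv h (‖x‖ ^ 2 / s ^ 2) ^ 2 / (s ^ 2) ^ 2)
          ≤ 2 ^ 2 * (3 * s ^ 2) * (K ^ 2 / (s ^ 2) ^ 2) := by gcongr
        _ = 12 * K ^ 2 / s ^ 2 := by field_simp; ring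
    · rw [hd0 _ ht]; simp; positivity

/-! ### Capacity -/

/-- The energies of the competitors in the definition of `capa K`. -/
def capSet (K : Set E3) : Set ℝ :=
  {t : ℝ | ∃ f : E3 → ℝ, ContDiff ℝ (⊤ : ℕ∞) f ∧ HasCompactSupport f ∧
    (∃ U : Set E3, IsOpen U ∧ K ⊆ U ∧ ∀ x ∈ U, f x = 1) ∧
    t = ∫ x : E3, ∑ i, (pd i f x) ^ 2}

lemma capa_eq (K : Set E3) : capa K = sInf (capSet K) := rfl

lemma capSet_nonneg {K : Set E3} {t : ℝ} (ht : t ∈ capSet K) : 0 ≤ t := by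
  obtain ⟨f, -, -, -, rfl⟩ := ht
  exact integral_nonneg (fun x => by positivity)

lemma capSet_bddBelow (K : Set E3) : BddBelow (capSet K) := ⟨0, fun _ ht => capSet_nonneg ht⟩

lemma capa_nonneg (K : Set E3) : 0 ≤ capa K := Real.sInf_nonneg (fun _ ht => capSet_nonneg ht)

lemma capa_le {K : Set E3} {f : E3 → ℝ} (hf : ContDiff ℝ ∞ f) (hc : HasCompactSupport f)
    {U : Set E3} (hU : IsOpen U) (hK : K ⊆ U) (h1 : ∀ x ∈ U, f x = 1) :
    capa K ≤ ∫ x : E3, ∑ i, (pd i f x) ^ 2 :=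
  csInf_le (capSet_bddBelow K) ⟨f, hf, hc, ⟨U, hU, hK, h1⟩, rfl⟩

lemma capSet_nonempty {K : Set E3} {r : ℝ} (hr : 0 < r) (hK : K ⊆ closedBall 0 r) :
    (capSet K).Nonempty := by
  obtain ⟨C, hC, h⟩ := exists_cutoff
  obtain ⟨χ, hs, hc, -, -, h1, -, -⟩ := h r hr
  refine ⟨_, χ, hs, hc, ⟨{x : E3 | ‖x‖ ^ 2 < 2 * r ^ 2}, isOpen_lt (by fun_prop) (by fun_prop), ?_, fun x hx => h1 x (by rwa [Set.mem_ofPred_eq] at hx)⟩,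
    rfl⟩
  intro x hx
  have : ‖x‖ ≤ r := by simpa using hK hx
  have : ‖x‖ ^ 2 ≤ r ^ 2 := by gcongr
  have h2 : 0 < r ^ 2 := by positivity
  show ‖x‖ ^ 2 < 2 * r ^ 2
  linarith

/-- Boundedness of `L` provides a competitor for `L`, without which `capa L` would be the junk
value `sInf ∅ = 0`. -/
lemma capa_mono {K L : Set E3} {r : ℝ} (hr : 0 < r) (hL : L ⊆ closedBall 0 r) (h : K ⊆ L) :
    capa K ≤ capa L := by
  refine csInf_le_csInf (capSet_bddBelow K) (capSet_nonempty hr hL) ?_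
  rintro t ⟨f, hf, hc, ⟨U, hU, hLU, h1⟩, rfl⟩
  exact ⟨f, hf, hc, ⟨U, hU, h.trans hLU, h1⟩, rfl⟩

lemma volume_real_ball {r : ℝ} (hr : 0 < r) : (volume (ball (0:E3) r)).toReal ≤ 5 * r ^ 3 := by
  rw [EuclideanSpace.volume_ball_fin_three, ← ENNReal.ofReal_pow hr.le,
      ← ENNReal.ofReal_mul (by positivity), ENNReal.toReal_ofReal (by positivity)]
  have := Real.pi_lt_d2
  nlinarith [pow_pos hr 3]

lemma integral_eq_setIntegral_of_tsupport {f : E3 → ℝ} {g : E3 → ℝ} {S : Set E3}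
    (h : tsupport f ⊆ S) (hg : ∀ x, x ∉ tsupport f → g x = 0) :
    ∫ x, g x = ∫ x in S, g x :=
  (setIntegral_eq_integral_of_forall_compl_eq_zero (fun x hx => hg x (fun h' => hx (h h')))).symm

lemma exists_capa_le : ∃ C : ℝ, 0 < C ∧ ∀ (K : Set E3) (r : ℝ), 0 < r → K ⊆ closedBall 0 r →
    capa K ≤ C * r := by
  obtain ⟨C, hC, h⟩ := exists_cutoff
  refine ⟨40 * C, by positivity, fun K r hr hK => ?_⟩
  obtain ⟨χ, hs, hc, -, -, h1, hts, hd⟩ := h r hr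
  have hKU : K ⊆ {x : E3 | ‖x‖ ^ 2 < 2 * r ^ 2} := by
    intro x hx
    have : ‖x‖ ≤ r := by simpa using hK hx
    have : ‖x‖ ^ 2 ≤ r ^ 2 := by gcongr
    have h2 : 0 < r ^ 2 := by positivity
    show ‖x‖ ^ 2 < 2 * r ^ 2
    linarith
  refine (capa_le hs hc (isOpen_lt (by fun_prop) (by fun_prop)) hKU h1).trans ?_
  rw [integral_eq_setIntegral_of_tsupport hts
    (fun x hx => Finset.sum_eq_zero (fun i _ => by rw [pd_eq_zero_of_notMem hx]; simp))]
  have hcp : ∀ i, Continuous (pd i χ) := fun i => (contDiff_pd hs).continuous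
  calc ∫ x in ball (0:E3) (2 * r), ∑ i, (pd i χ x) ^ 2
      ≤ ∫ x in ball (0:E3) (2 * r), C / r ^ 2 := by
        refine setIntegral_mono (integrableOn_ball_of_continuous (by fun_prop) _)
          (integrableOn_ball_of_continuous (by fun_prop) _) hd
    _ = (volume (ball (0:E3) (2 * r))).toReal * (C / r ^ 2) := by
        rw [setIntegral_const, smul_eq_mul]; rfl
    _ ≤ 5 * (2 * r) ^ 3 * (C / r ^ 2) := by
        gcongr; exact volume_real_ball (by positivity)
    _ = 40 * C * r := by field_simp; ring

/-- Capacitary Poincaré inequality for a function vanishing near the complement of `Ω`. For each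
`z` the competitor `χ (1 - w / w z)` bounds `cap · (w z)²` by the energy of `χ (w z - w)`;
integrating over `z` brings in the double integral of `poincare_double`. -/
lemma exists_cap_poincare : ∃ C : ℝ, 0 < C ∧ ∀ (Ω : Set E3) (s : ℝ), 0 < s → ∀ w : E3 → ℝ,
    ContDiff ℝ ∞ w → tsupport w ⊆ Ω →
    capa (closedBall 0 s \ Ω) * ∫ x in ball (0:E3) (2 * s), (w x) ^ 2 ≤
      C * s ^ 3 * ∫ x in ball (0:E3) (2 * s), ∑ i, (pd i w x) ^ 2 := by
  obtain ⟨C, hC, h⟩ := exists_cutoff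
  refine ⟨80 + 2 * C * 160 * 32, by positivity, fun Ω s hsp w hw hwΩ => ?_⟩
  obtain ⟨χ, hs, hc, hχ0, hχ1, h1, hts, hd⟩ := h s hsp
  set B := ball (0:E3) (2 * s) with hB
  set γ := capa (closedBall 0 s \ Ω) with hγ
  have hcw : Continuous w := hw.continuous
  have hcχ : Continuous χ := hs.continuous
  have hcpw : ∀ i, Continuous (pd i w) := fun i => (contDiff_pd hw).continuous
  have hIw : IntegrableOn (fun x => ∑ i, (pd i w x) ^ 2) B :=
    integrableOn_ball_of_continuous (by fun_prop) _
  have hpt : ∀ z, γ * (w z) ^ 2 ≤ 2 * (∫ x in B, ∑ i, (pd i w x) ^ 2) +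
      2 * C / s ^ 2 * ∫ x in B, (w z - w x) ^ 2 := by
    intro z
    have hI2 : 0 ≤ ∫ x in B, ∑ i, (pd i w x) ^ 2 := integral_nonneg (fun x => by positivity)
    have hI3 : 0 ≤ ∫ x in B, (w z - w x) ^ 2 := integral_nonneg (fun x => by positivity)
    by_cases hz : w z = 0
    · rw [hz] at hI3 ⊢; simp only [ne_eq, OfNat.ofNat_ne_zero, not_false_eq_true, zero_pow, mul_zero]
      positivity
    set f : E3 → ℝ := fun x => χ x * (1 - w x / w z) with hf
    have hfs : ContDiff ℝ ∞ f := by fun_prop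
    have hfts : tsupport f ⊆ tsupport χ := tsupport_mul_subset_left
    have hfc : HasCompactSupport f := hc.mul_right
    have hcap : γ ≤ ∫ x : E3, ∑ i, (pd i f x) ^ 2 := by
      refine capa_le (U := {x : E3 | ‖x‖ ^ 2 < 2 * s ^ 2} ∩ (tsupport w)ᶜ) hfs hfc
        ((isOpen_lt (by fun_prop) (by fun_prop)).inter (isClosed_tsupport w).isOpen_compl) ?_ ?_
      · rintro x ⟨hx, hxΩ⟩
        refine ⟨?_, fun hx' => hxΩ (hwΩ hx')⟩
        have : ‖x‖ ≤ s := by simpa using hx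
        have : ‖x‖ ^ 2 ≤ s ^ 2 := by gcongr
        have h2 : 0 < s ^ 2 := by positivity
        show ‖x‖ ^ 2 < 2 * s ^ 2
        linarith
      · rintro x ⟨hx, hxw⟩
        simp [hf, h1 x hx, image_eq_zero_of_notMem_tsupport hxw]
    have hpd : ∀ i x, w z * pd i f x = pd i χ x * (w z - w x) - χ x * pd i w x := by
      intro i x
      have d1 : DifferentiableAt ℝ χ x := hs.differentiable (by norm_num) x
      have d2 : DifferentiableAt ℝ w x := hw.differentiable (by norm_num) x
      have : pd i (fun x => 1 - w x / w z) x = - (pd i w x / w z) := by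
        have := (d2.hasFDerivAt.mul_const (w z)⁻¹).const_sub 1
        simp only [pd, div_eq_mul_inv, this.fderiv]
        simp [mul_comm]
      rw [hf, pd_mul d1 (by fun_prop), this]
      field_simp
      ring
    have hsq : ∀ x, (w z) ^ 2 * ∑ i, (pd i f x) ^ 2 ≤
        2 * (∑ i, (pd i w x) ^ 2) + 2 * C / s ^ 2 * (w z - w x) ^ 2 := by
      intro x
      have a1 : ∀ i, (w z) ^ 2 * (pd i f x) ^ 2 ≤
          2 * (pd i w x) ^ 2 + 2 * (w z - w x) ^ 2 * (pd i χ x) ^ 2 := by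
        intro i
        rw [← mul_pow, hpd]
        have : (χ x * pd i w x) ^ 2 ≤ (pd i w x) ^ 2 := by
          rw [mul_pow]
          have : χ x ^ 2 ≤ 1 := pow_le_one₀ (hχ0 x) (hχ1 x)
          nlinarith [sq_nonneg (pd i w x)]
        nlinarith [sq_nonneg (pd i χ x * (w z - w x) + χ x * pd i w x)]
      rw [Finset.mul_sum]
      refine (Finset.sum_le_sum (fun i _ => a1 i)).trans ?_
      rw [Finset.sum_add_distrib, ← Finset.mul_sum, ← Finset.mul_sum]
      have := mul_le_mul_of_nonneg_left (hd x) (show 0 ≤ 2 * (w z - w x) ^ 2 by positivity)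
      have e : 2 * (w z - w x) ^ 2 * (C / s ^ 2) = 2 * C / s ^ 2 * (w z - w x) ^ 2 := by ring
      linarith
    have hcpf : ∀ i, Continuous (pd i f) := fun i => (contDiff_pd hfs).continuous
    calc γ * (w z) ^ 2 ≤ (∫ x : E3, ∑ i, (pd i f x) ^ 2) * (w z) ^ 2 := by gcongr
      _ = ∫ x in B, (w z) ^ 2 * ∑ i, (pd i f x) ^ 2 := by
        rw [integral_eq_setIntegral_of_tsupport (hfts.trans hts)
          (fun x hx => Finset.sum_eq_zero (fun i _ => by rw [pd_eq_zero_of_notMem hx]; simp)),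
          integral_const_mul, mul_comm]
      _ ≤ ∫ x in B, (2 * (∑ i, (pd i w x) ^ 2) + 2 * C / s ^ 2 * (w z - w x) ^ 2) := by
        refine setIntegral_mono (integrableOn_ball_of_continuous (by fun_prop) _)
          (integrableOn_ball_of_continuous (by fun_prop) _) hsq
      _ = _ := by
        have i2 : IntegrableOn (fun x => 2 * C / s ^ 2 * (w z - w x) ^ 2) B :=
          integrableOn_ball_of_continuous (by fun_prop) _
        rw [integral_add (hIw.const_mul 2) i2, integral_const_mul, integral_const_mul]
  have hcD : Continuous (fun z => ∫ x in B, (w z - w x) ^ 2) := by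
    have e : (fun z => ∫ x in B, (w z - w x) ^ 2) = fun z => (w z) ^ 2 * (∫ x in B, (1:ℝ))
        - 2 * w z * (∫ x in B, w x) + ∫ x in B, (w x) ^ 2 := by
      funext z
      have i1 : IntegrableOn (fun x => (w z) ^ 2 * (1:ℝ)) B :=
        integrableOn_ball_of_continuous (by fun_prop) _
      have i2 : IntegrableOn (fun x => 2 * w z * w x) B :=
        integrableOn_ball_of_continuous (by fun_prop) _
      have i3 : IntegrableOn (fun x => (w x) ^ 2) B :=
        integrableOn_ball_of_continuous (by fun_prop) _
      have i12 : IntegrableOn (fun x => (w z) ^ 2 * (1:ℝ) - 2 * w z * w x) B := i1.sub i2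
      rw [← integral_const_mul, ← integral_const_mul, ← integral_sub i1 i2,
        ← integral_add i12 i3]
      congr 1; funext x; ring
    rw [e]; fun_prop
  have hP := poincare_double hw (show 0 < 2 * s by positivity)
  rw [← integral_const_mul]
  have hnn : 0 ≤ ∫ x in B, ∑ i, (pd i w x) ^ 2 := integral_nonneg (fun x => by positivity)
  calc ∫ z in B, γ * (w z) ^ 2 ≤ ∫ z in B, (2 * (∫ x in B, ∑ i, (pd i w x) ^ 2) +
      2 * C / s ^ 2 * ∫ x in B, (w z - w x) ^ 2) := by
        refine setIntegral_mono (integrableOn_ball_of_continuous (by fun_prop) _)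
          (integrableOn_ball_of_continuous (by fun_prop) _) hpt
    _ = (volume B).toReal * (2 * (∫ x in B, ∑ i, (pd i w x) ^ 2)) +
        2 * C / s ^ 2 * ∫ z in B, ∫ x in B, (w z - w x) ^ 2 := by
        have j1 : IntegrableOn (fun _ : E3 => 2 * (∫ x in B, ∑ i, (pd i w x) ^ 2)) B :=
          integrableOn_ball_of_continuous (by fun_prop) _
        have j2 : IntegrableOn (fun z => 2 * C / s ^ 2 * ∫ x in B, (w z - w x) ^ 2) B :=
          integrableOn_ball_of_continuous (by fun_prop) _
        rw [integral_add j1 j2, setIntegral_const, smul_eq_mul]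
        congr 1
        exact integral_const_mul _ _
    _ ≤ 5 * (2 * s) ^ 3 * (2 * (∫ x in B, ∑ i, (pd i w x) ^ 2)) +
        2 * C / s ^ 2 * (160 * (2 * s) ^ 5 * ∫ x in B, ∑ i, (pd i w x) ^ 2) := by
        gcongr; exact volume_real_ball (by positivity)
    _ = _ := by field_simp; ring

/-! ### The exponential cutoff -/

/-- At most one dyadic shell `(4 ρₖ², 16 ρₖ²)`, `ρₖ = ρ 2ᵏ`, contains a given `s`. -/
lemma sum_shell_le_one {ρ : ℝ} (hρ : 0 < ρ) (N : ℕ) (s : ℝ) :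
    ∑ k ∈ Finset.range N, (if s / (ρ * 2 ^ k) ^ 2 ∈ Set.Ioo (4:ℝ) 16 then (1:ℝ) else 0) ≤ 1 := by
  rw [Finset.sum_boole, Nat.cast_le_one, Finset.card_le_one]
  have key : ∀ k l : ℕ, k < l → s / (ρ * 2 ^ k) ^ 2 ∈ Set.Ioo (4:ℝ) 16 →
      s / (ρ * 2 ^ l) ^ 2 ∈ Set.Ioo (4:ℝ) 16 → False := by
    intro k l hkl hk hl
    have h1 := hk.2
    have h2 := hl.1
    rw [div_lt_iff₀ (by positivity)] at h1
    rw [lt_div_iff₀ (by positivity)] at h2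
    have h3 : (2:ℝ) * 2 ^ k ≤ 2 ^ l := by
      calc (2:ℝ) * 2 ^ k = 2 ^ (k + 1) := by ring
        _ ≤ 2 ^ l := pow_le_pow_right₀ (by norm_num) hkl
    have h4 : (ρ * (2 * 2 ^ k)) ^ 2 ≤ (ρ * 2 ^ l) ^ 2 := by gcongr
    nlinarith
  intro k hk l hl
  simp only [Finset.mem_filter] at hk hl
  rcases lt_trichotomy k l with h | h | h
  · exact (key k l h hk.2 hl.2).elim
  · exact h
  · exact (key l k h hl.2 hk.2).elim

lemma hasDerivAt_scaled {f : ℝ → ℝ} (hf : Differentiable ℝ f) (c s : ℝ) :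
    HasDerivAt (fun s => f (s / c)) (deriv f (s / c) / c) s := by
  have h1 : HasDerivAt (fun t : ℝ => t / c) (1 / c) s := (hasDerivAt_id s).div_const _
  have h2 := (hf (s / c)).hasDerivAt.comp s h1
  rw [mul_one_div] at h2
  exact h2

/-- Bounds for a smooth radial function in terms of its profile. -/
lemma radial_bound {H : ℝ → ℝ} (hH : ContDiff ℝ ∞ H) (x : E3) :
    ∑ i, (pd i (fun x : E3 => H (‖x‖ ^ 2)) x) ^ 2 +
      |H (‖x‖ ^ 2)| * ∑ i, ∑ j, |pd j (pd i (fun x : E3 => H (‖x‖ ^ 2))) x| ≤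
    4 * ‖x‖ ^ 2 * (deriv H (‖x‖ ^ 2)) ^ 2 + |H (‖x‖ ^ 2)| *
      (6 * |deriv H (‖x‖ ^ 2)| + 12 * ‖x‖ ^ 2 * |deriv (deriv H) (‖x‖ ^ 2)|) := by
  have e1 : ∑ i, (pd i (fun x : E3 => H (‖x‖ ^ 2)) x) ^ 2 =
      4 * ‖x‖ ^ 2 * (deriv H (‖x‖ ^ 2)) ^ 2 := by
    simp_rw [pd_radial (hH.differentiable (by norm_num)), mul_pow]
    rw [← Finset.sum_mul, ← Finset.mul_sum, ← norm_sq_eq]; norm_num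
  rw [e1]
  gcongr
  set d1 := deriv H (‖x‖ ^ 2)
  set d2 := deriv (deriv H) (‖x‖ ^ 2)
  have e2 : ∀ i j : Fin 3, |pd j (pd i (fun x : E3 => H (‖x‖ ^ 2))) x| ≤
      (if i = j then 2 * |d1| else 0) + 2 * ((x i) ^ 2 + (x j) ^ 2) * |d2| := by
    intro i j
    rw [pd_pd_radial hH]
    refine (abs_add_le _ _).trans (add_le_add ?_ ?_)
    · split_ifs <;> simp [abs_mul, d1]
    · rw [abs_mul]
      gcongr
      rw [abs_le]
      constructor <;> nlinarith [sq_nonneg (x i + x j), sq_nonneg (x i - x j)]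
  calc ∑ i, ∑ j, |pd j (pd i (fun x : E3 => H (‖x‖ ^ 2))) x|
      ≤ ∑ i : Fin 3, ∑ j : Fin 3, ((if i = j then 2 * |d1| else 0) +
        2 * ((x i) ^ 2 + (x j) ^ 2) * |d2|) :=
        Finset.sum_le_sum (fun i _ => Finset.sum_le_sum (fun j _ => e2 i j))
    _ = 6 * |d1| + 12 * ‖x‖ ^ 2 * |d2| := by
        rw [norm_sq_eq]; simp [Fin.sum_univ_three]; ring

set_option maxHeartbeats 2000000 in
/-- The exponential cutoff `η = (1 - χ(|x|²/R²)) exp(-δ ∑ aₖ h(|x|²/ρₖ²))`, where `χ` and `h` are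
smooth steps. Its derivatives are controlled by `δ η²` times the
weight `∑ aₖ ρₖ⁻³ 1_{|x| < 4ρₖ}`, up to a term living at scale `R` which carries the full exponential factor. -/
lemma exists_agmon {B : ℝ} (hB : 0 ≤ B) : ∃ C : ℝ, 0 < C ∧ ∀ δ : ℝ, 0 < δ → δ ≤ 1 →
    ∀ ρ R : ℝ, 0 < ρ → ρ < R → ∀ (N : ℕ) (a : ℕ → ℝ), (∀ k, 0 ≤ a k) → (∀ k, a k ≤ B) →
    (∀ k < N, 4 * (ρ * 2 ^ k) ≤ R) → ∃ η : E3 → ℝ, ContDiff ℝ ∞ η ∧ HasCompactSupport η ∧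
      tsupport η ⊆ ball 0 (2 * R) ∧ (∀ x, 0 ≤ η x) ∧ (∀ x, η x ≤ 1) ∧
      (∀ x, ‖x‖ < ρ → η x = 1) ∧
      ∀ y : E3, ‖y‖ < ρ → ∀ x,
        (∑ i, (pd i η x) ^ 2 + η x * ∑ i, ∑ j, |pd j (pd i η) x|) * ‖x - y‖⁻¹ ≤
          C * δ * (η x) ^ 2 * ∑ k ∈ Finset.range N, a k * ((ρ * 2 ^ k) ^ 3)⁻¹ *
              (ball (0 : E3) (4 * (ρ * 2 ^ k))).indicator 1 x +
            C * (R ^ 3)⁻¹ * (ball (0 : E3) (2 * R)).indicator 1 x *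
              rexp (-2 * δ * ∑ k ∈ Finset.range N, a k) := by
  obtain ⟨h, K, hK, hs, h0, h1, ha, hb, hd, hdd, hd0, hdd0⟩ :=
    exists_step (show (4:ℝ) < 16 by norm_num)
  obtain ⟨χ, L, hL, cs, c0, c1, ca, cb, cd, cdd, cd0, cdd0⟩ :=
    exists_step (show (2:ℝ) < 3 by norm_num)
  have hs' : ContDiff ℝ ∞ (deriv h) := (contDiff_infty_iff_deriv.1 hs).2
  have cs' : ContDiff ℝ ∞ (deriv χ) := (contDiff_infty_iff_deriv.1 cs).2
  have hdf : Differentiable ℝ h := hs.differentiable (by norm_num)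
  have hdf' : Differentiable ℝ (deriv h) := hs'.differentiable (by norm_num)
  have cdf : Differentiable ℝ χ := cs.differentiable (by norm_num)
  have cdf' : Differentiable ℝ (deriv χ) := cs'.differentiable (by norm_num)
  set C1 := 256 * K ^ 2 * B + 198 * K with hC1
  set C2 := 4 * (12 * L ^ 2 + 42 * L) with hC2
  have hC1p : 0 < C1 := by positivity
  have hC2p : 0 < C2 := by positivity
  refine ⟨C1 + C2, by positivity, ?_⟩
  intro δ hδ hδ1 ρ R hρ hρR N a ha0 haB hN
  have hR : 0 < R := hρ.trans hρR
  set G := ∑ k ∈ Finset.range N, a k with hG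
  set P : ℝ → ℝ := fun s => ∑ k ∈ Finset.range N, a k * h (s / (ρ * 2 ^ k) ^ 2) with hP
  set P1 : ℝ → ℝ := fun s => ∑ k ∈ Finset.range N,
    a k * (deriv h (s / (ρ * 2 ^ k) ^ 2) / (ρ * 2 ^ k) ^ 2) with hP1
  set P2 : ℝ → ℝ := fun s => ∑ k ∈ Finset.range N,
    a k * (deriv (deriv h) (s / (ρ * 2 ^ k) ^ 2) / (ρ * 2 ^ k) ^ 2 / (ρ * 2 ^ k) ^ 2) with hP2
  have dP : ∀ s, HasDerivAt P (P1 s) s := fun s =>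
    HasDerivAt.fun_sum (fun k _ => (hasDerivAt_scaled hdf _ s).const_mul (a k))
  have dP1 : ∀ s, HasDerivAt P1 (P2 s) s := fun s =>
    HasDerivAt.fun_sum (fun k _ => ((hasDerivAt_scaled hdf' _ s).div_const _).const_mul (a k))
  set g : ℝ → ℝ := fun s => rexp (-δ * P s) with hg
  have gpos : ∀ s, 0 < g s := fun s => exp_pos _
  have dg : ∀ s, HasDerivAt g (-δ * P1 s * g s) s := fun s => by
    have := ((dP s).const_mul (-δ)).exp
    convert this using 1; ring
  set X : ℝ → ℝ := fun s => 1 - χ (s / R ^ 2) with hX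
  set X1 : ℝ → ℝ := fun s => - (deriv χ (s / R ^ 2) / R ^ 2) with hX1
  set X2 : ℝ → ℝ := fun s => - (deriv (deriv χ) (s / R ^ 2) / R ^ 2 / R ^ 2) with hX2
  have dX : ∀ s, HasDerivAt X (X1 s) s := fun s => (hasDerivAt_scaled cdf _ s).const_sub 1
  have dX1 : ∀ s, HasDerivAt X1 (X2 s) s := fun s =>
    ((hasDerivAt_scaled cdf' _ s).div_const _).neg
  have X0 : ∀ s, 0 ≤ X s := fun s => by simp [hX, c1]
  have Xle : ∀ s, X s ≤ 1 := fun s => by simp [hX, c0]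
  set H : ℝ → ℝ := fun s => X s * g s with hH
  have hPs : ContDiff ℝ ∞ P := ContDiff.sum (fun k _ => contDiff_const.mul (hs.comp (by fun_prop)))
  have hHs : ContDiff ℝ ∞ H := by
    have : ContDiff ℝ ∞ X := contDiff_const.sub (cs.comp (by fun_prop))
    exact this.mul ((contDiff_const.mul hPs).exp)
  have eH1 : deriv H = fun s => X1 s * g s + X s * (-δ * P1 s * g s) := by
    funext s; exact ((dX s).mul (dg s)).deriv
  have eH2 : ∀ s, deriv (deriv H) s = X2 s * g s + X1 s * (-δ * P1 s * g s) +
      (X1 s * (-δ * P1 s * g s) + X s * ((-δ * P2 s) * g s + (-δ * P1 s) * (-δ * P1 s * g s))) := by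
    intro s; rw [eH1]
    exact (((dX1 s).mul (dg s)).add ((dX s).mul (((dP1 s).const_mul (-δ)).mul (dg s)))).deriv
  have P0 : ∀ s, 0 ≤ P s := fun s => Finset.sum_nonneg (fun k _ => mul_nonneg (ha0 k) (h0 _))
  have gle : ∀ s, g s ≤ 1 := fun s => by
    rw [hg]; simp only [exp_le_one_iff]; nlinarith [P0 s]
  have hHts : tsupport (fun x : E3 => H (‖x‖ ^ 2)) ⊆ {x : E3 | ‖x‖ ^ 2 ≤ 3 * R ^ 2} := by
    refine closure_minimal ?_ (isClosed_le (by fun_prop) (by fun_prop))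
    intro x hx
    by_contra hc
    apply hx
    have : 3 ≤ ‖x‖ ^ 2 / R ^ 2 := by
      rw [le_div_iff₀ (by positivity)]
      exact (not_le.1 hc).le
    simp [hH, hX, cb _ this]
  have hts2 : tsupport (fun x : E3 => H (‖x‖ ^ 2)) ⊆ ball 0 (2 * R) := by
    intro x hx
    have : ‖x‖ ^ 2 ≤ 3 * R ^ 2 := hHts hx
    rw [mem_ball_zero_iff]
    by_contra hc
    have : (2 * R) ^ 2 ≤ ‖x‖ ^ 2 := by gcongr; exact not_lt.1 hc
    nlinarith [pow_pos hR 2]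
  refine ⟨fun x => H (‖x‖ ^ 2), contDiff_radial hHs, ?_, hts2, ?_, ?_, ?_, ?_⟩
  · exact (isCompact_closedBall (0:E3) (2 * R)).of_isClosed_subset (isClosed_tsupport _)
      (hts2.trans ball_subset_closedBall)
  · intro x; exact mul_nonneg (X0 _) (gpos _).le
  · intro x; exact mul_le_one₀ (Xle _) (gpos _).le (gle _)
  · intro x hx
    have hx2 : ‖x‖ ^ 2 ≤ ρ ^ 2 := by gcongr
    have hρ2 : ρ ^ 2 ≤ R ^ 2 := by gcongr
    have e1 : X (‖x‖ ^ 2) = 1 := by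
      have : ‖x‖ ^ 2 / R ^ 2 ≤ 2 := by
        rw [div_le_iff₀ (by positivity)]; nlinarith [sq_nonneg R]
      simp [hX, ca _ this]
    have e2 : P (‖x‖ ^ 2) = 0 := by
      refine Finset.sum_eq_zero (fun k _ => ?_)
      have : ‖x‖ ^ 2 / (ρ * 2 ^ k) ^ 2 ≤ 4 := by
        rw [div_le_iff₀ (by positivity)]
        have h2 : (1:ℝ) ≤ 2 ^ k := one_le_pow₀ (by norm_num)
        have : (ρ * 1) ^ 2 ≤ (ρ * 2 ^ k) ^ 2 := by gcongr
        nlinarith [sq_nonneg ρ]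
      rw [ha _ this, mul_zero]
    simp [hH, e1, hg, e2]
  · intro y hy x
    have hRB := radial_bound hHs x
    have hHnn : 0 ≤ H (‖x‖ ^ 2) := mul_nonneg (X0 _) (gpos _).le
    rw [abs_of_nonneg hHnn] at hRB
    have hwnn : 0 ≤ ‖x - y‖⁻¹ := by positivity
    refine (mul_le_mul_of_nonneg_right hRB hwnn).trans ?_
    have hxy : ‖x‖ - ‖y‖ ≤ ‖x - y‖ := norm_sub_norm_le x y
    set s := ‖x‖ ^ 2 with hsdef
    have hs0 : 0 ≤ s := by positivity
    have hsum0 : 0 ≤ ∑ k ∈ Finset.range N, a k * ((ρ * 2 ^ k) ^ 3)⁻¹ *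
        (ball (0 : E3) (4 * (ρ * 2 ^ k))).indicator (1 : E3 → ℝ) x :=
      Finset.sum_nonneg (fun k _ => mul_nonneg (mul_nonneg (ha0 k) (by positivity))
        (Set.indicator_nonneg (fun _ _ => zero_le_one) _))
    have hind0 : 0 ≤ (ball (0 : E3) (2 * R)).indicator (1 : E3 → ℝ) x :=
      Set.indicator_nonneg (fun _ _ => zero_le_one) _
    by_cases hsR : s ≤ 2 * R ^ 2
    · -- inner region: the cutoff at scale `R` is identically `1`, only the exponential varies
      have hs2 : s / R ^ 2 ≤ 2 := by rwa [div_le_iff₀ (by positivity)]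
      have hni : s / R ^ 2 ∉ Set.Ioo (2:ℝ) 3 := fun hh => by linarith [hh.1]
      have e0 : X s = 1 := by simp [hX, ca _ hs2]
      have e1 : X1 s = 0 := by simp [hX1, cd0 _ hni]
      have e2 : X2 s = 0 := by simp [hX2, cdd0 _ hni]
      set I : ℕ → ℝ := fun k => if s / (ρ * 2 ^ k) ^ 2 ∈ Set.Ioo (4:ℝ) 16 then (1:ℝ) else 0 with hI
      have I0 : ∀ k, 0 ≤ I k := fun k => by simp only [hI]; split_ifs <;> norm_num
      set S := ∑ k ∈ Finset.range N, a k * ((ρ * 2 ^ k) ^ 2)⁻¹ * I k with hS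
      have hS0 : 0 ≤ S := Finset.sum_nonneg (fun k _ =>
        mul_nonneg (mul_nonneg (ha0 k) (by positivity)) (I0 k))
      have b1 : |P1 s| ≤ K * S := by
        rw [hS, Finset.mul_sum]
        refine (Finset.abs_sum_le_sum_abs _ _).trans (Finset.sum_le_sum (fun k _ => ?_))
        rw [abs_mul, abs_of_nonneg (ha0 k), abs_div, abs_of_nonneg (sq_nonneg (ρ * 2 ^ k))]
        by_cases hk : s / (ρ * 2 ^ k) ^ 2 ∈ Set.Ioo (4:ℝ) 16
        · simp only [hI, hk, if_true]
          have := mul_le_mul_of_nonneg_left (hd (s / (ρ * 2 ^ k) ^ 2))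
            (show 0 ≤ a k * ((ρ * 2 ^ k) ^ 2)⁻¹ from mul_nonneg (ha0 k) (by positivity))
          rw [div_eq_mul_inv]; linarith
        · simp only [hI, if_neg hk, hd0 _ hk]; simp
      have b1' : s * |P1 s| ≤ 16 * K * B := by
        calc s * |P1 s| ≤ s * (K * S) := by gcongr
          _ = K * ∑ k ∈ Finset.range N, a k * (s / (ρ * 2 ^ k) ^ 2) * I k := by
            rw [hS, Finset.mul_sum, Finset.mul_sum, Finset.mul_sum]
            refine Finset.sum_congr rfl (fun k _ => ?_)
            rw [div_eq_mul_inv]; ring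
          _ ≤ K * ∑ k ∈ Finset.range N, B * 16 * I k := by
            refine mul_le_mul_of_nonneg_left (Finset.sum_le_sum (fun k _ => ?_)) hK.le
            by_cases hk : s / (ρ * 2 ^ k) ^ 2 ∈ Set.Ioo (4:ℝ) 16
            · have := hk.2.le
              have := mul_le_mul (haB k) this (by positivity) hB
              exact mul_le_mul_of_nonneg_right this (I0 k)
            · simp only [hI, if_neg hk]; simp
          _ ≤ K * (B * 16 * 1) := by
            rw [← Finset.mul_sum]
            gcongr
            exact sum_shell_le_one hρ N s
          _ = 16 * K * B := by ring
      have b2 : s * |P2 s| ≤ 16 * K * S := by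
        rw [hS, Finset.mul_sum]
        refine (mul_le_mul_of_nonneg_left (Finset.abs_sum_le_sum_abs _ _) hs0).trans ?_
        rw [Finset.mul_sum]
        refine (Finset.sum_le_sum (fun k _ => ?_))
        rw [abs_mul, abs_of_nonneg (ha0 k), abs_div, abs_div,
          abs_of_nonneg (sq_nonneg (ρ * 2 ^ k))]
        by_cases hk : s / (ρ * 2 ^ k) ^ 2 ∈ Set.Ioo (4:ℝ) 16
        · simp only [hI, hk, if_true]
          have h3 := mul_le_mul hk.2.le (hdd (s / (ρ * 2 ^ k) ^ 2)) (abs_nonneg _) (by norm_num)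
          have := mul_le_mul_of_nonneg_left h3
            (show 0 ≤ a k * ((ρ * 2 ^ k) ^ 2)⁻¹ from mul_nonneg (ha0 k) (by positivity))
          simp only [div_eq_mul_inv] at this ⊢
          linarith
        · simp only [hI, if_neg hk, hdd0 _ hk]; simp
      have hq : 4 * s * (deriv H s) ^ 2 + H s * (6 * |deriv H s| + 12 * s * |deriv (deriv H) s|) ≤
          C1 * δ * (H s) ^ 2 * S := by
        have t1 : |deriv H s| = δ * |P1 s| * g s := by
          rw [eH1]; simp only [e0, e1]
          rw [zero_mul, zero_add, one_mul, abs_mul, abs_mul, abs_neg, abs_of_pos hδ,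
            abs_of_pos (gpos s)]
        have t2 : |deriv (deriv H) s| ≤ (δ * |P2 s| + δ ^ 2 * |P1 s| ^ 2) * g s := by
          rw [eH2, e0, e1, e2]
          have : 0 * g s + 0 * (-δ * P1 s * g s) + (0 * (-δ * P1 s * g s) +
              1 * (-δ * P2 s * g s + -δ * P1 s * (-δ * P1 s * g s))) =
              (-δ * P2 s + δ ^ 2 * (P1 s) ^ 2) * g s := by ring
          rw [this, abs_mul, abs_of_pos (gpos s)]
          refine mul_le_mul_of_nonneg_right ?_ (gpos s).le
          refine (abs_add_le _ _).trans (le_of_eq ?_)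
          rw [abs_mul, abs_mul, abs_neg, abs_of_pos hδ, abs_pow, abs_pow, abs_of_pos hδ]
        have t3 : H s = g s := by simp [hH, e0]
        rw [← sq_abs, t1, t3]
        have t4 : s * |P1 s| ^ 2 ≤ 16 * K * B * (K * S) := by
          calc s * |P1 s| ^ 2 = (s * |P1 s|) * |P1 s| := by ring
            _ ≤ _ := by gcongr
        have gp := gpos s
        calc 4 * s * (δ * |P1 s| * g s) ^ 2 + g s * (6 * (δ * |P1 s| * g s) +
              12 * s * |deriv (deriv H) s|)
            ≤ 4 * s * (δ * |P1 s| * g s) ^ 2 + g s * (6 * (δ * |P1 s| * g s) +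
              12 * s * ((δ * |P2 s| + δ ^ 2 * |P1 s| ^ 2) * g s)) := by gcongr
          _ = δ * (g s) ^ 2 * (16 * δ * (s * |P1 s| ^ 2) + 6 * |P1 s| + 12 * (s * |P2 s|)) := by ring
          _ ≤ δ * (g s) ^ 2 * (16 * 1 * (16 * K * B * (K * S)) + 6 * (K * S) + 12 * (16 * K * S)) := by
            gcongr
          _ = C1 * δ * (g s) ^ 2 * S := by rw [hC1]; ring
      have hSw : S * ‖x - y‖⁻¹ ≤ ∑ k ∈ Finset.range N, a k * ((ρ * 2 ^ k) ^ 3)⁻¹ *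
          (ball (0 : E3) (4 * (ρ * 2 ^ k))).indicator (1 : E3 → ℝ) x := by
        rw [hS, Finset.sum_mul]
        refine Finset.sum_le_sum (fun k _ => ?_)
        by_cases hk : s / (ρ * 2 ^ k) ^ 2 ∈ Set.Ioo (4:ℝ) 16
        · have q1 := hk.1
          have q2 := hk.2
          rw [lt_div_iff₀ (by positivity)] at q1
          rw [div_lt_iff₀ (by positivity)] at q2
          have hp : 0 < ρ * 2 ^ k := by positivity
          have q1' : 2 * (ρ * 2 ^ k) < ‖x‖ := lt_of_pow_lt_pow_left₀ 2 (norm_nonneg x) (by nlinarith)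
          have q2' : ‖x‖ < 4 * (ρ * 2 ^ k) := lt_of_pow_lt_pow_left₀ 2 (by positivity) (by nlinarith)
          have q3 : ρ ≤ ρ * 2 ^ k := le_mul_of_one_le_right hρ.le (one_le_pow₀ (by norm_num))
          have q4 : ρ * 2 ^ k ≤ ‖x - y‖ := by linarith
          have q5 : ‖x - y‖⁻¹ ≤ (ρ * 2 ^ k)⁻¹ := inv_anti₀ hp q4
          rw [Set.indicator_of_mem (by simpa using q2')]
          simp only [hI, hk, if_true, Pi.one_apply, mul_one]
          calc a k * ((ρ * 2 ^ k) ^ 2)⁻¹ * ‖x - y‖⁻¹ ≤ a k * ((ρ * 2 ^ k) ^ 2)⁻¹ * (ρ * 2 ^ k)⁻¹ := by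
                have := ha0 k
                gcongr
            _ = a k * ((ρ * 2 ^ k) ^ 3)⁻¹ := by rw [mul_assoc, ← mul_inv]; ring
        · simp only [hI, hk, if_false, mul_zero, zero_mul]
          exact mul_nonneg (mul_nonneg (ha0 k) (by positivity))
            (Set.indicator_nonneg (fun _ _ => zero_le_one) _)
      refine (mul_le_mul_of_nonneg_right hq hwnn).trans ?_
      calc C1 * δ * H s ^ 2 * S * ‖x - y‖⁻¹ = C1 * δ * H s ^ 2 * (S * ‖x - y‖⁻¹) := by ring
        _ ≤ C1 * δ * H s ^ 2 * ∑ k ∈ Finset.range N, a k * ((ρ * 2 ^ k) ^ 3)⁻¹ *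
          (ball (0 : E3) (4 * (ρ * 2 ^ k))).indicator (1 : E3 → ℝ) x := by gcongr
        _ ≤ (C1 + C2) * δ * H s ^ 2 * ∑ k ∈ Finset.range N, a k * ((ρ * 2 ^ k) ^ 3)⁻¹ *
          (ball (0 : E3) (4 * (ρ * 2 ^ k))).indicator (1 : E3 → ℝ) x := by gcongr; linarith
        _ ≤ _ := le_add_of_nonneg_right (by positivity)
    · -- outer region: the exponential is constant
      rw [not_le] at hsR
      have hk16 : ∀ k ∈ Finset.range N, 16 ≤ s / (ρ * 2 ^ k) ^ 2 := by
        intro k hk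
        have := hN k (Finset.mem_range.1 hk)
        rw [le_div_iff₀ (by positivity)]
        have : (4 * (ρ * 2 ^ k)) ^ 2 ≤ R ^ 2 := by gcongr
        nlinarith
      have hkn : ∀ k ∈ Finset.range N, s / (ρ * 2 ^ k) ^ 2 ∉ Set.Ioo (4:ℝ) 16 :=
        fun k hk hh => by linarith [hh.2, hk16 k hk]
      have p0 : P s = G := Finset.sum_congr rfl (fun k hk => by rw [hb _ (hk16 k hk), mul_one])
      have p1 : P1 s = 0 := Finset.sum_eq_zero (fun k hk => by rw [hd0 _ (hkn k hk)]; simp)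
      have p2 : P2 s = 0 := Finset.sum_eq_zero (fun k hk => by rw [hdd0 _ (hkn k hk)]; simp)
      have t1 : deriv H s = X1 s * g s := by rw [eH1]; simp [p1]
      have t2 : deriv (deriv H) s = X2 s * g s := by rw [eH2]; simp [p1, p2]
      have tg : (g s) ^ 2 = rexp (-2 * δ * G) := by
        simp only [hg, p0]; rw [← exp_nat_mul]; congr 1; push_cast; ring
      refine le_trans ?_ (le_add_of_nonneg_left (by positivity))
      by_cases h3 : s / R ^ 2 ∈ Set.Ioo (2:ℝ) 3
      · have hs3 := h3.2
        rw [div_lt_iff₀ (by positivity)] at hs3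
        have r1 : |X1 s| ≤ L / R ^ 2 := by
          simp only [hX1, abs_neg, abs_div, abs_of_nonneg (sq_nonneg R)]
          gcongr; exact cd _
        have r2 : |X2 s| ≤ L / R ^ 2 / R ^ 2 := by
          simp only [hX2, abs_neg, abs_div, abs_of_nonneg (sq_nonneg R)]
          gcongr; exact cdd _
        have u1 : ‖x‖ < 2 * R := lt_of_pow_lt_pow_left₀ 2 (by positivity) (by nlinarith)
        have u2 : 5 / 4 * R < ‖x‖ := lt_of_pow_lt_pow_left₀ 2 (norm_nonneg x) (by nlinarith)
        have u3 : R / 4 ≤ ‖x - y‖ := by linarith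
        have u4 : ‖x - y‖⁻¹ ≤ (R / 4)⁻¹ := inv_anti₀ (by positivity) u3
        rw [Set.indicator_of_mem (by simpa using u1), Pi.one_apply, mul_one, ← tg, t1, t2]
        have gp := gpos s
        have hHg : H s ≤ g s := by
          have := mul_le_mul_of_nonneg_right (Xle s) gp.le
          simpa [hH] using this
        rw [← sq_abs, abs_mul, abs_mul, abs_of_pos gp]
        calc (4 * s * (|X1 s| * g s) ^ 2 + H s * (6 * (|X1 s| * g s) + 12 * s * (|X2 s| * g s))) *
              ‖x - y‖⁻¹
            ≤ (4 * (3 * R ^ 2) * (L / R ^ 2 * g s) ^ 2 + g s * (6 * (L / R ^ 2 * g s) +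
              12 * (3 * R ^ 2) * (L / R ^ 2 / R ^ 2 * g s))) * (R / 4)⁻¹ := by gcongr
          _ = C2 * (R ^ 3)⁻¹ * (g s) ^ 2 := by rw [hC2]; field_simp; ring
          _ ≤ (C1 + C2) * (R ^ 3)⁻¹ * (g s) ^ 2 := by gcongr; linarith
      · have r1 : X1 s = 0 := by simp [hX1, cd0 _ h3]
        have r2 : X2 s = 0 := by simp [hX2, cdd0 _ h3]
        rw [t1, t2, r1, r2]
        simp only [zero_mul, abs_zero, mul_zero, add_zero]
        norm_num
        positivity

/-! ### The commutator of the Lamé operator with a cutoff -/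

lemma exists_Phi_bound (α : ℝ) : ∃ C : ℝ, 0 < C ∧ ∀ z i j, |Phi α z i j| ≤ C * ‖z‖⁻¹ := by
  refine ⟨|cA α| * (1 + |α / (α + 2)|) + 1, by positivity, fun z i j => ?_⟩
  have hz : ∀ k : Fin 3, |z k| ≤ ‖z‖ := fun k => by
    simpa using PiLp.norm_apply_le z k
  have h2 : |(α / (α + 2)) * (z i * z j) / ‖z‖ ^ 2| ≤ |α / (α + 2)| := by
    rw [abs_div, abs_mul, abs_mul, abs_of_nonneg (sq_nonneg ‖z‖)]
    refine div_le_of_le_mul₀ (by positivity) (by positivity) ?_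
    rw [sq]
    have := mul_le_mul (hz i) (hz j) (abs_nonneg _) (norm_nonneg z)
    exact mul_le_mul_of_nonneg_left this (abs_nonneg _)
  have h1 : |(if i = j then (1 : ℝ) else 0)| ≤ 1 := by split_ifs <;> simp
  have h3 : |(if i = j then (1 : ℝ) else 0) + (α / (α + 2)) * (z i * z j) / ‖z‖ ^ 2| ≤
      1 + |α / (α + 2)| := (abs_add_le _ _).trans (add_le_add h1 h2)
  unfold Phi
  rw [abs_mul, abs_mul, abs_of_nonneg (inv_nonneg.2 (norm_nonneg z))]
  have hn : 0 ≤ ‖z‖⁻¹ := inv_nonneg.2 (norm_nonneg z)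
  calc |cA α| * ‖z‖⁻¹ * _ ≤ |cA α| * ‖z‖⁻¹ * (1 + |α / (α + 2)|) :=
        mul_le_mul_of_nonneg_left h3 (by positivity)
    _ ≤ _ := by nlinarith

/-- The product field `η v`. -/
def cutf (η : E3 → ℝ) (v : E3 → Fin 3 → ℝ) : E3 → Fin 3 → ℝ := fun z j => η z * v z j

/-- The commutator `L(ηv) - ηLv`. -/
def lameComm (α : ℝ) (η : E3 → ℝ) (v : E3 → Fin 3 → ℝ) (x : E3) (i : Fin 3) : ℝ :=
  - ∑ k, (2 * (pd k η x * pd k (fun z => v z i) x) + pd k (pd k η) x * v x i)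
    - α * (pd i η x * divg v x +
      ∑ k, (pd i (pd k η) x * v x k + pd k η x * pd i (fun z => v z k) x))

lemma lame_cutf (α : ℝ) {η : E3 → ℝ} {v : E3 → Fin 3 → ℝ} (hη : ContDiff ℝ ∞ η)
    (hv : ContDiff ℝ ∞ v) (x : E3) (i : Fin 3) :
    lame α (cutf η v) x i = η x * lame α v x i + lameComm α η v x i := by
  have dη : Differentiable ℝ η := hη.differentiable (by norm_num)
  have dv : ∀ i, Differentiable ℝ (fun z => v z i) :=
    fun i => (comp_contDiff hv i).differentiable (by norm_num)
  have dη1 : ∀ k, Differentiable ℝ (pd k η) := fun k =>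
    (contDiff_pd hη).differentiable (by norm_num)
  have dv1 : ∀ k i, Differentiable ℝ (pd k (fun z => v z i)) :=
    fun k i => (contDiff_pd (comp_contDiff hv i)).differentiable (by norm_num)
  have e1 : ∀ k i, pd k (fun z => cutf η v z i) =
      fun z => η z * pd k (fun z => v z i) z + pd k η z * v z i := fun k i => by
    funext z; exact pd_mul (dη z) (dv i z)
  have ddiv : Differentiable ℝ (divg v) := by
    unfold divg; exact Differentiable.fun_sum (fun k _ => dv1 k k)
  have e2 : divg (cutf η v) = fun z => η z * divg v z + ∑ k, pd k η z * v z k := by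
    funext z
    unfold divg
    simp_rw [e1, Finset.sum_add_distrib, ← Finset.mul_sum]
  have e3 : ∀ k, pd k (pd k (fun z => cutf η v z i)) x =
      η x * pd k (pd k (fun z => v z i)) x + (2 * (pd k η x * pd k (fun z => v z i) x) +
        pd k (pd k η) x * v x i) := by
    intro k
    rw [e1, pd_add ((dη x).fun_mul (dv1 k i x)) ((dη1 k x).fun_mul (dv i x)),
      pd_mul (dη x) (dv1 k i x), pd_mul (dη1 k x) (dv i x)]
    ring
  have e4 : pd i (divg (cutf η v)) x = η x * pd i (divg v) x + (pd i η x * divg v x +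
      ∑ k, (pd i (pd k η) x * v x k + pd k η x * pd i (fun z => v z k) x)) := by
    rw [e2, pd_add ((dη x).fun_mul (ddiv x))
      (DifferentiableAt.fun_sum (fun k _ => (dη1 k x).fun_mul (dv k x))),
      pd_mul (dη x) (ddiv x), pd_sum (fun k _ => (dη1 k x).fun_mul (dv k x))]
    rw [add_assoc]
    congr 2
    refine Finset.sum_congr rfl (fun k _ => ?_)
    rw [pd_mul (dη1 k x) (dv k x)]; ring
  unfold lame lameComm
  rw [e4]
  unfold lap
  simp_rw [e3]
  rw [Finset.sum_add_distrib, ← Finset.mul_sum]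
  ring

set_option maxHeartbeats 2000000 in
/-- The commutator, paired with `Φ(x - y) η v`, costs a small multiple of the gradient term in (QPD)
plus a term of order zero in `v`. The first-order part `Dη · Dv` comes with a factor `η`, and
`η Dv = D(ηv) - v Dη`, so the Young inequality applies to it. -/
lemma exists_comm_bound (α : ℝ) {c₀ : ℝ} (hc₀ : 0 < c₀) : ∃ C₁ : ℝ, 0 < C₁ ∧
    ∀ (η : E3 → ℝ) (v : E3 → Fin 3 → ℝ), ContDiff ℝ ∞ η → ContDiff ℝ ∞ v → (∀ x, 0 ≤ η x) →
    ∀ x y, |∑ i, ∑ j, lameComm α η v x i * Phi α (x - y) i j * cutf η v x j| ≤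
      c₀ / 4 * (gsq (cutf η v) x * ‖x - y‖⁻¹) +
        C₁ * ((∑ i, (pd i η x) ^ 2 + η x * ∑ i, ∑ j, |pd j (pd i η) x|) * ‖x - y‖⁻¹) * nsq v x := by
  obtain ⟨CΦ, hCΦ, hΦ⟩ := exists_Phi_bound α
  set M := 54 * (1 + |α|) * CΦ with hM
  have hMp : 0 < M := by positivity
  -- with this Young parameter the gradient term costs exactly `c₀ / 4`
  set τ := c₀ / (36 * M) with hτ
  have hτp : 0 < τ := by positivity
  refine ⟨M * (9 / (4 * τ) + 9), by positivity, ?_⟩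
  intro η v hη hv hη0 x y
  have hw0 : 0 ≤ ‖x - y‖⁻¹ := by positivity
  set p := ∑ k, |pd k η x| with hp
  set m := ∑ i, ∑ j, |pd j (pd i η) x| with hm
  set n := ∑ j, |v x j| with hn
  set D := ∑ i, ∑ k, |pd k (fun z => v z i) x| with hD
  set W := ∑ i, ∑ k, |pd k (fun z => cutf η v z i) x| with hW
  have hp0 : 0 ≤ p := by positivity
  have hm0 : 0 ≤ m := by positivity
  have hn0 : 0 ≤ n := by positivity
  have hD0 : 0 ≤ D := by positivity
  have hW0 : 0 ≤ W := by positivity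
  have bp : ∀ k, |pd k η x| ≤ p := fun k =>
    Finset.single_le_sum (f := fun k => |pd k η x|) (fun _ _ => abs_nonneg _) (Finset.mem_univ k)
  have bn : ∀ k, |v x k| ≤ n := fun k =>
    Finset.single_le_sum (f := fun k => |v x k|) (fun _ _ => abs_nonneg _) (Finset.mem_univ k)
  have dbl : ∀ (f : Fin 3 → Fin 3 → ℝ) i j, |f i j| ≤ ∑ i, ∑ j, |f i j| := fun f i j =>
    (Finset.single_le_sum (f := fun j => |f i j|) (fun _ _ => abs_nonneg _)
      (Finset.mem_univ j)).trans (Finset.single_le_sum (f := fun i => ∑ j, |f i j|)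
        (fun _ _ => by positivity) (Finset.mem_univ i))
  have bm : ∀ i j, |pd j (pd i η) x| ≤ m := fun i j => dbl (fun i j => pd j (pd i η) x) i j
  have bD : ∀ i k, |pd k (fun z => v z i) x| ≤ D := fun i k =>
    dbl (fun i k => pd k (fun z => v z i) x) i k
  have bdiv : |divg v x| ≤ 3 * D := by
    unfold divg
    refine (Finset.abs_sum_le_sum_abs _ _).trans ?_
    refine (Finset.sum_le_sum (fun k _ => bD k k)).trans ?_
    simp
  have bcomm : ∀ i, |lameComm α η v x i| ≤ 6 * (1 + |α|) * (p * D + m * n) := by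
    intro i
    have q1 : |∑ k, (2 * (pd k η x * pd k (fun z => v z i) x) + pd k (pd k η) x * v x i)| ≤
        3 * (2 * (p * D) + m * n) := by
      refine (Finset.abs_sum_le_sum_abs _ _).trans ?_
      refine (Finset.sum_le_sum (g := fun _ => 2 * (p * D) + m * n) (fun k _ => ?_)).trans ?_
      · refine (abs_add_le _ _).trans ?_
        rw [abs_mul, abs_mul, abs_mul, abs_two]
        gcongr
        exacts [bp k, bD i k, bm k k, bn i]
      · simp; linarith
    have q2 : |∑ k, (pd i (pd k η) x * v x k + pd k η x * pd i (fun z => v z k) x)| ≤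
        3 * (m * n + p * D) := by
      refine (Finset.abs_sum_le_sum_abs _ _).trans ?_
      refine (Finset.sum_le_sum (g := fun _ => m * n + p * D) (fun k _ => ?_)).trans ?_
      · refine (abs_add_le _ _).trans ?_
        rw [abs_mul, abs_mul]
        gcongr
        exacts [bm k i, bn k, bp k, bD k i]
      · simp; linarith
    have q3 : |pd i η x * divg v x| ≤ 3 * (p * D) := by
      rw [abs_mul]
      calc _ ≤ p * (3 * D) := mul_le_mul (bp i) bdiv (abs_nonneg _) hp0
        _ = _ := by ring
    have q4 : |α * (pd i η x * divg v x +
        ∑ k, (pd i (pd k η) x * v x k + pd k η x * pd i (fun z => v z k) x))| ≤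
        |α| * (3 * (p * D) + 3 * (m * n + p * D)) := by
      rw [abs_mul]
      exact mul_le_mul_of_nonneg_left ((abs_add_le _ _).trans (add_le_add q3 q2)) (abs_nonneg _)
    unfold lameComm
    refine (abs_sub _ _).trans ?_
    rw [abs_neg]
    have : 0 ≤ |α| * (m * n) := by positivity
    have : 0 ≤ m * n := by positivity
    nlinarith
  have bw : ∀ j, |cutf η v x j| ≤ η x * n := fun j => by
    unfold cutf
    rw [abs_mul, abs_of_nonneg (hη0 x)]
    exact mul_le_mul_of_nonneg_left (bn j) (hη0 x)
  have s1 : |∑ i, ∑ j, lameComm α η v x i * Phi α (x - y) i j * cutf η v x j| ≤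
      M * ‖x - y‖⁻¹ * ((p * D + m * n) * (η x * n)) := by
    refine (Finset.abs_sum_le_sum_abs _ _).trans ?_
    calc _ ≤ ∑ i : Fin 3, ∑ j : Fin 3,
          6 * (1 + |α|) * (p * D + m * n) * (CΦ * ‖x - y‖⁻¹) * (η x * n) := by
          refine Finset.sum_le_sum (fun i _ => ?_)
          refine (Finset.abs_sum_le_sum_abs _ _).trans (Finset.sum_le_sum (fun j _ => ?_))
          rw [abs_mul, abs_mul]
          have := hη0 x
          gcongr
          exacts [bcomm i, hΦ _ i j, bw j]
      _ = _ := by simp only [Finset.sum_const, Finset.card_univ, Fintype.card_fin, nsmul_eq_mul, hM]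
                  push_cast; ring
  have s2 : η x * D ≤ W + p * n := by
    rw [hD, hW, Finset.mul_sum, hp, hn, Finset.sum_mul_sum, Finset.sum_comm (f := fun i j => |pd i η x| * |v x j|),
      ← Finset.sum_add_distrib]
    refine Finset.sum_le_sum (fun i _ => ?_)
    rw [Finset.mul_sum, ← Finset.sum_add_distrib]
    refine Finset.sum_le_sum (fun k _ => ?_)
    have e : pd k (fun z => cutf η v z i) x = η x * pd k (fun z => v z i) x + pd k η x * v x i :=
      pd_mul (hη.differentiable (by norm_num) x) ((comp_contDiff hv i).differentiable (by norm_num) x)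
    rw [e]
    have h1 : η x * |pd k (fun z => v z i) x| = |η x * pd k (fun z => v z i) x| := by
      rw [abs_mul, abs_of_nonneg (hη0 x)]
    have h2 : |pd k η x| * |v x i| = |pd k η x * v x i| := (abs_mul _ _).symm
    rw [h1, h2]
    have := abs_sub (η x * pd k (fun z => v z i) x + pd k η x * v x i) (pd k η x * v x i)
    rwa [add_sub_cancel_right] at this
  have c3 : ∀ f : Fin 3 → ℝ, (∑ k, |f k|) ^ 2 ≤ 3 * ∑ k, (f k) ^ 2 := fun f => by
    have := sq_sum_le_card_mul_sum_sq (s := Finset.univ) (f := fun k => |f k|)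
    simpa using this
  have hpp : p ^ 2 ≤ 3 * ∑ k, (pd k η x) ^ 2 := c3 _
  have hnn : n ^ 2 ≤ 3 * nsq v x := c3 _
  have hWW : W ^ 2 ≤ 9 * gsq (cutf η v) x := by
    have := sq_sum_le_card_mul_sum_sq (s := Finset.univ)
      (f := fun i => ∑ k, |pd k (fun z => cutf η v z i) x|)
    simp only [Finset.card_univ, Fintype.card_fin] at this
    refine this.trans ?_
    calc ((3:ℕ):ℝ) * ∑ i, (∑ k, |pd k (fun z => cutf η v z i) x|) ^ 2
        ≤ (3:ℕ) * ∑ i, 3 * ∑ k, (pd k (fun z => cutf η v z i) x) ^ 2 := by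
          gcongr with i; exact c3 _
      _ = 9 * gsq (cutf η v) x := by unfold gsq; rw [← Finset.mul_sum]; push_cast; ring
  set Q := ∑ i, (pd i η x) ^ 2 + η x * m with hQ
  have s3 : (p * D + m * n) * (η x * n) ≤
      9 * τ * gsq (cutf η v) x + (9 / (4 * τ) + 9) * Q * nsq v x := by
    have hN0 := nsq_nonneg v x
    have hP0 : 0 ≤ ∑ k, (pd k η x) ^ 2 := by positivity
    have hηm : 0 ≤ η x * m := mul_nonneg (hη0 x) hm0
    have y1 : (p * n) * W ≤ τ * W ^ 2 + (p * n) ^ 2 / (4 * τ) := by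
      have := sq_nonneg (2 * τ * W - p * n)
      have h4 : 0 < 4 * τ := by positivity
      have e : τ * W ^ 2 + (p * n) ^ 2 / (4 * τ) - (p * n) * W =
          (2 * τ * W - p * n) ^ 2 / (4 * τ) := by field_simp; ring
      have : 0 ≤ (2 * τ * W - p * n) ^ 2 / (4 * τ) := by positivity
      linarith
    have y2 : (p * n) ^ 2 ≤ 9 * (∑ k, (pd k η x) ^ 2) * nsq v x := by
      rw [mul_pow]
      calc p ^ 2 * n ^ 2 ≤ (3 * ∑ k, (pd k η x) ^ 2) * (3 * nsq v x) := by gcongr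
        _ = _ := by ring
    have y3 : η x * m * n ^ 2 ≤ 9 * (η x * m) * nsq v x := by nlinarith
    calc (p * D + m * n) * (η x * n) = (p * n) * (η x * D) + η x * m * n ^ 2 := by ring
      _ ≤ (p * n) * (W + p * n) + η x * m * n ^ 2 := by gcongr
      _ = (p * n) * W + (p * n) ^ 2 + η x * m * n ^ 2 := by ring
      _ ≤ τ * W ^ 2 + (p * n) ^ 2 / (4 * τ) + (p * n) ^ 2 + η x * m * n ^ 2 := by gcongr
      _ ≤ τ * (9 * gsq (cutf η v) x) + (9 * (∑ k, (pd k η x) ^ 2) * nsq v x) / (4 * τ) +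
          (9 * (∑ k, (pd k η x) ^ 2) * nsq v x) + 9 * (η x * m) * nsq v x := by gcongr
      _ ≤ _ := by
        have : 0 ≤ 9 / (4 * τ) * (η x * m) * nsq v x := by positivity
        have e : (9 * (∑ k, (pd k η x) ^ 2) * nsq v x) / (4 * τ) =
          9 / (4 * τ) * (∑ k, (pd k η x) ^ 2) * nsq v x := by ring
        rw [hQ, e]; linarith
  refine s1.trans ((mul_le_mul_of_nonneg_left s3 (by positivity)).trans (le_of_eq ?_))
  have : M * (9 * τ) = c₀ / 4 := by rw [hτ]; field_simp; norm_num
  rw [← this]; ring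

/-! ### Weak form and the error term -/

lemma integrable_mul_test {Ω : Set E3} (hΩ : IsOpen Ω) {F g : E3 → ℝ} (hF : ContinuousOn F Ω)
    (hg : Continuous g) (hc : HasCompactSupport g) (hs : tsupport g ⊆ Ω) :
    Integrable (fun x => F x * g x) := by
  have hsub : tsupport (fun x => F x * g x) ⊆ tsupport g := tsupport_mul_subset_right
  refine Continuous.integrable_of_hasCompactSupport ?_ (hc.mono' (subset_tsupport _ |>.trans hsub))
  exact ContinuousOn.continuous_of_tsupport_subset (hF.mul hg.continuousOn) hΩ (hsub.trans hs)

lemma integral_pd_mul {Ω : Set E3} (hΩ : IsOpen Ω) {F g : E3 → ℝ} (hF : ContDiffOn ℝ ∞ F Ω)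
    (hg : ContDiff ℝ ∞ g) (hc : HasCompactSupport g) (hs : tsupport g ⊆ Ω) (k : Fin 3) :
    ∫ x, pd k F x * g x = - ∫ x, F x * pd k g x := by
  have h1 := integrable_mul_test hΩ (contDiffOn_pd (i := k) hΩ hF).continuousOn hg.continuous hc hs
  have h2 := integrable_mul_test hΩ hF.continuousOn (contDiff_pd (i := k) hg).continuous
    (hasCompactSupport_pd hc) (tsupport_pd_subset.trans hs)
  have h3 := integrable_mul_test hΩ hF.continuousOn hg.continuous hc hs
  have := integral_mul_fderiv_eq_neg_fderiv_mul_of_integrable (μ := volume) (f := F) (g := g)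
    (v := EuclideanSpace.single k 1) h1 h2 h3
    (fun x hx => (hF.contDiffAt (hΩ.mem_nhds (hs hx))).differentiableAt (by norm_num))
    (fun x _ => hg.differentiable (by norm_num) x)
  simp only [pd]
  rw [this, neg_neg]

/-- The integrand of the bilinear form of the Lamé operator. -/
def lameForm (α : ℝ) (f ψ : E3 → Fin 3 → ℝ) (x : E3) : ℝ :=
  ∑ i, (∑ k, pd k (fun z => f z i) x * pd k (fun z => ψ z i) x +
    α * (divg f x * pd i (fun z => ψ z i) x))

/-- Integration by parts for the Lamé operator; `f` need only be smooth on `Ω`, since `ψ` is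
supported there. -/
lemma lame_weak_form (α : ℝ) {Ω : Set E3} (hΩ : IsOpen Ω) {f ψ : E3 → Fin 3 → ℝ}
    (hf : ContDiffOn ℝ ∞ f Ω) (hψ : IsTestOn Ω ψ) :
    Integrable (lameForm α f ψ) ∧
      ∫ x, ∑ i, lame α f x i * ψ x i = ∫ x, lameForm α f ψ x := by
  obtain ⟨hψ1, hψ2, hψ3⟩ := hψ
  have f1 : ∀ k i, ContDiffOn ℝ ∞ (pd k (fun z => f z i)) Ω := fun k i =>
    contDiffOn_pd hΩ (comp_contDiffOn hf i)
  have f2 : ∀ l k i, ContDiffOn ℝ ∞ (pd l (pd k (fun z => f z i))) Ω := fun l k i =>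
    contDiffOn_pd hΩ (f1 k i)
  have fd : ContDiffOn ℝ ∞ (divg f) Ω := ContDiffOn.sum (fun k _ => f1 k k)
  have g0 : ∀ i, ContDiff ℝ ∞ (fun z => ψ z i) := comp_contDiff hψ1
  have g0c : ∀ i, HasCompactSupport (fun z => ψ z i) := comp_hasCompactSupport hψ2
  have g0s : ∀ i, tsupport (fun z => ψ z i) ⊆ Ω := fun i => (comp_tsupport i).trans hψ3
  have I1 : ∀ k i, Integrable (fun x => pd k (fun z => f z i) x * pd k (fun z => ψ z i) x) :=
    fun k i => integrable_mul_test hΩ (f1 k i).continuousOn (contDiff_pd (g0 i)).continuous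
      (hasCompactSupport_pd (g0c i)) (tsupport_pd_subset.trans (g0s i))
  have I2 : ∀ i, Integrable (fun x => α * (divg f x * pd i (fun z => ψ z i) x)) :=
    fun i => (integrable_mul_test hΩ fd.continuousOn (contDiff_pd (g0 i)).continuous
      (hasCompactSupport_pd (g0c i)) (tsupport_pd_subset.trans (g0s i))).const_mul α
  have J1 : ∀ k i, Integrable (fun x => pd k (pd k (fun z => f z i)) x * ψ x i) :=
    fun k i => integrable_mul_test hΩ (f2 k k i).continuousOn (g0 i).continuous (g0c i) (g0s i)
  have J2 : ∀ i, Integrable (fun x => α * (pd i (divg f) x * ψ x i)) :=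
    fun i => (integrable_mul_test hΩ (contDiffOn_pd hΩ fd).continuousOn (g0 i).continuous
      (g0c i) (g0s i)).const_mul α
  have I3 : ∀ i, Integrable (fun x => ∑ k, pd k (fun z => f z i) x * pd k (fun z => ψ z i) x) :=
    fun i => integrable_finsetSum _ (fun k _ => I1 k i)
  have J3 : ∀ i, Integrable (fun x => ∑ k, pd k (pd k (fun z => f z i)) x * ψ x i) :=
    fun i => integrable_finsetSum _ (fun k _ => J1 k i)
  have e : ∀ x i, lame α f x i * ψ x i =
      - (∑ k, pd k (pd k (fun z => f z i)) x * ψ x i) - α * (pd i (divg f) x * ψ x i) := by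
    intro x i
    unfold lame lap
    rw [← Finset.sum_mul]; ring
  constructor
  · exact integrable_finsetSum _ (fun i _ => (I3 i).add (I2 i))
  · simp_rw [e]
    unfold lameForm
    have J4 : ∀ i, Integrable (fun x => -∑ k, pd k (pd k (fun z => f z i)) x * ψ x i) :=
      fun i => (J3 i).neg
    have J5 : ∀ i, Integrable (fun x => -(∑ k, pd k (pd k (fun z => f z i)) x * ψ x i) -
      α * (pd i (divg f) x * ψ x i)) := fun i => (J4 i).sub (J2 i)
    have I5 : ∀ i, Integrable (fun x =>
      ∑ k, pd k (fun z => f z i) x * pd k (fun z => ψ z i) x +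
        α * (divg f x * pd i (fun z => ψ z i) x)) := fun i => (I3 i).add (I2 i)
    rw [integral_finsetSum _ (fun i _ => J5 i), integral_finsetSum _ (fun i _ => I5 i)]
    refine Finset.sum_congr rfl (fun i _ => ?_)
    rw [integral_sub (J4 i) (J2 i), integral_add (I3 i) (I2 i), integral_neg,
      integral_finsetSum _ (fun k _ => J1 k i), integral_finsetSum _ (fun k _ => I1 k i),
      integral_const_mul, integral_const_mul,
      integral_pd_mul hΩ fd (g0 i) (g0c i) (g0s i) i]
    have : ∀ k, ∫ x, pd k (pd k (fun z => f z i)) x * ψ x i =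
        - ∫ x, pd k (fun z => f z i) x * pd k (fun z => ψ z i) x := fun k =>
      integral_pd_mul hΩ (f1 k i) (g0 i) (g0c i) (g0s i) k
    simp_rw [this, Finset.sum_neg_distrib]
    ring

lemma contDiffAt_Phi (α : ℝ) {z : E3} (hz : z ≠ 0) (i j : Fin 3) :
    ContDiffAt ℝ ∞ (fun z => Phi α z i j) z := by
  unfold Phi
  have hn : ContDiffAt ℝ ∞ (fun z : E3 => ‖z‖) z := contDiffAt_norm ℝ hz
  have hn0 : ‖z‖ ≠ 0 := norm_ne_zero_iff.2 hz
  have hc : ∀ i : Fin 3, ContDiffAt ℝ ∞ (fun z : E3 => z i) z := fun i =>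
    (EuclideanSpace.proj (𝕜 := ℝ) i).contDiff.contDiffAt
  exact (contDiffAt_const.mul (hn.inv hn0)).mul (contDiffAt_const.add
    ((contDiffAt_const.mul ((hc i).mul (hc j))).div (hn.pow 2) (pow_ne_zero 2 hn0)))

lemma lame_congr {α : ℝ} {f g : E3 → Fin 3 → ℝ} {x : E3} (h : f =ᶠ[𝓝 x] g) (i : Fin 3) :
    lame α f x i = lame α g x i := by
  have hi : ∀ i, (fun z => f z i) =ᶠ[𝓝 x] (fun z => g z i) := fun i => by
    filter_upwards [h] with z hz using by rw [hz]
  have h1 : ∀ k i, pd k (fun z => f z i) =ᶠ[𝓝 x] pd k (fun z => g z i) := fun k i => by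
    filter_upwards [(hi i).eventuallyEq_nhds] with z hz using pd_congr hz
  have hd : divg f =ᶠ[𝓝 x] divg g := by
    have : ∀ᶠ z in 𝓝 x, ∀ k, pd k (fun z => f z k) z = pd k (fun z => g z k) z :=
      eventually_all.2 (fun k => h1 k k)
    filter_upwards [this] with z hz
    unfold divg
    exact Finset.sum_congr rfl (fun k _ => hz k)
  unfold lame lap
  rw [pd_congr hd]
  congr 2
  exact Finset.sum_congr rfl (fun k _ => pd_congr (h1 k i))

/-- The difference field `u - v`. -/
def dif (u v : E3 → Fin 3 → ℝ) : E3 → Fin 3 → ℝ := fun z i => u z i - v z i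

/-- `∫ η² (Lv)·(Φ(·-y) v)`, the part of the energy of `ηv` in which `L` falls on `v`. -/
def errE (α : ℝ) (η : E3 → ℝ) (v : E3 → Fin 3 → ℝ) (y : E3) : ℝ :=
  ∫ x, ∑ i, ∑ j, (η x * lame α v x i) * Phi α (x - y) i j * cutf η v x j

lemma abs_mul_young {a b τ : ℝ} (hτ : 0 < τ) : |a * b| ≤ τ⁻¹ * a ^ 2 + τ * b ^ 2 := by
  have e1 : τ⁻¹ * a ^ 2 + τ * b ^ 2 - a * b = τ⁻¹ * ((a - τ * b / 2) ^ 2 + 3 / 4 * (τ * b) ^ 2) := by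
    field_simp; ring
  have e2 : τ⁻¹ * a ^ 2 + τ * b ^ 2 + a * b = τ⁻¹ * ((a + τ * b / 2) ^ 2 + 3 / 4 * (τ * b) ^ 2) := by
    field_simp; ring
  have h1 : 0 ≤ τ⁻¹ * ((a - τ * b / 2) ^ 2 + 3 / 4 * (τ * b) ^ 2) := by positivity
  have h2 : 0 ≤ τ⁻¹ * ((a + τ * b / 2) ^ 2 + 3 / 4 * (τ * b) ^ 2) := by positivity
  rw [abs_le]; constructor <;> linarith

lemma sq_le_gsq (v : E3 → Fin 3 → ℝ) (x : E3) (i k : Fin 3) :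
    (pd k (fun z => v z i) x) ^ 2 ≤ gsq v x := by
  unfold gsq
  exact (Finset.single_le_sum (f := fun k => (pd k (fun z => v z i) x) ^ 2)
    (fun _ _ => sq_nonneg _) (Finset.mem_univ k)).trans
    (Finset.single_le_sum (f := fun i => ∑ k, (pd k (fun z => v z i) x) ^ 2)
      (fun _ _ => by positivity) (Finset.mem_univ i))

lemma sq_le_nsq (v : E3 → Fin 3 → ℝ) (x : E3) (i : Fin 3) : (v x i) ^ 2 ≤ nsq v x :=
  Finset.single_le_sum (f := fun i => (v x i) ^ 2) (fun _ _ => sq_nonneg _) (Finset.mem_univ i)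

set_option maxHeartbeats 2000000 in
/-- The error term is small when `v` is close to `u`: since `Lu = 0` on the support of `η`, one may
replace `Lv` by `L(v - u)` and integrate by parts against `η² (1 - b) Φ(·-y) v`. The free parameter
`τ` comes from the Young inequality. -/
lemma errE_bound (α : ℝ) {Ω : Set E3} (hΩ : IsOpen Ω) {R : ℝ} {u : E3 → Fin 3 → ℝ}
    (hu : ContDiffOn ℝ ∞ u Ω) (hLu : ∀ x ∈ Ω ∩ ball (0 : E3) (2 * R), ∀ i, lame α u x i = 0)
    {η : E3 → ℝ} (hη : ContDiff ℝ ∞ η) (hηc : HasCompactSupport η)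
    (hηs : tsupport η ⊆ ball 0 (2 * R)) (y : E3) {d : ℝ} (hd : 0 < d) :
    ∃ C : ℝ, 0 ≤ C ∧ ∀ v, IsTestOn Ω v → (∀ x ∈ Ω, dist x y < d → v x = u x) →
      IntegrableOn (gsq (dif u v)) Ω → ∀ τ > 0,
      |errE α η v y| ≤ C * (τ⁻¹ * (∫ x in Ω, gsq (dif u v) x) +
        τ * ∫ x in Ω, (nsq v x + gsq v x)) := by
  -- near `y` the field `Lv = Lu` vanishes, so `Φ(·-y)` may be cut off there
  let b : ContDiffBump y := ⟨d / 2, d, by positivity, by linarith⟩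
  set A : Fin 3 → Fin 3 → E3 → ℝ := fun i j x => η x * η x * ((1 - b x) * Phi α (x - y) i j) with hA
  have hAs : ∀ i j, ContDiff ℝ ∞ (A i j) := by
    intro i j
    rw [contDiff_iff_contDiffAt]
    intro x
    refine (hη.contDiffAt.mul hη.contDiffAt).mul ?_
    by_cases hx : x = y
    · have : (fun x => (1 - b x) * Phi α (x - y) i j) =ᶠ[𝓝 x] fun _ => 0 := by
        rw [hx]
        filter_upwards [b.eventuallyEq_one] with z hz
        rw [hz]; simp
      exact contDiffAt_const.congr_of_eventuallyEq this
    · have h1 : ContDiffAt ℝ ∞ (fun x => Phi α (x - y) i j) x :=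
        ContDiffAt.comp (g := fun z => Phi α z i j) (f := fun x => x - y) x
          (contDiffAt_Phi α (sub_ne_zero.2 hx) i j) (by fun_prop)
      exact (contDiffAt_const.sub b.contDiffAt).mul h1
  have hAc : ∀ i j, HasCompactSupport (A i j) := fun i j => (hηc.mul_left.mul_right)
  have hbd : ∃ K : ℝ, 0 ≤ K ∧ ∀ i j x, (A i j x) ^ 2 ≤ K ∧ ∀ k, (pd k (A i j) x) ^ 2 ≤ K := by
    set F : E3 → ℝ := fun x => ∑ i, ∑ j, ((A i j x) ^ 2 + ∑ k, (pd k (A i j) x) ^ 2) with hF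
    have hFc : Continuous F := by
      refine continuous_finsetSum _ (fun i _ => continuous_finsetSum _ (fun j _ => ?_))
      exact ((hAs i j).continuous.pow 2).add (continuous_finsetSum _ (fun k _ =>
        (contDiff_pd (hAs i j)).continuous.pow 2))
    have hFs : HasCompactSupport F := by
      refine HasCompactSupport.intro hηc (fun x hx => ?_)
      refine Finset.sum_eq_zero (fun i _ => Finset.sum_eq_zero (fun j _ => ?_))
      have hx' : x ∉ tsupport (A i j) := fun h => hx
        (tsupport_mul_subset_left (tsupport_mul_subset_left h))
      rw [image_eq_zero_of_notMem_tsupport hx']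
      simp_rw [pd_eq_zero_of_notMem hx']
      simp
    obtain ⟨K, hK⟩ := hFc.bounded_above_of_compact_support hFs
    have h0 : ∀ x, 0 ≤ F x := fun x => by simp only [hF]; positivity
    have hK' : ∀ x, F x ≤ K := fun x => (le_abs_self _).trans (hK x)
    refine ⟨K, (h0 0).trans (hK' 0), fun i j x => ?_⟩
    have h1 : (A i j x) ^ 2 + ∑ k, (pd k (A i j) x) ^ 2 ≤ K := by
      refine le_trans ?_ (hK' x)
      exact (Finset.single_le_sum (f := fun j => (A i j x) ^ 2 + ∑ k, (pd k (A i j) x) ^ 2)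
        (fun _ _ => by positivity) (Finset.mem_univ j)).trans
        (Finset.single_le_sum (f := fun i => ∑ j, ((A i j x) ^ 2 + ∑ k, (pd k (A i j) x) ^ 2))
          (fun _ _ => by positivity) (Finset.mem_univ i))
    refine ⟨le_trans (le_add_of_nonneg_right (by positivity)) h1, fun k => ?_⟩
    have h2 := Finset.single_le_sum (f := fun k => (pd k (A i j) x) ^ 2)
        (fun _ _ => sq_nonneg _) (Finset.mem_univ k)
    have := sq_nonneg (A i j x)
    linarith
  obtain ⟨K, hK0, hK⟩ := hbd
  refine ⟨(9 + 9 * |α|) * (1 + 18 * K), by positivity, ?_⟩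
  intro v hv hvu hint τ hτ
  obtain ⟨hv1, hv2, hv3⟩ := hv
  set ψ : E3 → Fin 3 → ℝ := fun x i => ∑ j, A i j x * v x j with hψ
  have hψs : ContDiff ℝ ∞ ψ := contDiff_pi.2 (fun i => ContDiff.sum (fun j _ =>
    (hAs i j).mul (comp_contDiff hv1 j)))
  have hψz : ∀ x, x ∉ tsupport v → ψ x = 0 := fun x hx => by
    funext i; simp [hψ, image_eq_zero_of_notMem_tsupport hx]
  have hψt : tsupport ψ ⊆ tsupport v := by
    refine closure_minimal (fun x hx => ?_) (isClosed_tsupport v)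
    by_contra h
    exact hx (hψz x h)
  have hψT : IsTestOn Ω ψ := ⟨hψs, HasCompactSupport.intro hv2 hψz, hψt.trans hv3⟩
  have hηz : ∀ x, x ∉ ball (0:E3) (2 * R) → η x = 0 := fun x hx =>
    image_eq_zero_of_notMem_tsupport (fun h => hx (hηs h))
  have e1 : errE α η v y = ∫ x, ∑ i, lame α v x i * ψ x i := by
    unfold errE
    congr 1
    funext x
    refine Finset.sum_congr rfl (fun i _ => ?_)
    rw [hψ, Finset.mul_sum]
    refine Finset.sum_congr rfl (fun j _ => ?_)
    simp only [hA, cutf]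
    by_cases hxv : x ∈ tsupport v
    · by_cases hxR : x ∈ ball (0:E3) (2 * R)
      · by_cases hxd : dist x y < d
        · have hL : lame α v x i = 0 := by
            rw [← hLu x ⟨hv3 hxv, hxR⟩ i]
            refine lame_congr ?_ i
            filter_upwards [hΩ.mem_nhds (hv3 hxv), isOpen_ball.mem_nhds (mem_ball.2 hxd)] with z h1 h2
            exact hvu z h1 h2
          rw [hL]; simp
        · have : b x = 0 := b.zero_of_le_dist (not_lt.1 hxd)
          rw [this]; ring
      · rw [hηz x hxR]; simp
    · rw [image_eq_zero_of_notMem_tsupport hxv]; simp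
  have e2 : ∫ x, ∑ i, lame α u x i * ψ x i = 0 := by
    rw [← integral_zero (α := E3) (G := ℝ) (μ := volume)]
    congr 1
    funext x
    refine Finset.sum_eq_zero (fun i _ => ?_)
    by_cases hxv : x ∈ tsupport v
    · by_cases hxR : x ∈ ball (0:E3) (2 * R)
      · rw [hLu x ⟨hv3 hxv, hxR⟩ i, zero_mul]
      · have : ψ x i = 0 := Finset.sum_eq_zero (fun j _ => by simp [hA, hηz x hxR])
        rw [this, mul_zero]
    · rw [hψz x hxv]; simp
  obtain ⟨Iu, wu⟩ := lame_weak_form α hΩ hu hψT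
  obtain ⟨Iv, wv⟩ := lame_weak_form α hΩ hv1.contDiffOn hψT
  have e3 : errE α η v y = - ∫ x, (lameForm α u ψ x - lameForm α v ψ x) := by
    rw [integral_sub Iu Iv, ← wu, ← wv, e2, e1]; ring
  have hout : ∀ x, x ∉ Ω → lameForm α u ψ x - lameForm α v ψ x = 0 := by
    intro x hx
    have : ∀ k i, pd k (fun z => ψ z i) x = 0 := fun k i =>
      pd_eq_zero_of_notMem (fun h => hx (hψT.2.2 (comp_tsupport i h)))
    unfold lameForm; simp [this]
  have hψb : ∀ x i k, (pd k (fun z => ψ z i) x) ^ 2 ≤ 18 * K * (nsq v x + gsq v x) := by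
    intro x i k
    have hd1 : ∀ j, DifferentiableAt ℝ (A i j) x := fun j =>
      (hAs i j).differentiable (by norm_num) x
    have hd2 : ∀ j, DifferentiableAt ℝ (fun z => v z j) x := fun j =>
      (comp_contDiff hv1 j).differentiable (by norm_num) x
    have : pd k (fun z => ψ z i) x =
        ∑ j, (A i j x * pd k (fun z => v z j) x + pd k (A i j) x * v x j) := by
      simp only [hψ]
      rw [pd_sum (fun j _ => (hd1 j).fun_mul (hd2 j))]
      exact Finset.sum_congr rfl (fun j _ => pd_mul (hd1 j) (hd2 j))
    rw [this]
    refine (sq_sum_le_card_mul_sum_sq (s := Finset.univ)).trans ?_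
    calc _ ≤ ((Finset.univ : Finset (Fin 3)).card : ℝ) *
          ∑ j : Fin 3, 2 * K * (nsq v x + gsq v x) := by
          gcongr with j
          have h1 := mul_le_mul (hK i j x).1 (sq_le_gsq v x j k) (sq_nonneg _) hK0
          have h2 := mul_le_mul ((hK i j x).2 k) (sq_le_nsq v x j) (sq_nonneg _) hK0
          nlinarith [sq_nonneg (A i j x * pd k (fun z => v z j) x - pd k (A i j) x * v x j)]
      _ = _ := by simp; ring
  have hpt : ∀ x ∈ Ω, ‖lameForm α u ψ x - lameForm α v ψ x‖ ≤
      (9 + 9 * |α|) * (1 + 18 * K) * (τ⁻¹ * gsq (dif u v) x + τ * (nsq v x + gsq v x)) := by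
    intro x hx
    set T := τ⁻¹ * gsq (dif u v) x + τ * (18 * K * (nsq v x + gsq v x)) with hT
    have hq : ∀ k i, pd k (fun z => u z i) x - pd k (fun z => v z i) x =
        pd k (fun z => dif u v z i) x := fun k i =>
      (pd_sub (((comp_contDiffOn hu i).contDiffAt (hΩ.mem_nhds hx)).differentiableAt (by norm_num))
        ((comp_contDiff hv1 i).differentiable (by norm_num) x)).symm
    have hterm : ∀ k i l j, |pd k (fun z => dif u v z i) x * pd l (fun z => ψ z j) x| ≤ T := by
      intro k i l j
      refine (abs_mul_young hτ).trans ?_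
      rw [hT]
      gcongr
      · exact sq_le_gsq _ x i k
      · exact hψb x j l
    have hexp : lameForm α u ψ x - lameForm α v ψ x =
        ∑ i, (∑ k, pd k (fun z => dif u v z i) x * pd k (fun z => ψ z i) x +
          α * ∑ k, pd k (fun z => dif u v z k) x * pd i (fun z => ψ z i) x) := by
      unfold lameForm divg
      rw [← Finset.sum_sub_distrib]
      refine Finset.sum_congr rfl (fun i _ => ?_)
      simp_rw [← hq, sub_mul, Finset.sum_sub_distrib, ← Finset.sum_mul]
      ring
    have hT0 : 0 ≤ T := (abs_nonneg _).trans (hterm 0 0 0 0)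
    rw [hexp, Real.norm_eq_abs]
    refine (Finset.abs_sum_le_sum_abs _ _).trans ?_
    calc _ ≤ ∑ i : Fin 3, (3 * T + |α| * (3 * T)) := by
          refine Finset.sum_le_sum (fun i _ => (abs_add_le _ _).trans (add_le_add ?_ ?_))
          · refine (Finset.abs_sum_le_sum_abs _ _).trans ?_
            refine (Finset.sum_le_sum (fun k _ => hterm k i k i)).trans ?_
            simp
          · rw [abs_mul]
            refine mul_le_mul_of_nonneg_left ?_ (abs_nonneg _)
            refine (Finset.abs_sum_le_sum_abs _ _).trans ?_
            refine (Finset.sum_le_sum (fun k _ => hterm k k i i)).trans ?_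
            simp
      _ = (9 + 9 * |α|) * T := by simp; ring
      _ ≤ _ := by
        rw [mul_assoc]
        refine mul_le_mul_of_nonneg_left ?_ (by positivity)
        have h1 : 0 ≤ τ⁻¹ * gsq (dif u v) x := mul_nonneg (by positivity) (gsq_nonneg _ _)
        have h2 : 0 ≤ τ * (nsq v x + gsq v x) :=
          mul_nonneg hτ.le (add_nonneg (nsq_nonneg _ _) (gsq_nonneg _ _))
        rw [hT]
        nlinarith [mul_nonneg hK0 h1]
  have hIv : IntegrableOn (fun x => nsq v x + gsq v x) Ω := by
    refine Integrable.integrableOn ?_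
    exact ((continuous_nsq hv1).integrable_of_hasCompactSupport (hasCompactSupport_nsq hv2)).add
      ((continuous_gsq hv1).integrable_of_hasCompactSupport (hasCompactSupport_gsq hv2))
  rw [e3, abs_neg, ← setIntegral_eq_integral_of_forall_compl_eq_zero hout, ← Real.norm_eq_abs]
  refine (norm_integral_le_of_norm_le ((((hint.const_mul τ⁻¹).add (hIv.const_mul τ))).const_mul
    ((9 + 9 * |α|) * (1 + 18 * K))) ((ae_restrict_iff' hΩ.measurableSet).2
      (Eventually.of_forall hpt))).trans (le_of_eq ?_)
  rw [integral_const_mul]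
  congr 1
  rw [← integral_const_mul, ← integral_const_mul]
  exact integral_add (hint.const_mul τ⁻¹) (hIv.const_mul τ)

/-! ### Approximation by test fields -/

lemma nsq_le_two (u v : E3 → Fin 3 → ℝ) (x : E3) :
    nsq u x ≤ 2 * nsq v x + 2 * nsq (dif u v) x ∧
    nsq v x ≤ 2 * nsq u x + 2 * nsq (dif u v) x ∧
    nsq (dif u v) x ≤ 2 * nsq u x + 2 * nsq v x := by
  simp only [nsq, dif, Finset.mul_sum, ← Finset.sum_add_distrib]
  refine ⟨Finset.sum_le_sum fun i _ => ?_, Finset.sum_le_sum fun i _ => ?_,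
    Finset.sum_le_sum fun i _ => ?_⟩
  · nlinarith [sq_nonneg (u x i - 2 * v x i)]
  · nlinarith [sq_nonneg (v x i - 2 * u x i)]
  · nlinarith [sq_nonneg (u x i + v x i)]

lemma gsq_le_two {u v : E3 → Fin 3 → ℝ} {x : E3}
    (hu : ∀ i, DifferentiableAt ℝ (fun z => u z i) x)
    (hv : ∀ i, DifferentiableAt ℝ (fun z => v z i) x) :
    gsq u x ≤ 2 * gsq v x + 2 * gsq (dif u v) x ∧
    gsq v x ≤ 2 * gsq u x + 2 * gsq (dif u v) x ∧
    gsq (dif u v) x ≤ 2 * gsq u x + 2 * gsq v x := by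
  have h : ∀ i k, pd k (fun z => dif u v z i) x =
      pd k (fun z => u z i) x - pd k (fun z => v z i) x := fun i k => pd_sub (hu i) (hv i)
  simp only [gsq, h, Finset.mul_sum, ← Finset.sum_add_distrib]
  refine ⟨Finset.sum_le_sum fun i _ => Finset.sum_le_sum fun k _ => ?_,
    Finset.sum_le_sum fun i _ => Finset.sum_le_sum fun k _ => ?_,
    Finset.sum_le_sum fun i _ => Finset.sum_le_sum fun k _ => ?_⟩
  · nlinarith [sq_nonneg (pd k (fun z => u z i) x - 2 * pd k (fun z => v z i) x)]
  · nlinarith [sq_nonneg (pd k (fun z => v z i) x - 2 * pd k (fun z => u z i) x)]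
  · nlinarith [sq_nonneg (pd k (fun z => u z i) x + pd k (fun z => v z i) x)]

lemma continuousOn_nsq {Ω : Set E3} {u : E3 → Fin 3 → ℝ} (hu : ContDiffOn ℝ ∞ u Ω) :
    ContinuousOn (nsq u) Ω := by
  unfold nsq
  exact continuousOn_finsetSum _ (fun i _ => (comp_contDiffOn hu i).continuousOn.pow 2)

lemma continuousOn_gsq {Ω : Set E3} (hΩ : IsOpen Ω) {u : E3 → Fin 3 → ℝ}
    (hu : ContDiffOn ℝ ∞ u Ω) : ContinuousOn (gsq u) Ω := by
  unfold gsq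
  exact continuousOn_finsetSum _ (fun i _ => continuousOn_finsetSum _ (fun k _ =>
    (contDiffOn_pd hΩ (comp_contDiffOn hu i)).continuousOn.pow 2))

lemma contDiffOn_dif {Ω : Set E3} {u v : E3 → Fin 3 → ℝ} (hu : ContDiffOn ℝ ∞ u Ω)
    (hv : ContDiff ℝ ∞ v) : ContDiffOn ℝ ∞ (dif u v) Ω :=
  contDiffOn_pi.2 fun i => (comp_contDiffOn hu i).sub (comp_contDiff hv i).contDiffOn

lemma integrable_nsq {v : E3 → Fin 3 → ℝ} (hv : ContDiff ℝ ∞ v) (hc : HasCompactSupport v) :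
    Integrable (nsq v) :=
  (continuous_nsq hv).integrable_of_hasCompactSupport (hasCompactSupport_nsq hc)

lemma integrable_gsq {v : E3 → Fin 3 → ℝ} (hv : ContDiff ℝ ∞ v) (hc : HasCompactSupport v) :
    Integrable (gsq v) :=
  (continuous_gsq hv).integrable_of_hasCompactSupport (hasCompactSupport_gsq hc)

lemma diffAt_comp {Ω : Set E3} (hΩ : IsOpen Ω) {u : E3 → Fin 3 → ℝ} (hu : ContDiffOn ℝ ∞ u Ω)
    {x : E3} (hx : x ∈ Ω) (i : Fin 3) : DifferentiableAt ℝ (fun z => u z i) x :=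
  ((comp_contDiffOn hu i).contDiffAt (hΩ.mem_nhds hx)).differentiableAt (by norm_num)

lemma integrableOn_parts {Ω : Set E3} (hΩ : IsOpen Ω) {u : E3 → Fin 3 → ℝ}
    (hu : ContDiffOn ℝ ∞ u Ω) (hi : IntegrableOn (fun x => nsq u x + gsq u x) Ω) :
    IntegrableOn (nsq u) Ω ∧ IntegrableOn (gsq u) Ω := by
  constructor
  · refine hi.mono' ((continuousOn_nsq hu).aestronglyMeasurable hΩ.measurableSet) ?_
    refine Eventually.of_forall fun x => ?_
    rw [Real.norm_of_nonneg (nsq_nonneg _ _)]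
    linarith [gsq_nonneg u x]
  · refine hi.mono' ((continuousOn_gsq hΩ hu).aestronglyMeasurable hΩ.measurableSet) ?_
    refine Eventually.of_forall fun x => ?_
    rw [Real.norm_of_nonneg (gsq_nonneg _ _)]
    linarith [nsq_nonneg u x]

lemma integrableOn_dif {Ω : Set E3} (hΩ : IsOpen Ω) {u v : E3 → Fin 3 → ℝ}
    (hu : ContDiffOn ℝ ∞ u Ω) (hi : IntegrableOn (fun x => nsq u x + gsq u x) Ω)
    (hv : IsTestOn Ω v) :
    IntegrableOn (fun x => nsq (dif u v) x + gsq (dif u v) x) Ω := by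
  obtain ⟨hv1, hv2, -⟩ := hv
  have hd := contDiffOn_dif hu hv1
  have hiv : IntegrableOn (fun x => nsq v x + gsq v x) Ω :=
    ((integrable_nsq hv1 hv2).add (integrable_gsq hv1 hv2)).integrableOn
  refine ((hi.const_mul 2).add (hiv.const_mul 2)).mono'
    (((continuousOn_nsq hd).add (continuousOn_gsq hΩ hd)).aestronglyMeasurable hΩ.measurableSet)
    ((ae_restrict_iff' hΩ.measurableSet).2 (Eventually.of_forall fun x hx => ?_))
  rw [Real.norm_of_nonneg (add_nonneg (nsq_nonneg _ _) (gsq_nonneg _ _))]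
  have h1 := (nsq_le_two u v x).2.2
  have h2 := (gsq_le_two (u := u) (v := v) (fun i => diffAt_comp hΩ hu hx i)
    (fun i => (comp_contDiff hv1 i).differentiable (by norm_num) x)).2.2
  simp only [Pi.add_apply]
  linarith

/-- Localising a field costs at most a constant factor in the pointwise `H¹` density. -/
lemma cutf_density {ψ : E3 → ℝ} {q : E3 → Fin 3 → ℝ} {x : E3} {K : ℝ}
    (hψ : DifferentiableAt ℝ ψ x) (hq : ∀ i, DifferentiableAt ℝ (fun z => q z i) x)
    (h0 : ψ x ^ 2 ≤ K) (h1 : ∀ k, pd k ψ x ^ 2 ≤ K) :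
    nsq (cutf ψ q) x + gsq (cutf ψ q) x ≤ 7 * K * (nsq q x + gsq q x) := by
  have hK : 0 ≤ K := (sq_nonneg _).trans h0
  have e1 : nsq (cutf ψ q) x ≤ K * nsq q x := by
    simp only [nsq, cutf, Finset.mul_sum, mul_pow]
    gcongr
  have e2 : gsq (cutf ψ q) x ≤ ∑ i : Fin 3, ∑ k : Fin 3,
      (2 * K * (pd k (fun z => q z i) x) ^ 2 + 2 * K * (q x i) ^ 2) := by
    refine Finset.sum_le_sum fun i _ => Finset.sum_le_sum fun k _ => ?_
    have : pd k (fun z => cutf ψ q z i) x = ψ x * pd k (fun z => q z i) x + pd k ψ x * q x i :=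
      pd_mul hψ (hq i)
    rw [this]
    have a1 := mul_le_mul_of_nonneg_right h0 (sq_nonneg (pd k (fun z => q z i) x))
    have a2 := mul_le_mul_of_nonneg_right (h1 k) (sq_nonneg (q x i))
    nlinarith [sq_nonneg (ψ x * pd k (fun z => q z i) x - pd k ψ x * q x i)]
  have e3 : ∑ i : Fin 3, ∑ k : Fin 3,
      (2 * K * (pd k (fun z => q z i) x) ^ 2 + 2 * K * (q x i) ^ 2) =
      2 * K * gsq q x + 6 * K * nsq q x := by
    simp only [gsq, nsq, Finset.sum_add_distrib, Finset.mul_sum, Finset.sum_const,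
      Finset.card_univ, Fintype.card_fin, nsmul_eq_mul]
    congr 1
    refine Finset.sum_congr rfl fun i _ => ?_
    push_cast; ring
  rw [e3] at e2
  have := mul_nonneg hK (gsq_nonneg q x)
  nlinarith

/-- A field in `H̊¹(Ω)` is approximated by test fields which agree with it near a prescribed
point off the boundary of `Ω`. -/
lemma exists_approx {Ω : Set E3} (hΩ : IsOpen Ω) {u : E3 → Fin 3 → ℝ} (hu : MemH10 Ω u)
    {y : E3} (hy : y ∉ frontier Ω) :
    ∃ d, 0 < d ∧ ∃ v : ℕ → E3 → Fin 3 → ℝ, (∀ n, IsTestOn Ω (v n)) ∧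
      (∀ n, ∀ x ∈ Ω, dist x y < d → v n x = u x) ∧
      Tendsto (fun n => ∫ x in Ω, (nsq (dif u (v n)) x + gsq (dif u (v n)) x)) atTop (𝓝 0) := by
  obtain ⟨hu1, hu2, un, hun, hlim⟩ := hu
  have hlim' : Tendsto (fun n => ∫ x in Ω, (nsq (dif u (un n)) x + gsq (dif u (un n)) x))
      atTop (𝓝 0) := hlim
  by_cases hyΩ : y ∈ Ω
  · obtain ⟨r, hr, hrs⟩ := Metric.isOpen_iff.1 hΩ y hyΩ
    let φ : ContDiffBump y := ⟨r / 4, r / 2, by positivity, by linarith⟩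
    have hφ : ContDiff ℝ ∞ φ := φ.contDiff
    have hφs : tsupport φ ⊆ Ω := by
      rw [φ.tsupport_eq]
      exact (closedBall_subset_ball (by show r / 2 < r; linarith)).trans hrs
    have hφc : HasCompactSupport φ := φ.hasCompactSupport
    have hψ : ContDiff ℝ ∞ (fun z => 1 - φ z) := contDiff_const.sub hφ
    have hpdψ : ∀ k x, pd k (fun z => 1 - φ z) x = - pd k φ x := by
      intro k x
      rw [pd_sub (differentiableAt_const _) (hφ.differentiable (by norm_num) x)]
      simp [pd]
    obtain ⟨K, hK0, hK⟩ : ∃ K : ℝ, 1 ≤ K ∧ ∀ k x, (pd k φ x) ^ 2 ≤ K := by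
      have : ∀ k, ∃ C, ∀ x, ‖pd k φ x‖ ≤ C := fun k =>
        (contDiff_pd hφ).continuous.bounded_above_of_compact_support (hasCompactSupport_pd hφc)
      choose C hC using this
      refine ⟨1 + ∑ k, C k ^ 2, by linarith [Finset.sum_nonneg (fun k (_ : k ∈ Finset.univ) =>
        sq_nonneg (C k))], fun k x => ?_⟩
      have h1 : (pd k φ x) ^ 2 ≤ C k ^ 2 := by
        rw [← sq_abs]; exact pow_le_pow_left₀ (abs_nonneg _) (hC k x) 2
      have h2 : C k ^ 2 ≤ ∑ k, C k ^ 2 :=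
        Finset.single_le_sum (fun k _ => sq_nonneg (C k)) (Finset.mem_univ k)
      linarith
    refine ⟨r / 4, by positivity, fun n z i => un n z i + φ z * dif u (un n) z i, ?_, ?_, ?_⟩
    · intro n
      obtain ⟨h1, h2, h3⟩ := hun n
      have hsupp : tsupport (fun z i => un n z i + φ z * dif u (un n) z i) ⊆
          tsupport (un n) ∪ tsupport φ := by
        refine closure_minimal ?_ ((isClosed_tsupport _).union (isClosed_tsupport _))
        intro z hz
        by_contra hcon
        rw [Set.mem_union, not_or] at hcon
        apply hz
        funext i
        simp [image_eq_zero_of_notMem_tsupport hcon.1, image_eq_zero_of_notMem_tsupport hcon.2]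
      refine ⟨?_, ?_, hsupp.trans (Set.union_subset h3 hφs)⟩
      · refine contDiff_pi.2 fun i => (comp_contDiff h1 i).add ?_
        have hsub : tsupport (fun z => φ z * dif u (un n) z i) ⊆ tsupport φ :=
          tsupport_mul_subset_left
        refine contDiff_iff_contDiffAt.2 fun z => ?_
        by_cases hz : z ∈ tsupport (fun z => φ z * dif u (un n) z i)
        swap
        · exact contDiffAt_const.congr_of_eventuallyEq (notMem_tsupport_iff_eventuallyEq.1 hz)
        have hzΩ := hΩ.mem_nhds (hφs (hsub hz))
        exact hφ.contDiffAt.mul ((comp_contDiffOn (contDiffOn_dif hu1 h1) i).contDiffAt hzΩ)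
      · exact HasCompactSupport.of_support_subset_isCompact (h2.union hφc)
          ((subset_tsupport _).trans hsupp)
    · intro n x _ hx
      funext i
      have : φ x = 1 := φ.one_of_mem_closedBall (by
        show dist x y ≤ r / 4
        exact hx.le)
      simp [this, dif]
    · have heq : ∀ n, dif u (fun z i => un n z i + φ z * dif u (un n) z i) =
          cutf (fun z => 1 - φ z) (dif u (un n)) := by
        intro n; funext z i; simp only [dif, cutf]; ring
      simp only [heq]
      refine squeeze_zero (fun n => integral_nonneg fun x =>
        add_nonneg (nsq_nonneg _ _) (gsq_nonneg _ _)) (fun n => ?_)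
        (by simpa using hlim'.const_mul (7 * K))
      rw [← integral_const_mul]
      refine integral_mono_of_nonneg (Eventually.of_forall fun x =>
        add_nonneg (nsq_nonneg _ _) (gsq_nonneg _ _))
        ((integrableOn_dif hΩ hu1 hu2 (hun n)).const_mul _)
        ((ae_restrict_iff' hΩ.measurableSet).2 (Eventually.of_forall fun x hx => ?_))
      refine cutf_density (hψ.differentiable (by norm_num) x)
        (fun i => diffAt_comp hΩ (contDiffOn_dif hu1 (hun n).1) hx i) ?_ ?_
      · have := φ.nonneg (x := x)
        have := φ.le_one (x := x)
        nlinarith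
      · intro k
        rw [hpdψ, neg_sq]; exact hK k x
  · have hyc : y ∉ closure Ω := by
      intro h
      exact hy ⟨h, by rwa [hΩ.interior_eq]⟩
    obtain ⟨d, hd, hds⟩ := Metric.isOpen_iff.1 isClosed_closure.isOpen_compl y hyc
    refine ⟨d, hd, un, hun, fun n x hx hxd => ?_, hlim'⟩
    exact absurd (subset_closure hx) (hds hxd)

/-! ### Summed capacitary Hardy inequality -/

lemma sum_two_pow_inv_le (N : ℕ) : ∑ k ∈ Finset.range N, ((2:ℝ) ^ k)⁻¹ ≤ 2 := by
  have h : ∑ k ∈ Finset.range N, ((2:ℝ) ^ k)⁻¹ = 2 - 2 * ((2:ℝ) ^ N)⁻¹ := by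
    induction N with
    | zero => simp
    | succ n ih => rw [Finset.sum_range_succ, ih, pow_succ]; field_simp; ring
  rw [h]
  have : (0:ℝ) < ((2:ℝ) ^ N)⁻¹ := by positivity
  linarith

lemma sum_dyadic_le (N : ℕ) : ∀ t : ℝ, 0 ≤ t →
    ∑ k ∈ Finset.range N, ((2:ℝ) ^ k)⁻¹ * (if t < 4 * 2 ^ k then (1:ℝ) else 0) * t ≤ 8 := by
  induction N with
  | zero => intro t _; simp
  | succ n ih =>
    intro t ht
    by_cases h4 : t < 4
    · calc _ ≤ ∑ k ∈ Finset.range (n + 1), ((2:ℝ) ^ k)⁻¹ * 4 := by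
            refine Finset.sum_le_sum fun k _ => ?_
            rw [mul_assoc]
            refine mul_le_mul_of_nonneg_left ?_ (by positivity)
            split_ifs <;> linarith
        _ ≤ 8 := by
            rw [← Finset.sum_mul]; linarith [sum_two_pow_inv_le (n + 1)]
    · rw [Finset.sum_range_succ']
      have h0 : ((2:ℝ) ^ 0)⁻¹ * (if t < 4 * 2 ^ 0 then (1:ℝ) else 0) * t = 0 := by
        rw [if_neg (by simpa using h4)]; ring
      rw [h0, add_zero]
      refine le_of_eq_of_le (Finset.sum_congr rfl fun k _ => ?_) (ih (t / 2) (by positivity))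
      have : (t < 4 * 2 ^ (k + 1)) ↔ (t / 2 < 4 * 2 ^ k) := by
        rw [pow_succ, div_lt_iff₀ (by norm_num)]; ring_nf
      simp only [this]
      rw [pow_succ]
      field_simp

/-- The weights `ρₖ⁻¹ 1_{|x| < 4ρₖ}` form a geometric series starting at the first scale `ρₖ`
comparable to `|x| + ρ`, hence sum to a multiple of `|x - y|⁻¹`. -/
lemma sum_ball_weight_le {ρ : ℝ} (hρ : 0 < ρ) (N : ℕ) {x y : E3} (hy : ‖y‖ < ρ) (hxy : x ≠ y) :
    ∑ k ∈ Finset.range N, (ρ * 2 ^ k)⁻¹ * (ball (0:E3) (4 * (ρ * 2 ^ k))).indicator 1 x ≤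
      10 * ‖x - y‖⁻¹ := by
  have hpos : 0 < ‖x - y‖ := norm_pos_iff.2 (sub_ne_zero.2 hxy)
  rw [← div_eq_mul_inv, le_div_iff₀ hpos]
  have hle : ‖x - y‖ ≤ ‖x‖ + ρ := (norm_sub_le x y).trans (by linarith)
  set S := ∑ k ∈ Finset.range N, (ρ * 2 ^ k)⁻¹ *
    (ball (0:E3) (4 * (ρ * 2 ^ k))).indicator (1 : E3 → ℝ) x with hS
  have hS0 : 0 ≤ S := Finset.sum_nonneg fun k _ =>
    mul_nonneg (by positivity) (Set.indicator_nonneg (fun _ _ => zero_le_one) x)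
  have hS1 : S = ρ⁻¹ * ∑ k ∈ Finset.range N, ((2:ℝ) ^ k)⁻¹ *
      (if ‖x‖ / ρ < 4 * 2 ^ k then (1:ℝ) else 0) := by
    rw [hS, Finset.mul_sum]
    refine Finset.sum_congr rfl fun k _ => ?_
    have : x ∈ ball (0:E3) (4 * (ρ * 2 ^ k)) ↔ ‖x‖ / ρ < 4 * 2 ^ k := by
      rw [mem_ball_zero_iff, div_lt_iff₀ hρ]; ring_nf
    by_cases hx : ‖x‖ / ρ < 4 * 2 ^ k
    · rw [Set.indicator_of_mem (this.2 hx), if_pos hx]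
      simp only [Pi.one_apply, mul_inv]; ring
    · rw [Set.indicator_of_notMem (fun h => hx (this.1 h)), if_neg hx]; ring
  have h1 : S * ‖x‖ ≤ 8 := by
    have := sum_dyadic_le N (‖x‖ / ρ) (by positivity)
    rw [← Finset.sum_mul] at this
    rw [hS1]
    refine le_of_eq_of_le ?_ this
    rw [div_eq_mul_inv]; ring
  have h2 : S * ρ ≤ 2 := by
    rw [hS1]
    have : ∑ k ∈ Finset.range N, ((2:ℝ) ^ k)⁻¹ * (if ‖x‖ / ρ < 4 * 2 ^ k then (1:ℝ) else 0) ≤ 2 := by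
      refine le_trans (Finset.sum_le_sum fun k _ => ?_) (sum_two_pow_inv_le N)
      split_ifs <;> simp
    calc _ = ∑ k ∈ Finset.range N, ((2:ℝ) ^ k)⁻¹ * (if ‖x‖ / ρ < 4 * 2 ^ k then (1:ℝ) else 0) := by
          rw [mul_comm, ← mul_assoc, mul_inv_cancel₀ hρ.ne', one_mul]
      _ ≤ 2 := this
  calc S * ‖x - y‖ ≤ S * (‖x‖ + ρ) := mul_le_mul_of_nonneg_left hle hS0
    _ ≤ 10 := by linarith

lemma integrable_sq {f : E3 → ℝ} (hf : Continuous f) (hc : HasCompactSupport f) :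
    Integrable (fun x => (f x) ^ 2) := by
  refine (hf.pow 2).integrable_of_hasCompactSupport (HasCompactSupport.intro hc fun x hx => ?_)
  rw [Pi.pow_apply, image_eq_zero_of_notMem_tsupport hx]; norm_num

set_option maxHeartbeats 1000000 in
/-- A Hardy inequality whose weight is built from the capacities `cap(B̄_{2ρ_k} ∖ Ω)` of the
complement at the dyadic scales `ρ_k = 2^k ρ`. -/
lemma exists_hardy : ∃ C : ℝ, 0 < C ∧ ∀ (Ω : Set E3) (ρ : ℝ), 0 < ρ → ∀ (N : ℕ) (y : E3), ‖y‖ < ρ →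
    ∀ w, IsTestOn Ω w →
    (Integrable fun x => (∑ k ∈ Finset.range N,
      (capa (closedBall 0 (2 * (ρ * 2 ^ k)) \ Ω) / (ρ * 2 ^ k)) * ((ρ * 2 ^ k) ^ 3)⁻¹ *
        (ball (0:E3) (4 * (ρ * 2 ^ k))).indicator 1 x) * nsq w x) ∧
    ∫ x, (∑ k ∈ Finset.range N,
      (capa (closedBall 0 (2 * (ρ * 2 ^ k)) \ Ω) / (ρ * 2 ^ k)) * ((ρ * 2 ^ k) ^ 3)⁻¹ *
        (ball (0:E3) (4 * (ρ * 2 ^ k))).indicator 1 x) * nsq w x ≤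
      C * ∫ x, gsq w x * ‖x - y‖⁻¹ := by
  obtain ⟨C, hC, h⟩ := exists_cap_poincare
  refine ⟨80 * C, by positivity, fun Ω ρ hρ N y hy w hw => ?_⟩
  obtain ⟨hw1, hw2, hw3⟩ := hw
  set γ : ℕ → ℝ := fun k => capa (closedBall 0 (2 * (ρ * 2 ^ k)) \ Ω) with hγ
  have hin := integrable_nsq hw1 hw2
  have hig := integrable_gsq hw1 hw2
  have hrw : ∀ k, ∀ F : E3 → ℝ, ∀ x, (ball (0:E3) (4 * (ρ * 2 ^ k))).indicator 1 x * F x =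
      (ball (0:E3) (4 * (ρ * 2 ^ k))).indicator F x := by
    intro k F x
    by_cases hx : x ∈ ball (0:E3) (4 * (ρ * 2 ^ k)) <;> simp [Set.indicator, hx]
  have hI : ∀ k, Integrable (fun x => γ k / (ρ * 2 ^ k) * ((ρ * 2 ^ k) ^ 3)⁻¹ *
      (ball (0:E3) (4 * (ρ * 2 ^ k))).indicator (nsq w) x) := fun k =>
    (hin.indicator measurableSet_ball).const_mul _
  have hJ : ∀ k, Integrable (fun x => (ρ * 2 ^ k)⁻¹ *
      (ball (0:E3) (4 * (ρ * 2 ^ k))).indicator (gsq w) x) := fun k =>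
    (hig.indicator measurableSet_ball).const_mul _
  have heq : (fun x => (∑ k ∈ Finset.range N,
      (γ k / (ρ * 2 ^ k)) * ((ρ * 2 ^ k) ^ 3)⁻¹ *
        (ball (0:E3) (4 * (ρ * 2 ^ k))).indicator 1 x) * nsq w x) = fun x =>
      ∑ k ∈ Finset.range N, γ k / (ρ * 2 ^ k) * ((ρ * 2 ^ k) ^ 3)⁻¹ *
        (ball (0:E3) (4 * (ρ * 2 ^ k))).indicator (nsq w) x := by
    funext x
    rw [Finset.sum_mul]
    refine Finset.sum_congr rfl fun k _ => ?_
    rw [mul_assoc, hrw]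
  have hterm : ∀ k, γ k * ∫ x in ball (0:E3) (4 * (ρ * 2 ^ k)), nsq w x ≤
      C * (2 * (ρ * 2 ^ k)) ^ 3 * ∫ x in ball (0:E3) (4 * (ρ * 2 ^ k)), gsq w x := by
    intro k
    have e4 : 4 * (ρ * 2 ^ k) = 2 * (2 * (ρ * 2 ^ k)) := by ring
    have hi2 : ∀ i, Integrable (fun x => (w x i) ^ 2) := fun i =>
      integrable_sq (comp_contDiff hw1 i).continuous (comp_hasCompactSupport hw2 i)
    have hg2 : ∀ i, Integrable (fun x => ∑ k, (pd k (fun z => w z i) x) ^ 2) := fun i =>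
      integrable_finsetSum _ fun k _ =>
        integrable_sq (contDiff_pd (comp_contDiff hw1 i)).continuous
          (hasCompactSupport_pd (comp_hasCompactSupport hw2 i))
    unfold nsq gsq
    rw [integral_finsetSum _ (fun i _ => (hi2 i).integrableOn),
      integral_finsetSum _ (fun i _ => (hg2 i).integrableOn), Finset.mul_sum, Finset.mul_sum, e4]
    exact Finset.sum_le_sum fun i _ => h Ω (2 * (ρ * 2 ^ k)) (by positivity) _
      (comp_contDiff hw1 i) ((comp_tsupport i).trans hw3)
  change (Integrable fun x => (∑ k ∈ Finset.range N,
      (γ k / (ρ * 2 ^ k)) * ((ρ * 2 ^ k) ^ 3)⁻¹ *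
        (ball (0:E3) (4 * (ρ * 2 ^ k))).indicator 1 x) * nsq w x) ∧
    (∫ x, (fun x => (∑ k ∈ Finset.range N,
      (γ k / (ρ * 2 ^ k)) * ((ρ * 2 ^ k) ^ 3)⁻¹ *
        (ball (0:E3) (4 * (ρ * 2 ^ k))).indicator 1 x) * nsq w x) x) ≤ _
  rw [heq]
  refine ⟨integrable_finsetSum _ fun k _ => hI k, ?_⟩
  rw [integral_finsetSum _ fun k _ => hI k]
  have hstep : ∀ k, ∫ x, γ k / (ρ * 2 ^ k) * ((ρ * 2 ^ k) ^ 3)⁻¹ *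
      (ball (0:E3) (4 * (ρ * 2 ^ k))).indicator (nsq w) x ≤
      8 * C * ∫ x, (ρ * 2 ^ k)⁻¹ * (ball (0:E3) (4 * (ρ * 2 ^ k))).indicator (gsq w) x := by
    intro k
    rw [integral_const_mul, integral_const_mul, integral_indicator measurableSet_ball,
      integral_indicator measurableSet_ball]
    have hp : 0 < ρ * 2 ^ k := by positivity
    have ht := hterm k
    set I := ∫ x in ball (0:E3) (4 * (ρ * 2 ^ k)), nsq w x
    set J := ∫ x in ball (0:E3) (4 * (ρ * 2 ^ k)), gsq w x
    calc γ k / (ρ * 2 ^ k) * ((ρ * 2 ^ k) ^ 3)⁻¹ * I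
        = (ρ * 2 ^ k)⁻¹ * ((ρ * 2 ^ k) ^ 3)⁻¹ * (γ k * I) := by rw [div_eq_mul_inv]; ring
      _ ≤ (ρ * 2 ^ k)⁻¹ * ((ρ * 2 ^ k) ^ 3)⁻¹ * (C * (2 * (ρ * 2 ^ k)) ^ 3 * J) :=
          mul_le_mul_of_nonneg_left ht (by positivity)
      _ = 8 * C * ((ρ * 2 ^ k)⁻¹ * J) * (((ρ * 2 ^ k) ^ 3)⁻¹ * (ρ * 2 ^ k) ^ 3) := by ring
      _ = _ := by rw [inv_mul_cancel₀ (by positivity), mul_one]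
  refine (Finset.sum_le_sum fun k _ => hstep k).trans ?_
  rw [← Finset.mul_sum, ← integral_finsetSum _ fun k _ => hJ k, mul_assoc, show (80:ℝ) * C = 8 * C * 10 by ring, mul_assoc (8 * C), ← integral_const_mul 10, ← mul_assoc]
  refine mul_le_mul_of_nonneg_left ?_ (by positivity)
  refine integral_mono_ae (integrable_finsetSum _ fun k _ => hJ k)
    ((integrable_mul_weight (continuous_gsq hw1) (hasCompactSupport_gsq hw2) y).const_mul 10) ?_
  have hae : ∀ᵐ x : E3, x ≠ y := by
    simp [ae_iff]
  filter_upwards [hae] with x hx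
  have := mul_le_mul_of_nonneg_right (sum_ball_weight_le hρ N hy hx) (gsq_nonneg w x)
  rw [Finset.sum_mul] at this
  calc _ = ∑ k ∈ Finset.range N, (ρ * 2 ^ k)⁻¹ *
        (ball (0:E3) (4 * (ρ * 2 ^ k))).indicator 1 x * gsq w x :=
        Finset.sum_congr rfl fun k _ => by rw [mul_assoc, hrw]
    _ ≤ _ := this
    _ = _ := by ring

/-! ### The weighted energy inequality -/

lemma continuous_lame (α : ℝ) {v : E3 → Fin 3 → ℝ} (hv : ContDiff ℝ ∞ v) (i : Fin 3) :
    Continuous (fun x => lame α v x i) := by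
  have h1 : ∀ k i, ContDiff ℝ ∞ (pd k (fun z => v z i)) := fun k i =>
    contDiff_pd (comp_contDiff hv i)
  have h2 : ContDiff ℝ ∞ (divg v) := ContDiff.sum fun k _ => h1 k k
  have h3 : Continuous (lap (fun z => v z i)) :=
    continuous_finsetSum _ fun k _ => (contDiff_pd (h1 k i)).continuous
  unfold lame
  exact h3.neg.sub (continuous_const.mul (contDiff_pd h2).continuous)

lemma contDiff_cutf {η : E3 → ℝ} {v : E3 → Fin 3 → ℝ} (hη : ContDiff ℝ ∞ η)
    (hv : ContDiff ℝ ∞ v) : ContDiff ℝ ∞ (cutf η v) :=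
  contDiff_pi.2 fun i => hη.mul (comp_contDiff hv i)

lemma isTestOn_cutf {Ω : Set E3} {η : E3 → ℝ} {v : E3 → Fin 3 → ℝ} (hη : ContDiff ℝ ∞ η)
    (hv : IsTestOn Ω v) : IsTestOn Ω (cutf η v) := by
  obtain ⟨h1, h2, h3⟩ := hv
  have hs : tsupport (cutf η v) ⊆ tsupport v := by
    refine closure_mono fun x hx h => hx ?_
    funext i; simp [cutf, h]
  exact ⟨contDiff_cutf hη h1, h2.mono' ((subset_tsupport _).trans hs), hs.trans h3⟩

lemma measurable_Phi (α : ℝ) (i j : Fin 3) : Measurable (fun z => Phi α z i j) := by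
  unfold Phi
  fun_prop

lemma integrable_Phi_form (α : ℝ) {f w : E3 → Fin 3 → ℝ} (hf : ∀ i, Continuous (fun x => f x i))
    (hw : ContDiff ℝ ∞ w) (hc : HasCompactSupport w) (y : E3) :
    Integrable (fun x => ∑ i, ∑ j, f x i * Phi α (x - y) i j * w x j) := by
  obtain ⟨C, hC, hΦ⟩ := exists_Phi_bound α
  refine integrable_finsetSum _ fun i _ => integrable_finsetSum _ fun j _ => ?_
  have hwj := (comp_contDiff hw j).continuous
  refine integrable_of_weight_bound (F := fun x => C * |f x i| * |w x j|) ?_ (by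
    have := hf i
    fun_prop) ?_ y ?_
  · refine Measurable.aestronglyMeasurable ?_
    exact (((hf i).measurable).mul ((measurable_Phi α i j).comp (measurable_id.sub_const y))).mul
      hwj.measurable
  · refine HasCompactSupport.intro hc fun x hx => ?_
    simp [image_eq_zero_of_notMem_tsupport hx]
  · intro x
    rw [abs_mul, abs_mul]
    have := hΦ (x - y) i j
    calc |f x i| * |Phi α (x - y) i j| * |w x j| ≤ |f x i| * (C * ‖x - y‖⁻¹) * |w x j| := by gcongr
      _ = _ := by ring

set_option maxHeartbeats 2000000 in
/-- Testing (QPD) with a cutoff of the approximating field, and absorbing the commutator into the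
left-hand side by means of the Hardy inequality. -/
lemma exists_energy {α c₀ : ℝ} (hc₀ : 0 < c₀) (hQ : QPDhyp α c₀) :
    ∃ δ C : ℝ, 0 < δ ∧ 0 < C ∧ ∀ (Ω : Set E3) (ρ R : ℝ), 0 < ρ → ρ < R → ∀ N : ℕ,
      (∀ k < N, 4 * (ρ * 2 ^ k) ≤ R) →
      ∃ η : E3 → ℝ, ContDiff ℝ ∞ η ∧ HasCompactSupport η ∧ tsupport η ⊆ ball 0 (2 * R) ∧
        (∀ x, ‖x‖ < ρ → η x = 1) ∧
        ∀ y : E3, ‖y‖ < ρ → ∀ v, IsTestOn Ω v →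
          1 / 2 * nsq v y + c₀ / 2 * ∫ x, gsq (cutf η v) x * ‖x - y‖⁻¹ ≤
            C * (R ^ 3)⁻¹ * rexp (-2 * δ * ∑ k ∈ Finset.range N,
              capa (closedBall 0 (2 * (ρ * 2 ^ k)) \ Ω) / (ρ * 2 ^ k)) *
              (∫ x in ball (0:E3) (2 * R), nsq v x) + |errE α η v y| := by
  obtain ⟨A, hA, hcap⟩ := exists_capa_le
  obtain ⟨Ca, hCa, hag⟩ := exists_agmon (B := 2 * A) (by positivity)
  obtain ⟨C₁, hC₁, hcomm⟩ := exists_comm_bound α hc₀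
  obtain ⟨H, hH, hhardy⟩ := exists_hardy
  set δ := min 1 (c₀ / (4 * (C₁ * Ca * H))) with hδ
  have hδ0 : 0 < δ := lt_min one_pos (by positivity)
  have hδ1 : δ ≤ 1 := min_le_left _ _
  have hδ2 : C₁ * Ca * δ * H ≤ c₀ / 4 := by
    have h2 : δ ≤ c₀ / (4 * (C₁ * Ca * H)) := min_le_right _ _
    rw [le_div_iff₀ (by positivity)] at h2
    linarith
  refine ⟨δ, C₁ * Ca, hδ0, by positivity, fun Ω ρ R hρ hρR N hN => ?_⟩
  set a : ℕ → ℝ := fun k => capa (closedBall 0 (2 * (ρ * 2 ^ k)) \ Ω) / (ρ * 2 ^ k) with ha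
  have ha0 : ∀ k, 0 ≤ a k := fun k => div_nonneg (capa_nonneg _) (by positivity)
  have haB : ∀ k, a k ≤ 2 * A := by
    intro k
    have hp : 0 < ρ * 2 ^ k := by positivity
    rw [ha]
    simp only
    rw [div_le_iff₀ hp]
    have := hcap (closedBall 0 (2 * (ρ * 2 ^ k)) \ Ω) (2 * (ρ * 2 ^ k)) (by positivity)
      Set.sdiff_subset
    linarith
  obtain ⟨η, hη, hηc, hηs, hη0, hη1, hηρ, hηb⟩ := hag δ hδ0 hδ1 ρ R hρ hρR N a ha0 haB hN
  refine ⟨η, hη, hηc, hηs, hηρ, fun y hy v hv => ?_⟩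
  obtain ⟨hv1, hv2, hv3⟩ := hv
  set w := cutf η v with hw
  have hwT : IsTestOn Ω w := isTestOn_cutf hη ⟨hv1, hv2, hv3⟩
  obtain ⟨hw1, hw2, hw3⟩ := hwT
  have hq := hQ w ⟨hw1, hw2, Set.subset_univ _⟩ y
  have hwy : nsq w y = nsq v y := by
    simp [nsq, hw, cutf, hηρ y hy]
  set I := ∫ x, gsq w x * ‖x - y‖⁻¹ with hI
  have hq' : 1 / 2 * nsq v y + c₀ * I ≤ lameEnergy α w y := by rw [← hwy]; exact hq
  have hcont : ∀ i, Continuous (fun x => lameComm α η v x i) := by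
    intro i
    have : (fun x => lameComm α η v x i) = fun x => lame α w x i - η x * lame α v x i := by
      funext x; rw [hw, lame_cutf α hη hv1 x i]; ring
    rw [this]
    exact (continuous_lame α hw1 i).sub (hη.continuous.mul (continuous_lame α hv1 i))
  have i1 := integrable_Phi_form α (f := fun x i => lameComm α η v x i) hcont hw1 hw2 y
  have i2 := integrable_Phi_form α (f := fun x i => η x * lame α v x i)
    (fun i => hη.continuous.mul (continuous_lame α hv1 i)) hw1 hw2 y
  have hsplit : lameEnergy α w y = (∫ x, ∑ i, ∑ j, lameComm α η v x i * Phi α (x - y) i j * w x j)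
      + errE α η v y := by
    unfold lameEnergy errE
    rw [← integral_add i1 i2]
    refine integral_congr_ae (Eventually.of_forall fun x => ?_)
    simp only [← Finset.sum_add_distrib]
    refine Finset.sum_congr rfl fun i _ => Finset.sum_congr rfl fun j _ => ?_
    rw [hw, lame_cutf α hη hv1 x i]; ring
  obtain ⟨j1, hhar⟩ := hhardy Ω ρ hρ N y hy w ⟨hw1, hw2, hw3⟩
  have j2 := integrable_mul_weight (continuous_gsq hw1) (hasCompactSupport_gsq hw2) y
  have j3 : Integrable ((ball (0:E3) (2 * R)).indicator (nsq v)) :=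
    (integrable_nsq hv1 hv2).indicator measurableSet_ball
  set E := rexp (-2 * δ * ∑ k ∈ Finset.range N, a k) with hE
  have hpt : ∀ x, ∑ i, ∑ j, lameComm α η v x i * Phi α (x - y) i j * w x j ≤
      c₀ / 4 * (gsq w x * ‖x - y‖⁻¹) + (C₁ * Ca * δ * ((∑ k ∈ Finset.range N,
        a k * ((ρ * 2 ^ k) ^ 3)⁻¹ * (ball (0:E3) (4 * (ρ * 2 ^ k))).indicator 1 x) * nsq w x) +
      C₁ * Ca * (R ^ 3)⁻¹ * E * (ball (0:E3) (2 * R)).indicator (nsq v) x) := by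
    intro x
    refine (le_abs_self _).trans ((hcomm η v hη hv1 hη0 x y).trans ?_)
    refine add_le_add le_rfl ?_
    have h1 := mul_le_mul_of_nonneg_left
      (mul_le_mul_of_nonneg_right (hηb y hy x) (nsq_nonneg v x)) hC₁.le
    have h2 : nsq w x = η x ^ 2 * nsq v x := by
      simp only [nsq, hw, cutf, mul_pow, Finset.mul_sum]
    have h3 : (ball (0:E3) (2 * R)).indicator (nsq v) x =
        (ball (0:E3) (2 * R)).indicator 1 x * nsq v x := by
      by_cases hx : x ∈ ball (0:E3) (2 * R) <;> simp [Set.indicator, hx]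
    rw [h2, h3, mul_assoc C₁]
    refine h1.trans (le_of_eq ?_)
    ring
  have hint := integral_mono i1 ((j2.const_mul (c₀ / 4)).add ((j1.const_mul (C₁ * Ca * δ)).add
    (j3.const_mul (C₁ * Ca * (R ^ 3)⁻¹ * E)))) hpt
  have hr : (∫ x, ((fun x => c₀ / 4 * (gsq w x * ‖x - y‖⁻¹)) + ((fun x => C₁ * Ca * δ * ((∑ k ∈ Finset.range N,
        a k * ((ρ * 2 ^ k) ^ 3)⁻¹ * (ball (0:E3) (4 * (ρ * 2 ^ k))).indicator 1 x) * nsq w x)) +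
      fun x => C₁ * Ca * (R ^ 3)⁻¹ * E * (ball (0:E3) (2 * R)).indicator (nsq v) x)) x) =
      c₀ / 4 * I + (C₁ * Ca * δ * (∫ x, (∑ k ∈ Finset.range N,
        a k * ((ρ * 2 ^ k) ^ 3)⁻¹ * (ball (0:E3) (4 * (ρ * 2 ^ k))).indicator 1 x) * nsq w x) +
      C₁ * Ca * (R ^ 3)⁻¹ * E * ∫ x in ball (0:E3) (2 * R), nsq v x) := by
    rw [integral_add' (j2.const_mul (c₀ / 4)) ((j1.const_mul (C₁ * Ca * δ)).add
      (j3.const_mul (C₁ * Ca * (R ^ 3)⁻¹ * E))), integral_add' (j1.const_mul (C₁ * Ca * δ))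
      (j3.const_mul (C₁ * Ca * (R ^ 3)⁻¹ * E)), integral_const_mul, integral_const_mul,
      integral_const_mul, integral_indicator measurableSet_ball]
  have hint' := hint.trans (le_of_eq hr)
  have hI0 : 0 ≤ I := integral_nonneg fun x => mul_nonneg (gsq_nonneg _ _) (by positivity)
  have h5 := mul_le_mul_of_nonneg_left hhar (show 0 ≤ C₁ * Ca * δ by positivity)
  have h6 := mul_le_mul_of_nonneg_right hδ2 hI0
  have h7 := le_abs_self (errE α η v y)
  rw [hsplit] at hq'
  have h8 : C₁ * Ca * δ * (H * I) = C₁ * Ca * δ * H * I := by ring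
  rw [h8] at h5
  linarith

/-! ### Passage to the limit -/

set_option maxHeartbeats 1000000 in
/-- The energy inequality for test fields close to a solution `u`: up to an arbitrarily small
error its right-hand side only involves `∫_{Ω ∩ B_{2R}} |u|²`. -/
lemma exists_good_approx {α c₀ : ℝ} {Ω : Set E3} (hΩ : IsOpen Ω) {R ρ : ℝ}
    {u : E3 → Fin 3 → ℝ} (hu : MemH10 Ω u)
    (hLu : ∀ x ∈ Ω ∩ ball (0 : E3) (2 * R), ∀ i, lame α u x i = 0)
    {η : E3 → ℝ} (hη : ContDiff ℝ ∞ η) (hηc : HasCompactSupport η)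
    (hηs : tsupport η ⊆ ball 0 (2 * R)) {K : ℝ} (hK : 0 ≤ K)
    (hen : ∀ y : E3, ‖y‖ < ρ → ∀ v, IsTestOn Ω v →
      1 / 2 * nsq v y + c₀ / 2 * ∫ x, gsq (cutf η v) x * ‖x - y‖⁻¹ ≤
        K * (∫ x in ball (0:E3) (2 * R), nsq v x) + |errE α η v y|)
    {y : E3} (hy : ‖y‖ < ρ) (hyf : y ∉ frontier Ω) {ε : ℝ} (hε : 0 < ε) :
    ∃ v, IsTestOn Ω v ∧ (y ∈ Ω → v y = u y) ∧
      ∫ x in Ω, (nsq (dif u v) x + gsq (dif u v) x) ≤ ε ∧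
      1 / 2 * nsq v y + c₀ / 2 * ∫ x, gsq (cutf η v) x * ‖x - y‖⁻¹ ≤
        2 * K * (∫ x in Ω ∩ ball (0:E3) (2 * R), nsq u x) + ε := by
  obtain ⟨d, hd, v, hv, hvu, hlim⟩ := exists_approx hΩ hu hyf
  obtain ⟨hu1, hu2, -⟩ := hu
  have hu2' : IntegrableOn (fun x => nsq u x + gsq u x) Ω := hu2
  obtain ⟨Ce, hCe, herr⟩ := errE_bound α hΩ hu1 hLu hη hηc hηs y hd
  set D : ℕ → ℝ := fun n => ∫ x in Ω, (nsq (dif u (v n)) x + gsq (dif u (v n)) x) with hD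
  set U := ∫ x in Ω, (nsq u x + gsq u x) with hU
  have hU0 : 0 ≤ U := integral_nonneg fun x => add_nonneg (nsq_nonneg _ _) (gsq_nonneg _ _)
  set M := ∫ x in Ω ∩ ball (0:E3) (2 * R), nsq u x with hM
  -- `τ` makes the part of the error that does not vanish in the limit at most `ε / 2`
  set τ := ε / (4 * (Ce + 1) * (U + 1)) with hτ
  have hτ0 : 0 < τ := by positivity
  have hτ1 : Ce * (τ * (2 * U)) ≤ ε / 2 := by
    have h1 : τ * (4 * (Ce + 1) * (U + 1)) = ε := by
      rw [hτ]; exact div_mul_cancel₀ _ (by positivity)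
    have h2 : 0 ≤ τ * Ce := by positivity
    have h3 : 0 ≤ τ * U := by positivity
    nlinarith
  have hmass : ∀ n, ∫ x in ball (0:E3) (2 * R), nsq (v n) x ≤ 2 * M + 2 * D n := by
    intro n
    obtain ⟨h1, h2, h3⟩ := hv n
    have hdi := integrableOn_parts hΩ (contDiffOn_dif hu1 h1) (integrableOn_dif hΩ hu1 hu2' (hv n))
    have hui := integrableOn_parts hΩ hu1 hu2'
    have e1 : ∫ x in ball (0:E3) (2 * R), nsq (v n) x =
        ∫ x in Ω ∩ ball (0:E3) (2 * R), nsq (v n) x := by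
      refine setIntegral_eq_of_subset_of_forall_sdiff_eq_zero measurableSet_ball
        Set.inter_subset_right fun x hx => nsq_eq_zero fun h => hx.2 ⟨h3 h, hx.1⟩
    have i1 := hui.1.mono_set (Set.inter_subset_left : Ω ∩ ball (0:E3) (2 * R) ⊆ Ω)
    have i2 := hdi.1.mono_set (Set.inter_subset_left : Ω ∩ ball (0:E3) (2 * R) ⊆ Ω)
    have e2 : ∫ x in Ω ∩ ball (0:E3) (2 * R), nsq (dif u (v n)) x ≤ D n := by
      refine (setIntegral_mono_set hdi.1 (Eventually.of_forall fun x => nsq_nonneg _ _)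
        (Eventually.of_forall Set.inter_subset_left)).trans ?_
      exact integral_mono hdi.1 (integrableOn_dif hΩ hu1 hu2' (hv n)) fun x => by
        have := gsq_nonneg (dif u (v n)) x
        simp only; linarith
    rw [e1]
    calc _ ≤ ∫ x in Ω ∩ ball (0:E3) (2 * R), (2 * nsq u x + 2 * nsq (dif u (v n)) x) :=
          integral_mono (integrable_nsq h1 h2).integrableOn ((i1.const_mul 2).add (i2.const_mul 2))
            fun x => (nsq_le_two u (v n) x).2.1
      _ = 2 * M + 2 * ∫ x in Ω ∩ ball (0:E3) (2 * R), nsq (dif u (v n)) x := by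
          rw [integral_add (i1.const_mul 2) (i2.const_mul 2), integral_const_mul,
            integral_const_mul]
      _ ≤ _ := by linarith
  have herr' : ∀ n, |errE α η (v n) y| ≤ Ce * (τ⁻¹ * D n + τ * (2 * U + 2 * D n)) := by
    intro n
    obtain ⟨h1, h2, h3⟩ := hv n
    have hdd := integrableOn_dif hΩ hu1 hu2' (hv n)
    have hdi := integrableOn_parts hΩ (contDiffOn_dif hu1 h1) hdd
    refine (herr (v n) (hv n) (hvu n) hdi.2 τ hτ0).trans ?_
    refine mul_le_mul_of_nonneg_left (add_le_add ?_ ?_) hCe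
    · refine mul_le_mul_of_nonneg_left ?_ (by positivity)
      exact integral_mono hdi.2 hdd fun x => by
        have := nsq_nonneg (dif u (v n)) x
        simp only; linarith
    · refine mul_le_mul_of_nonneg_left ?_ hτ0.le
      rw [hU, hD]
      simp only
      rw [← integral_const_mul, ← integral_const_mul,
        ← integral_add (hu2'.const_mul 2) (hdd.const_mul 2)]
      refine integral_mono_of_nonneg (Eventually.of_forall fun x =>
        add_nonneg (nsq_nonneg _ _) (gsq_nonneg _ _)) ((hu2'.const_mul 2).add (hdd.const_mul 2))
        ((ae_restrict_iff' hΩ.measurableSet).2 (Eventually.of_forall fun x hx => ?_))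
      have b1 := (nsq_le_two u (v n) x).2.1
      have b2 := (gsq_le_two (u := u) (v := v n) (fun i => diffAt_comp hΩ hu1 hx i)
        (fun i => (comp_contDiff h1 i).differentiable (by norm_num) x)).2.1
      simp only
      linarith
  have hsmall : Tendsto (fun n => (2 * K + Ce * τ⁻¹ + 2 * Ce * τ) * D n) atTop (𝓝 0) := by
    simpa using hlim.const_mul (2 * K + Ce * τ⁻¹ + 2 * Ce * τ)
  obtain ⟨n, hn1, hn2⟩ := ((hsmall.eventually (eventually_le_nhds (half_pos hε))).and
    (hlim.eventually (eventually_le_nhds hε))).exists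
  refine ⟨v n, hv n, fun hyΩ => hvu n y hyΩ (by simpa using hd), hn2, ?_⟩
  refine (hen y hy (v n) (hv n)).trans ?_
  have h1 := mul_le_mul_of_nonneg_left (hmass n) hK
  have h2 := herr' n
  nlinarith

set_option maxHeartbeats 1000000 in
/-- The energy inequality at `y = x₀` gives the pointwise bound. For the gradient integral the origin
may lie on `∂Ω`, so it is used at points `y` off `∂Ω` close to the origin. -/
lemma exists_two_bounds {α c₀ : ℝ} (hc₀ : 0 < c₀) (hQ : QPDhyp α c₀) :
    ∃ δ C : ℝ, 0 < δ ∧ 0 < C ∧ ∀ (Ω : Set E3), IsOpen Ω → ∀ (ρ R : ℝ), 0 < ρ → ρ < R → ∀ N : ℕ,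
      (∀ k < N, 4 * (ρ * 2 ^ k) ≤ R) → ∀ u, MemH10 Ω u →
      (∀ x ∈ Ω ∩ ball (0 : E3) (2 * R), ∀ i, lame α u x i = 0) →
      (∀ x₀ ∈ Ω ∩ ball (0:E3) ρ, nsq u x₀ ≤ C * (R ^ 3)⁻¹ *
        rexp (-2 * δ * ∑ k ∈ Finset.range N,
              capa (closedBall 0 (2 * (ρ * 2 ^ k)) \ Ω) / (ρ * 2 ^ k)) *
          ∫ x in Ω ∩ ball (0:E3) (2 * R), nsq u x) ∧
      ∫ x in Ω ∩ ball (0:E3) ρ, gsq u x * ‖x‖⁻¹ ≤ C * (R ^ 3)⁻¹ *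
        rexp (-2 * δ * ∑ k ∈ Finset.range N,
              capa (closedBall 0 (2 * (ρ * 2 ^ k)) \ Ω) / (ρ * 2 ^ k)) *
          ∫ x in Ω ∩ ball (0:E3) (2 * R), nsq u x := by
  obtain ⟨δ, C, hδ, hC, hmain⟩ := exists_energy hc₀ hQ
  refine ⟨δ, 4 * C + 16 * C / c₀, hδ, by positivity, fun Ω hΩ ρ R hρ hρR N hN u hu hLu => ?_⟩
  have hR : 0 < R := hρ.trans hρR
  obtain ⟨η, hη, hηc, hηs, hηρ, hen⟩ := hmain Ω ρ R hρ hρR N hN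
  set E := rexp (-2 * δ * ∑ k ∈ Finset.range N,
              capa (closedBall 0 (2 * (ρ * 2 ^ k)) \ Ω) / (ρ * 2 ^ k)) with hE
  set M := ∫ x in Ω ∩ ball (0:E3) (2 * R), nsq u x with hM
  have hM0 : 0 ≤ M := integral_nonneg fun x => nsq_nonneg _ _
  set K := C * (R ^ 3)⁻¹ * E with hK
  have hK0 : 0 ≤ K := by positivity
  have hI0 : ∀ v y, 0 ≤ ∫ x, gsq (cutf η v) x * ‖x - y‖⁻¹ := fun v y =>
    integral_nonneg fun x => mul_nonneg (gsq_nonneg _ _) (by positivity)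
  have hKM : 0 ≤ K * M := mul_nonneg hK0 hM0
  have hexp : (4 * C + 16 * C / c₀) * (R ^ 3)⁻¹ * E * M = 4 * (K * M) + 16 * (K * M) / c₀ := by
    rw [hK]; ring
  rw [hexp]
  constructor
  · rintro x₀ ⟨hx₀, hx₀ρ⟩
    rw [mem_ball_zero_iff] at hx₀ρ
    have hfr : x₀ ∉ frontier Ω := fun h => (hΩ.inter_frontier_eq.subset ⟨hx₀, h⟩ : x₀ ∈ (∅ : Set E3))
    have h4 : nsq u x₀ ≤ 4 * (K * M) := by
      refine le_of_forall_pos_le_add fun ε hε => ?_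
      obtain ⟨v, -, hvu, -, hb⟩ := exists_good_approx hΩ hu hLu hη hηc hηs hK0 hen hx₀ρ hfr
        (half_pos hε)
      have : nsq v x₀ = nsq u x₀ := by unfold nsq; rw [hvu hx₀]
      rw [this] at hb
      have := mul_nonneg (half_pos hc₀).le (hI0 v x₀)
      linarith
    have : 0 ≤ 16 * (K * M) / c₀ := by positivity
    linarith
  · suffices hs : ∫ x in Ω ∩ ball (0:E3) ρ, gsq u x * ‖x‖⁻¹ ≤ 16 * (K * M) / c₀ by linarith
    by_cases hint : IntegrableOn (fun x => gsq u x * ‖x‖⁻¹) (Ω ∩ ball (0:E3) ρ)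
    swap
    · rw [integral_undef hint]; positivity
    obtain ⟨hu1, hu2, hu3⟩ := id hu
    have hu2' : IntegrableOn (fun x => nsq u x + gsq u x) Ω := hu2
    -- away from the origin, where the weight at `0` is comparable to the weight at a nearby `y`
    have hA : ∀ s : ℝ, 0 < s →
        ∫ x in (Ω ∩ ball (0:E3) ρ) \ closedBall 0 s, gsq u x * ‖x‖⁻¹ ≤ 16 * (K * M) / c₀ := by
      intro s hs
      obtain ⟨y, hyb, hyf⟩ : ∃ y ∈ ball (0:E3) (min s ρ), y ∉ frontier Ω := by
        by_contra! hcon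
        have h1 : ball (0:E3) (min s ρ) ⊆ interior (frontier Ω) :=
          interior_maximal hcon isOpen_ball
        rw [← frontier_compl, interior_frontier hΩ.isClosed_compl] at h1
        exact h1 (mem_ball_self (lt_min hs hρ))
      rw [mem_ball_zero_iff, lt_min_iff] at hyb
      refine le_of_forall_pos_le_add fun ε hε => ?_
      set ε' := ε / (8 / c₀ + 2 / s) with hε'
      have hε'0 : 0 < ε' := by positivity
      have hε'1 : 8 / c₀ * ε' + 2 / s * ε' = ε := by
        rw [← add_mul, hε', mul_div_cancel₀ _ (by positivity)]
      obtain ⟨v, hv, -, hdε, hb⟩ := exists_good_approx hΩ hu hLu hη hηc hηs hK0 hen hyb.2 hyf hε'0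
      have hv1 := hv.1
      have hdd := integrableOn_dif hΩ hu1 hu2' hv
      have hw := isTestOn_cutf hη hv
      set A := (Ω ∩ ball (0:E3) ρ) \ closedBall 0 s with hAdef
      have hAm : MeasurableSet A :=
        (hΩ.measurableSet.inter measurableSet_ball).diff measurableSet_closedBall
      have hAΩ : A ⊆ Ω := fun x hx => hx.1.1
      have j1 := integrable_mul_weight (continuous_gsq hw.1) (hasCompactSupport_gsq hw.2.1) y
      set I := ∫ x, gsq (cutf η v) x * ‖x - y‖⁻¹ with hI
      have hstep : ∫ x in A, gsq u x * ‖x‖⁻¹ ≤ ∫ x in A, (4 * (gsq (cutf η v) x * ‖x - y‖⁻¹) +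
          2 / s * (nsq (dif u v) x + gsq (dif u v) x)) := by
        refine integral_mono_of_nonneg (Eventually.of_forall fun x =>
          mul_nonneg (gsq_nonneg _ _) (by positivity))
          ((j1.integrableOn.const_mul 4).add ((hdd.mono_set hAΩ).const_mul (2 / s)))
          ((ae_restrict_iff' hAm).2 (Eventually.of_forall fun x hx => ?_))
        have hxs : s < ‖x‖ := by simpa using hx.2
        have hxρ : ‖x‖ < ρ := by simpa using hx.1.2
        have hx0 : 0 < ‖x‖ := hs.trans hxs
        have hxy : 0 < ‖x - y‖ := by
          have := norm_sub_norm_le x y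
          linarith
        have hgw : gsq (cutf η v) x = gsq v x := by
          unfold gsq
          refine Finset.sum_congr rfl fun i _ => Finset.sum_congr rfl fun k _ => ?_
          congr 1
          refine pd_congr ?_
          filter_upwards [isOpen_ball.mem_nhds (mem_ball_zero_iff.2 hxρ)] with z hz
          simp [cutf, hηρ z (mem_ball_zero_iff.1 hz)]
        have b1 := (gsq_le_two (u := u) (v := v) (fun i => diffAt_comp hΩ hu1 (hAΩ hx) i)
          (fun i => (comp_contDiff hv1 i).differentiable (by norm_num) x)).1
        have b2 : ‖x‖⁻¹ ≤ 2 * ‖x - y‖⁻¹ := by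
          have : ‖x - y‖ ≤ 2 * ‖x‖ := by
            have := norm_sub_le x y
            linarith
          rw [inv_eq_one_div, inv_eq_one_div, mul_one_div, div_le_div_iff₀ hx0 hxy]
          linarith
        have b3 : ‖x‖⁻¹ ≤ 1 / s := by
          rw [inv_eq_one_div]; exact one_div_le_one_div_of_le hs hxs.le
        have b4 := nsq_nonneg (dif u v) x
        have b5 := gsq_nonneg (dif u v) x
        have b6 := gsq_nonneg v x
        simp only
        rw [hgw]
        calc gsq u x * ‖x‖⁻¹ ≤ (2 * gsq v x + 2 * gsq (dif u v) x) * ‖x‖⁻¹ :=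
              mul_le_mul_of_nonneg_right b1 (by positivity)
          _ = 2 * gsq v x * ‖x‖⁻¹ + 2 * gsq (dif u v) x * ‖x‖⁻¹ := by ring
          _ ≤ 2 * gsq v x * (2 * ‖x - y‖⁻¹) + 2 * gsq (dif u v) x * (1 / s) :=
              add_le_add (mul_le_mul_of_nonneg_left b2 (by positivity))
                (mul_le_mul_of_nonneg_left b3 (by positivity))
          _ = 4 * (gsq v x * ‖x - y‖⁻¹) + 2 / s * gsq (dif u v) x := by ring
          _ ≤ _ := by
              have : 0 ≤ 2 / s * nsq (dif u v) x := by positivity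
              rw [mul_add (2 / s)]; linarith
      rw [integral_add (j1.integrableOn.const_mul 4) ((hdd.mono_set hAΩ).const_mul (2 / s)),
        integral_const_mul, integral_const_mul] at hstep
      have c1 : ∫ x in A, gsq (cutf η v) x * ‖x - y‖⁻¹ ≤ I :=
        setIntegral_le_integral j1 (Eventually.of_forall fun x =>
          mul_nonneg (gsq_nonneg _ _) (by positivity))
      have c2 : ∫ x in A, (nsq (dif u v) x + gsq (dif u v) x) ≤ ε' :=
        (setIntegral_mono_set hdd (Eventually.of_forall fun x =>
          add_nonneg (nsq_nonneg _ _) (gsq_nonneg _ _)) (Eventually.of_forall hAΩ)).trans hdε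
      have c3 := mul_le_mul_of_nonneg_left c2 (show 0 ≤ 2 / s by positivity)
      have c4 : I ≤ 2 / c₀ * (2 * K * M + ε') := by
        have := nsq_nonneg v y
        have h5 : c₀ / 2 * I ≤ 2 * K * M + ε' := by linarith
        have h6 := mul_le_mul_of_nonneg_left h5 (show 0 ≤ 2 / c₀ by positivity)
        have h7 : 2 / c₀ * (c₀ / 2 * I) = I := by field_simp
        linarith
      have c5 : 4 * (2 / c₀ * (2 * K * M + ε')) = 16 * (K * M) / c₀ + 8 / c₀ * ε' := by ring
      linarith
    have hun : Tendsto (fun n : ℕ => ∫ x in (Ω ∩ ball (0:E3) ρ) \ closedBall 0 (1 / ((n:ℝ) + 1)),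
        gsq u x * ‖x‖⁻¹) atTop (𝓝 (∫ x in ⋃ n : ℕ, (Ω ∩ ball (0:E3) ρ) \
          closedBall 0 (1 / ((n:ℝ) + 1)), gsq u x * ‖x‖⁻¹)) := by
      refine tendsto_setIntegral_of_monotone (fun n =>
        (hΩ.measurableSet.inter measurableSet_ball).diff measurableSet_closedBall) ?_
        (hint.mono_set (Set.iUnion_subset fun n => Set.sdiff_subset))
      intro n m hnm
      refine Set.sdiff_subset_sdiff_right (closedBall_subset_closedBall ?_)
      exact Nat.one_div_le_one_div hnm
    have heq : ∫ x in ⋃ n : ℕ, (Ω ∩ ball (0:E3) ρ) \ closedBall 0 (1 / ((n:ℝ) + 1)),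
        gsq u x * ‖x‖⁻¹ = ∫ x in Ω ∩ ball (0:E3) ρ, gsq u x * ‖x‖⁻¹ := by
      refine (setIntegral_eq_of_subset_of_forall_sdiff_eq_zero
        (hΩ.measurableSet.inter measurableSet_ball) (Set.iUnion_subset fun n => Set.sdiff_subset) ?_).symm
      rintro x ⟨hx1, hx2⟩
      have hx0 : x = 0 := by
        by_contra hne
        obtain ⟨n, hn⟩ := exists_nat_one_div_lt (norm_pos_iff.2 hne)
        exact hx2 (Set.mem_iUnion.2 ⟨n, hx1, by simpa using hn⟩)
      simp [hx0]
    rw [← heq]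
    exact le_of_tendsto' hun fun n => hA _ (by positivity)

/-! ### Comparison of the Wiener integral with its dyadic sum -/

lemma intervalIntegrable_capa (Ω : Set E3) {a b : ℝ} (ha : 0 < a) (hab : a ≤ b) :
    IntervalIntegrable (fun r => capa (closedBall (0:E3) r \ Ω) / r ^ 2) volume a b := by
  have hmono : MonotoneOn (fun r => capa (closedBall (0:E3) r \ Ω)) (Set.uIcc a b) := by
    rw [Set.uIcc_of_le hab]
    intro r hr s hs hrs
    exact capa_mono (ha.trans_le hs.1) Set.sdiff_subset
      (Set.sdiff_subset_sdiff_left (closedBall_subset_closedBall hrs))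
  simp only [div_eq_mul_inv]
  refine hmono.intervalIntegrable.mul_continuousOn ?_
  rw [Set.uIcc_of_le hab]
  refine ContinuousOn.inv₀ (by fun_prop) fun r hr => ?_
  have : 0 < r := ha.trans_le hr.1
  positivity

lemma intervalIntegral_le_of_bound {f : ℝ → ℝ} {a b c : ℝ} (hab : a ≤ b)
    (hf : IntervalIntegrable f volume a b) (h : ∀ r ∈ Set.Icc a b, f r ≤ c) :
    ∫ r in a..b, f r ≤ (b - a) * c := by
  have := intervalIntegral.integral_mono_on hab hf intervalIntegrable_const h
  simpa using this

/-- The Wiener integral is at most its dyadic sum over the scales `4 ρₖ ≤ R` plus a constant: on each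
shell `(ρₖ, 2ρₖ)` the capacity is monotone, and the last incomplete shell, where `r` is comparable to
`R`, contributes at most `3A`. -/
lemma exists_dyadic_sum {A : ℝ} (hA : 0 < A)
    (hcap : ∀ (K : Set E3) (r : ℝ), 0 < r → K ⊆ closedBall 0 r → capa K ≤ A * r)
    (Ω : Set E3) {ρ R : ℝ} (hρ : 0 < ρ) (hρR : ρ < R) :
    ∃ N : ℕ, (∀ k < N, 4 * (ρ * 2 ^ k) ≤ R) ∧
      ∫ r in ρ..R, capa (closedBall (0:E3) r \ Ω) / r ^ 2 ≤
        (∑ k ∈ Finset.range N, capa (closedBall 0 (2 * (ρ * 2 ^ k)) \ Ω) / (ρ * 2 ^ k)) + 3 * A := by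
  have hex : ∃ N : ℕ, R < 4 * (ρ * 2 ^ N) := by
    obtain ⟨n, hn⟩ := pow_unbounded_of_one_lt (R / ρ) (one_lt_two)
    refine ⟨n, ?_⟩
    rw [div_lt_iff₀ hρ] at hn
    have : 0 < ρ * 2 ^ n := by positivity
    linarith
  classical
  obtain ⟨N, hN1, hN2⟩ : ∃ N : ℕ, R < 4 * (ρ * 2 ^ N) ∧ ∀ k < N, 4 * (ρ * 2 ^ k) ≤ R :=
    ⟨Nat.find hex, Nat.find_spec hex, fun k hk => not_lt.1 (Nat.find_min hex hk)⟩
  have hN3 : ρ * 2 ^ N ≤ R := by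
    rcases N with _ | m
    · simpa using hρR.le
    · have := hN2 m (Nat.lt_succ_self m)
      have h0 : 0 < ρ * 2 ^ m := by positivity
      rw [pow_succ]; linarith
  refine ⟨N, hN2, ?_⟩
  set f : ℝ → ℝ := fun r => capa (closedBall (0:E3) r \ Ω) / r ^ 2 with hf
  have hp : ∀ k : ℕ, 0 < ρ * 2 ^ k := fun k => by positivity
  have hstep : ∀ k : ℕ, ρ * 2 ^ k ≤ ρ * 2 ^ (k + 1) := fun k => by
    have := hp k
    rw [pow_succ]; linarith
  have hsum := intervalIntegral.sum_integral_adjacent_intervals (f := f) (μ := volume)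
    (a := fun k : ℕ => ρ * 2 ^ k) (n := N)
    (fun k _ => intervalIntegrable_capa Ω (hp k) (hstep k))
  have hle : ρ ≤ ρ * 2 ^ N := le_mul_of_one_le_right hρ.le (one_le_pow₀ one_le_two)
  have hadd := intervalIntegral.integral_add_adjacent_intervals (μ := volume) (f := f)
    (intervalIntegrable_capa Ω hρ hle) (intervalIntegrable_capa Ω (hp N) hN3)
  simp only [pow_zero, mul_one] at hsum
  rw [← hadd, ← hsum]
  refine add_le_add (Finset.sum_le_sum fun k _ => ?_) ?_
  · refine (intervalIntegral_le_of_bound (c := capa (closedBall 0 (2 * (ρ * 2 ^ k)) \ Ω) /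
      (ρ * 2 ^ k) ^ 2) (hstep k) (intervalIntegrable_capa Ω (hp k) (hstep k)) ?_).trans
      (le_of_eq ?_)
    · intro r hr
      refine div_le_div₀ (capa_nonneg _) ?_ (pow_pos (hp k) 2)
        (pow_le_pow_left₀ (hp k).le hr.1 2)
      refine capa_mono (r := 2 * (ρ * 2 ^ k)) (by positivity) Set.sdiff_subset
        (Set.sdiff_subset_sdiff_left (closedBall_subset_closedBall ?_))
      have := hr.2
      rw [pow_succ] at this; linarith
    · have := (hp k).ne'
      rw [pow_succ]; field_simp; ring
  · refine (intervalIntegral_le_of_bound (c := A / (ρ * 2 ^ N)) hN3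
      (intervalIntegrable_capa Ω (hp N) hN3) ?_).trans ?_
    · intro r hr
      have hr0 : 0 < r := (hp N).trans_le hr.1
      have h1 := hcap (closedBall (0:E3) r \ Ω) r hr0 Set.sdiff_subset
      calc f r ≤ A * r / r ^ 2 := div_le_div_of_nonneg_right h1 (by positivity)
        _ = A / r := by field_simp
        _ ≤ _ := div_le_div_of_nonneg_left hA.le (hp N) hr.1
    · have h3 : R - ρ * 2 ^ N ≤ 3 * (ρ * 2 ^ N) := by linarith
      calc _ ≤ 3 * (ρ * 2 ^ N) * (A / (ρ * 2 ^ N)) :=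
            mul_le_mul_of_nonneg_right h3 (by have := hp N; positivity)
        _ = 3 * A := by have := (hp N).ne'; field_simp

/-- Under (QPD): if `Lu = 0` on `Ω ∩ B_{2R}` then for all `ρ ∈ (0, R)`,
`sup_{Ω∩B_ρ} |u|² + ∫_{Ω∩B_ρ} |Du(x)|²/|x| dx ≤ c₁ M_{2R}(u) exp(-c₂ ∫_ρ^R cap(B̄_r∖Ω) r⁻² dr)`,
with `c₁, c₂` depending only on `α, c₀`. -/
theorem lame_decay_estimate
    (α : ℝ) (hα : -1 < α) (c₀ : ℝ) (hc₀ : 0 < c₀) (hQPD : QPDhyp α c₀) :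
    ∃ c₁ > (0 : ℝ), ∃ c₂ > (0 : ℝ), ∀ Ω : Set E3, IsOpen Ω → ∀ R : ℝ, 0 < R →
      ∀ u : E3 → Fin 3 → ℝ, MemH10 Ω u →
      (∀ x ∈ Ω ∩ ball (0 : E3) (2 * R), ∀ i, lame α u x i = 0) →
      ∀ ρ : ℝ, 0 < ρ → ρ < R →
        (∫ x in Ω ∩ ball (0 : E3) ρ,
            (∑ i, ∑ k, (pd k (fun z => u z i) x) ^ 2) * ‖x‖⁻¹) ≤
          c₁ * MRho Ω (2 * R) u *
            Real.exp (-c₂ * ∫ r in ρ..R, capa (closedBall (0 : E3) r \ Ω) / r ^ 2) ∧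
        ∀ x₀ ∈ Ω ∩ ball (0 : E3) ρ,
          (∑ i, (u x₀ i) ^ 2) +
              (∫ x in Ω ∩ ball (0 : E3) ρ,
                (∑ i, ∑ k, (pd k (fun z => u z i) x) ^ 2) * ‖x‖⁻¹) ≤
            c₁ * MRho Ω (2 * R) u *
              Real.exp (-c₂ * ∫ r in ρ..R, capa (closedBall (0 : E3) r \ Ω) / r ^ 2) := by
  obtain ⟨A, hA, hcap⟩ := exists_capa_le
  obtain ⟨δ, C, hδ, hC, hmain⟩ := exists_two_bounds hc₀ hQPD
  -- the factor `8` converts `R⁻³` into `(2R)⁻³`, the exponential pays for the last dyadic shell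
  refine ⟨2 * (C * 8 * rexp (2 * δ * (3 * A))), by positivity, 2 * δ, by positivity,
    fun Ω hΩ R hR u hu hLu ρ hρ hρR => ?_⟩
  obtain ⟨N, hN, hW⟩ := exists_dyadic_sum hA hcap Ω hρ hρR
  obtain ⟨hsup, hint⟩ := hmain Ω hΩ ρ R hρ hρR N hN u hu hLu
  set W := ∫ r in ρ..R, capa (closedBall (0 : E3) r \ Ω) / r ^ 2 with hWdef
  set G := ∑ k ∈ Finset.range N, capa (closedBall 0 (2 * (ρ * 2 ^ k)) \ Ω) / (ρ * 2 ^ k) with hG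
  set M := ∫ x in Ω ∩ ball (0:E3) (2 * R), nsq u x with hM
  have hM0 : 0 ≤ M := integral_nonneg fun x => nsq_nonneg _ _
  have hMR : MRho Ω (2 * R) u = ((2 * R) ^ 3)⁻¹ * M := rfl
  set T := C * 8 * rexp (2 * δ * (3 * A)) * MRho Ω (2 * R) u * rexp (-(2 * δ) * W) with hT
  have hbound : C * (R ^ 3)⁻¹ * rexp (-2 * δ * G) * M ≤ T := by
    have he : rexp (-2 * δ * G) ≤ rexp (2 * δ * (3 * A)) * rexp (-(2 * δ) * W) := by
      rw [← Real.exp_add]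
      refine Real.exp_le_exp.2 ?_
      have := mul_le_mul_of_nonneg_left hW (show 0 ≤ 2 * δ by positivity)
      linarith
    calc C * (R ^ 3)⁻¹ * rexp (-2 * δ * G) * M
        ≤ C * (R ^ 3)⁻¹ * (rexp (2 * δ * (3 * A)) * rexp (-(2 * δ) * W)) * M := by gcongr
      _ = T := by
        rw [hT, hMR, mul_pow, mul_inv]; ring
  have hT0 : 0 ≤ T := le_trans (by positivity) hbound
  have h1 : ∫ x in Ω ∩ ball (0 : E3) ρ, (∑ i, ∑ k, (pd k (fun z => u z i) x) ^ 2) * ‖x‖⁻¹ ≤ T :=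
    le_trans hint hbound
  have h2T : 2 * (C * 8 * rexp (2 * δ * (3 * A))) * MRho Ω (2 * R) u * rexp (-(2 * δ) * W) =
      2 * T := by rw [hT]; ring
  rw [h2T]
  refine ⟨by linarith, fun x₀ hx₀ => ?_⟩
  have h2 : ∑ i, (u x₀ i) ^ 2 ≤ T := le_trans (hsup x₀ hx₀) hbound
  linarith
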